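/- Let H be a hyperbolic group and G_1, …, G_k non-elementary finitely generated subgroups of H such that E_H(G_i) is trivial for each i. Let N be a normal subgroup of H containing all the G_i. Then for every finite subset P of H there exists a surjective homomorphism π : H → H̄ such that: (1) ker π ⊆ N; (2) H̄ is a hyperbolic group; (3) π restricted to P is injective; (4) π(G_1) = π(G_2) = ⋯ = π(G_k) and this common image is a non-elementary subgroup of H̄; (5) for every finite subgroup F̄ of H̄ there exists a finite subgroup F of H such that π maps F isomorphically onto F̄. -/

import Mathlib

/-!
The quotient is `H ⧸ ⟪r_a⟫` for finitely many long relators `r_a = w_a * s_a`, one for each pair `(i, j)`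
and each generator `s` of `G_i`, where `w_a ∈ G_j` and `s_a = f * s` with `f ∈ G_j`. In the quotient `s` becomes
an element of the image of `G_j`, so all the images coincide, and the kernel is contained in `N`.

**The relators.** The group `G_j` contains a loxodromic element `v` (`HypM.exists_lox`) and, because
`E_H(G_j)` is trivial, a finite list of letters outside the elementary subgroup of `v` such that only the
identity stays in `elem v` when conjugated by all initial products of the list
(`HypM.exists_pattern`). The relator is a product of large powers of `v`, of comparable but pairwise
clearly different lengths, separated by these letters, with `s_a` as the last letter. The periodic line
`P a` in the Cayley graph obtained by repeating the relator is quasi-convex. Two translates of such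
lines that fellow-travel along a window containing the pattern agree up to a period (`rigid`):
their corners match because corners cannot be seen along powers (`HypM.corner`, `Track.matching`), the
lengths of the segments determine the label and the shift, and the remaining element stays in
`elem v` under conjugation along all the letters of the pattern, so it is trivial. Thus a translate of a line projects
to any other with diameter small compared to the length of the relators (`HypM.exists_periodic`).

**The quotient.** Conjugates of the relators act as rotations of large length about the translated lines,
which satisfy the Behrstock inequality (`HypM.behrstock`). For such a rotating family (`Spin`) the windmill
argument gives a Greendlinger lemma: every nontrivial element of the normal closure moves each point far, as
seen from some line (`Spin.exists_far`), and a rotation about that line leads to an element to which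
induction applies (`Spin.green_induction`). Hence the quotient map is injective on small
sets (`Spin.injOn_of_small`). Coning off the lines in the Cayley graph gives a metric that is hyperbolic with
a constant independent of the lines (`dX_hyp`). Rotating the tail of a geodesic that crosses a line does not
lengthen it (`Spin.dX_rot`), so quadrilaterals of the quotient lift to the coned-off graph
(`Spin.lift_quad`), and the quotient metric satisfies the four-point condition. The relators being trivial
in the quotient, this is the word metric of a finite generating set there (`hyperbolic_quotient`).

**Finite subgroups.** Angles at the lines, measured in the quotient, satisfy a Behrstock inequality
(`Spin.ang_behr`). If `E` is the preimage of a nontrivial finite subgroup, some line `c` sees no large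
angle at any line between two of its `E`-translates (`Spin.exists_centre`), for otherwise there would be
chains of large angles longer than the diameter of an orbit. Let `y` be a point of `c` in the direction of
its translates. The elements of `E` moving `y` by a small amount as seen from every line form a subgroup,
which meets each coset of the kernel in `E` exactly once: at most once by the Greendlinger lemma, and at
least once because an element of the coset moving `y` as little as possible has this property
(`Spin.finite_lift`).

**Non-elementary image.** Finite subgroups of `H` have order at most some `M` (`HypM.card_le`), hence so do
those of the quotient, which are isomorphic images of such subgroups. In a virtually cyclic group with this
property the `M!`-th powers of commutators of squares are trivial (`VirtuallyCyclic.comm_pow`), while `G_i`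
contains such a commutator of infinite order (`HypM.exists_commutator`), whose `M!`-th power is kept
nontrivial by the injectivity on finite sets.
-/

open Filter Set Function

namespace LacHyp

/-! ### Word length and norms of endomorphisms for marked groups -/

/-- Word length of `g` in the group `H` marked by the epimorphism `p` from a free group:
the least length of a word in the (images of the) generators representing `g`. -/
noncomputable def wlen {ι : Type} [DecidableEq ι] {H : Type*} [Group H]
    (p : FreeGroup ι →* H) (g : H) : ℕ :=
  sInf {n | ∃ w : FreeGroup ι, p w = g ∧ w.norm = n}

/-- The norm `|φ| = max_{s ∈ S} |φ(s)|_S` of an endomorphism of a marked group. -/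
noncomputable def enorm {ι : Type} [Fintype ι] [DecidableEq ι] {H : Type*} [Group H]
    (p : FreeGroup ι →* H) (φ : H →* H) : ℕ :=
  Finset.univ.sup fun i : ι => wlen p (φ (p (FreeGroup.of i)))

/-- The conjugacy-invariant norm `‖φ‖ = inf_g |ι_g ∘ φ|` of an endomorphism. -/
noncomputable def cnorm {ι : Type} [Fintype ι] [DecidableEq ι] {H : Type*} [Group H]
    (p : FreeGroup ι →* H) (φ : H →* H) : ℕ :=
  sInf (Set.range fun g : H => enorm p ((MulAut.conj g).toMonoidHom.comp φ))

/-- The marked group `(H, S)` is `δ`-hyperbolic: Gromov's four-point condition for the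
word metric `d(x, y) = |x⁻¹y|_S`. -/
def MarkedHyperbolic {ι : Type} [DecidableEq ι] {H : Type*} [Group H]
    (p : FreeGroup ι →* H) (δ : ℝ) : Prop :=
  ∀ x y z w : H,
    (wlen p (x⁻¹ * y) : ℝ) + (wlen p (z⁻¹ * w) : ℝ) ≤
      max ((wlen p (x⁻¹ * z) : ℝ) + (wlen p (y⁻¹ * w) : ℝ))
        ((wlen p (x⁻¹ * w) : ℝ) + (wlen p (y⁻¹ * z) : ℝ)) + 2 * δ

/-- `η` is injective on every ball of radius `R` of the marked group `(H, S)`. -/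
def InjOnBalls {ι : Type} [DecidableEq ι] {H G' : Type*} [Group H] [Group G']
    (p : FreeGroup ι →* H) (η : H →* G') (R : ℕ) : Prop :=
  ∀ c x y : H, wlen p (c⁻¹ * x) ≤ R → wlen p (c⁻¹ * y) ≤ R → η x = η y → x = y

/-! ### Lacunary hyperbolic groups as limits of hyperbolic groups -/

/-- A presentation of the marked group `(G, S)` (with `S` indexed by `ι`, via the marking `m`)
as a direct limit of `δ_k`-hyperbolic marked groups `(G_k, S_k)` in which the natural
epimorphisms `η_k : G_k → G` are injective on balls of radius `R_k` with `R_k/δ_k → ∞`.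
This is Ol'shanskii–Osin–Sapir's characterization of lacunary hyperbolicity. -/
structure LHSeq (ι : Type) [Fintype ι] [DecidableEq ι] (G : Type*) [Group G]
    (m : FreeGroup ι →* G) where
  m_surj : Function.Surjective m
  /-- the approximating groups `G_k` -/
  Gk : ℕ → Type
  [grp : ∀ k, Group (Gk k)]
  /-- the markings `π_k` of the `G_k` (so `S_k` is the image of the generators) -/
  pk : ∀ k, FreeGroup ι →* Gk k
  /-- the natural epimorphisms `η_k : G_k → G` -/
  ηk : ∀ k, Gk k →* G
  pk_surj : ∀ k, Function.Surjective (pk k)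
  /-- `G_{k+1}` is a marked quotient of `G_k` (this encodes the bonding epimorphisms
  `α_k : (G_k, S_k) ↠ (G_{k+1}, S_{k+1})`) -/
  ker_mono : ∀ k, (pk k).ker ≤ (pk (k + 1)).ker
  ηk_comp : ∀ k, (ηk k).comp (pk k) = m
  /-- `G` is the direct limit of the `G_k` -/
  limit : ∀ w : FreeGroup ι, m w = 1 → ∃ k, pk k w = 1
  /-- the hyperbolicity constants -/
  δ : ℕ → ℝ
  δ_pos : ∀ k, 0 < δ k
  hyp : ∀ k, MarkedHyperbolic (pk k) (δ k)
  /-- radii of injectivity of the `η_k` -/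
  R : ℕ → ℕ
  inj : ∀ k, InjOnBalls (pk k) (ηk k) (R k)
  /-- the lacunarity condition `inj(η_k)/δ_k → ∞` -/
  lac : Filter.Tendsto (fun k => (R k : ℝ) / δ k) Filter.atTop Filter.atTop

attribute [instance] LHSeq.grp

/-- A finitely generated group is lacunary hyperbolic if it admits an approximating
sequence as above. -/
def LacunaryHyperbolic (G : Type*) [Group G] : Prop :=
  ∃ (ι : Type) (_ : Fintype ι) (_ : DecidableEq ι) (m : FreeGroup ι →* G),
    Nonempty (LHSeq ι G m)

section Lifts

variable {ι : Type} [Fintype ι] [DecidableEq ι] {G : Type*} [Group G] {m : FreeGroup ι →* G}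

/-- The endomorphism `ψ` of the free group `G_0` descends to an endomorphism of `G_k`. -/
def LiftsAt (D : LHSeq ι G m) (ψ : FreeGroup ι →* FreeGroup ι) (k : ℕ) : Prop :=
  ∃ φk : D.Gk k →* D.Gk k, φk.comp (D.pk k) = (D.pk k).comp ψ

/-- `φ` coherently lifts from step `n`: some lift `ψ` of `φ` to the free group `G_0`
induces endomorphisms of `G_k` for all `k ≥ n`. -/
def CoherentlyLifts (D : LHSeq ι G m) (φ : G →* G) (n : ℕ) : Prop :=
  ∃ ψ : FreeGroup ι →* FreeGroup ι, m.comp ψ = φ.comp m ∧ ∀ k, n ≤ k → LiftsAt D ψ k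

end Lifts

/-! ### ℝ-trees and property (FR) -/

/-- Gromov's four-point condition for a metric space. -/
def GromovHyperbolicSpace (X : Type*) [MetricSpace X] (δ : ℝ) : Prop :=
  ∀ x y z w : X, dist x y + dist z w ≤ max (dist x z + dist y w) (dist x w + dist y z) + 2 * δ

/-- A geodesic metric space. -/
def GeodesicSpace (X : Type*) [MetricSpace X] : Prop :=
  ∀ x y : X, ∃ f : ℝ → X, f 0 = x ∧ f (dist x y) = y ∧
    ∀ s ∈ Set.Icc (0 : ℝ) (dist x y), ∀ t ∈ Set.Icc (0 : ℝ) (dist x y),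
      dist (f s) (f t) = |s - t|

/-- An ℝ-tree: a geodesic, 0-hyperbolic metric space. -/
def IsRTree (X : Type*) [MetricSpace X] : Prop :=
  GeodesicSpace X ∧ GromovHyperbolicSpace X 0

/-- Property (FR): every isometric action on an ℝ-tree has a global fixed point. -/
def PropertyFR (G : Type*) [Group G] : Prop :=
  ∀ (X : Type) (_ : MetricSpace X), IsRTree X →
    ∀ ρ : G →* (X ≃ᵢ X), ∃ x : X, ∀ g : G, ρ g x = x

/-- Minimal displacement `λ(H, X) = inf_x max_{s ∈ S} d(s·x, x)` of an isometric action of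
the marked group `(H, S)` on `X`. -/
noncomputable def minDisp {ι : Type} [Fintype ι] {H : Type*} [Group H] {X : Type*}
    [MetricSpace X] (p : FreeGroup ι →* H) (ρ : H →* (X ≃ᵢ X)) : ℝ :=
  ⨅ x : X, ⨆ i : ι, dist (ρ (p (FreeGroup.of i)) x) x

/-! ### Outer automorphisms -/

/-- The subgroup of inner automorphisms. -/
def innerAut (G : Type*) [Group G] : Subgroup (MulAut G) :=
  (MulAut.conj : G →* MulAut G).range

instance innerAut_normal (G : Type*) [Group G] : (innerAut G).Normal := by
  constructor
  rintro x ⟨g, rfl⟩ σ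
  refine ⟨σ g, ?_⟩
  ext h
  simp [MulAut.conj, mul_assoc]

/-- The outer automorphism group `Out(G) = Aut(G)/Inn(G)`. -/
abbrev OutAut (G : Type*) [Group G] := MulAut G ⧸ innerAut G

/-- The norm `‖Φ‖` of an outer automorphism class. -/
noncomputable def outNorm {ι : Type} [Fintype ι] [DecidableEq ι] {G : Type*} [Group G]
    (m : FreeGroup ι →* G) (Φ : OutAut G) : ℕ :=
  sInf {n | ∃ φ : MulAut G, (QuotientGroup.mk φ : OutAut G) = Φ ∧ cnorm m φ.toMonoidHom = n}

/-- A group is locally finite if all its finitely generated subgroups are finite. -/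
def LocallyFiniteGroup (G : Type*) [Group G] : Prop :=
  ∀ H : Subgroup G, H.FG → Finite H

/-! ### Hyperbolic groups, elementary subgroups, `E_H(G)` -/

/-- A hyperbolic group: some marking by a finite generating set is `δ`-hyperbolic. -/
def HyperbolicGroup (H : Type*) [Group H] : Prop :=
  ∃ (ι : Type) (_ : Fintype ι) (_ : DecidableEq ι) (p : FreeGroup ι →* H) (δ : ℝ),
    Function.Surjective p ∧ 0 ≤ δ ∧ MarkedHyperbolic p δ

/-- A group is virtually cyclic (elementary) if it has a cyclic subgroup of finite index. -/
def VirtuallyCyclic (K : Type*) [Group K] : Prop :=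
  ∃ C : Subgroup K, IsCyclic C ∧ C.FiniteIndex

/-- `E_H(K)`: the set of elements of `H` whose orbit under conjugation by the subgroup `K`
is finite. -/
def EHset {H : Type*} [Group H] (K : Subgroup H) : Set H :=
  {h : H | (Set.range fun g : K => (g : H) * h * (g : H)⁻¹).Finite}

/-- Equationally Noetherian group: every system of equations (in `n` variables) has the same
solution set as a finite subsystem. -/
def EquationallyNoetherian (G : Type*) [Group G] : Prop :=
  ∀ (n : ℕ) (S : Set (FreeGroup (Fin n))), ∃ S₀ : Finset (FreeGroup (Fin n)),
    ↑S₀ ⊆ S ∧ ∀ x : Fin n → G,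
      (∀ w ∈ S₀, FreeGroup.lift x w = 1) → ∀ w ∈ S, FreeGroup.lift x w = 1

section Preparation

set_option linter.unusedSectionVars false

/-! ### Integer-valued hyperbolic metrics on groups -/

/-- `d` is a left-invariant, proper, integer-valued geodesic metric on the group `H` that satisfies
Gromov's four-point condition with additive constant `δ`. -/
structure HypM {H : Type*} [Group H] (d : H → H → ℕ) (δ : ℕ) : Prop where
  self : ∀ x, d x x = 0
  eq_of : ∀ {x y}, d x y = 0 → x = y
  symm : ∀ x y, d x y = d y x
  tri : ∀ x y z, d x z ≤ d x y + d y z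
  inv : ∀ g x y, d (g * x) (g * y) = d x y
  geod : ∀ x y k, k ≤ d x y → ∃ z, d x z = k ∧ d z y + k = d x y
  hyp : ∀ x y z w, d x y + d z w ≤ d x z + d y w + δ ∨ d x y + d z w ≤ d x w + d y z + δ
  fin : ∀ n, {g : H | d 1 g ≤ n}.Finite

section WordLength

variable {ι : Type} [DecidableEq ι] {H : Type*} [Group H] (p : FreeGroup ι →* H)

theorem wlen_le_norm (w : FreeGroup ι) : wlen p (p w) ≤ w.norm :=
  Nat.sInf_le ⟨w, rfl, rfl⟩

theorem exists_norm_eq_wlen (hp : Surjective p) (g : H) : ∃ w, p w = g ∧ w.norm = wlen p g := by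
  have : {n | ∃ w : FreeGroup ι, p w = g ∧ w.norm = n}.Nonempty := by
    obtain ⟨w, hw⟩ := hp g
    exact ⟨_, w, hw, rfl⟩
  exact Nat.sInf_mem this

theorem freeGroup_norm_split (w : FreeGroup ι) (k : ℕ) (hk : k ≤ w.norm) :
    ∃ u v : FreeGroup ι, w = u * v ∧ u.norm ≤ k ∧ v.norm + k ≤ w.norm := by
  refine ⟨FreeGroup.mk (w.toWord.take k), FreeGroup.mk (w.toWord.drop k), ?_, ?_, ?_⟩
  · rw [FreeGroup.mul_mk, List.take_append_drop, FreeGroup.mk_toWord]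
  · exact (FreeGroup.norm_mk_le).trans (by simp)
  · have := FreeGroup.norm_mk_le (L₁ := w.toWord.drop k)
    have h2 : (w.toWord.drop k).length = w.norm - k := by simp [FreeGroup.norm]
    omega

theorem finite_norm_le [Fintype ι] (n : ℕ) : {w : FreeGroup ι | w.norm ≤ n}.Finite := by
  have : {l : List (ι × Bool) | l.length ≤ n}.Finite := List.finite_length_le _ n
  refine Set.Finite.of_finite_image (f := FreeGroup.toWord) (this.subset ?_)
    (FreeGroup.toWord_injective.injOn)
  rintro _ ⟨w, hw, rfl⟩
  exact hw

theorem hypM_of_marked [Fintype ι] (hp : Surjective p) {δ : ℝ} (h : MarkedHyperbolic p δ) :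
    HypM (fun x y => wlen p (x⁻¹ * y)) ⌈2 * δ⌉₊ := by
  have hone : wlen p (1 : H) = 0 := by
    have := wlen_le_norm p 1
    simpa using this
  have htri : ∀ a b, wlen p (a * b) ≤ wlen p a + wlen p b := by
    intro a b
    obtain ⟨u, hu, hu'⟩ := exists_norm_eq_wlen p hp a
    obtain ⟨v, hv, hv'⟩ := exists_norm_eq_wlen p hp b
    rw [← hu', ← hv', ← hu, ← hv, ← map_mul]
    exact (wlen_le_norm p _).trans (FreeGroup.norm_mul_le _ _)
  have hinv : ∀ a, wlen p a⁻¹ ≤ wlen p a := by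
    intro a
    obtain ⟨u, hu, hu'⟩ := exists_norm_eq_wlen p hp a
    rw [← hu', ← hu, ← map_inv]
    exact (wlen_le_norm p _).trans (FreeGroup.norm_inv_eq).le
  constructor
  · intro x; simpa using hone
  · intro x y hxy
    obtain ⟨u, hu, hu'⟩ := exists_norm_eq_wlen p hp (x⁻¹ * y)
    have h0 : wlen p (x⁻¹ * y) = 0 := hxy
    rw [h0, FreeGroup.norm_eq_zero] at hu'
    rw [hu', map_one] at hu
    exact (inv_mul_eq_one.mp hu.symm)
  · intro x y
    apply le_antisymm
    · simpa using hinv (y⁻¹ * x)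
    · simpa using hinv (x⁻¹ * y)
  · intro x y z
    have := htri (x⁻¹ * y) (y⁻¹ * z)
    simpa [mul_assoc] using this
  · intro g x y
    simp [mul_assoc]
  · intro x y k hk
    obtain ⟨w, hw, hw'⟩ := exists_norm_eq_wlen p hp (x⁻¹ * y)
    obtain ⟨u, v, rfl, hu, hv⟩ := freeGroup_norm_split w k (by rw [hw']; exact hk)
    refine ⟨x * p u, ?_⟩
    have e1 : x⁻¹ * (x * p u) = p u := by group
    have e2 : (x * p u)⁻¹ * y = p v := by
      rw [map_mul] at hw
      rw [mul_inv_rev, mul_assoc, ← hw]; group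
    have e3 := htri (p u) (p v)
    rw [← map_mul, hw] at e3
    have e4 := wlen_le_norm p u
    have e5 := wlen_le_norm p v
    simp only [e1, e2]

    omega
  · intro x y z w
    have h1 := h x y z w
    have h2 : (2 * δ) ≤ (⌈2 * δ⌉₊ : ℝ) := Nat.le_ceil _
    rcases max_cases ((wlen p (x⁻¹ * z) : ℝ) + (wlen p (y⁻¹ * w) : ℝ))
      ((wlen p (x⁻¹ * w) : ℝ) + (wlen p (y⁻¹ * z) : ℝ)) with ⟨hm, _⟩ | ⟨hm, _⟩
    · left
      rw [hm] at h1
      have h3 := h1.trans (add_le_add le_rfl h2)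
      exact_mod_cast h3
    · right
      rw [hm] at h1
      have h3 := h1.trans (add_le_add le_rfl h2)
      exact_mod_cast h3
  · intro n
    refine ((finite_norm_le (ι := ι) n).image p).subset ?_
    intro g hg
    obtain ⟨u, hu, hu'⟩ := exists_norm_eq_wlen p hp g
    refine ⟨u, ?_, hu⟩
    simp only [mem_ofPred_eq, inv_one, one_mul] at hg ⊢
    omega

end WordLength

theorem exists_hypM {H : Type*} [Group H] (hH : HyperbolicGroup H) :
    ∃ (d : H → H → ℕ) (δ : ℕ), HypM d δ := by
  obtain ⟨ι, _, _, p, δ, hp, _, h⟩ := hH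
  exact ⟨_, _, hypM_of_marked p hp h⟩

namespace HypM

variable {H : Type*} [Group H] {d : H → H → ℕ} {δ : ℕ}

theorem almost_between (h : HypM d δ) {x y z : H} {e : ℕ} (w : H)
    (hz : d x z + d z y ≤ d x y + e) :
    d x z + d z w ≤ d x w + (e + δ) ∨ d w z + d z y ≤ d w y + (e + δ) := by
  have := h.hyp x y z w
  have := h.symm y z
  have := h.symm y w
  have := h.symm z w
  omega

theorem near_between (h : HypM d δ) {x y z : H} {e : ℕ} (hz : d x z + d z y ≤ d x y + e) :
    ∃ z', d x z' + d z' y = d x y ∧ d z z' ≤ e + δ := by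
  by_cases hle : d x z ≤ d x y
  · obtain ⟨z', h1, h2⟩ := h.geod x y _ hle
    refine ⟨z', by omega, ?_⟩
    have := h.hyp x y z z'
    have := h.symm y z
    have := h.symm y z'
    omega
  · refine ⟨y, by simp [h.self], ?_⟩
    omega

/-- `Q`-quasiconvexity. -/
def QC (d : H → H → ℕ) (Q : ℕ) (Y : Set H) : Prop :=
  ∀ x ∈ Y, ∀ y ∈ Y, ∀ z, d x z + d z y = d x y → ∃ y' ∈ Y, d z y' ≤ Q

/-- `p` is a point of `Y` nearest to `x`. -/
def Near (d : H → H → ℕ) (Y : Set H) (x p : H) : Prop := p ∈ Y ∧ ∀ z ∈ Y, d x p ≤ d x z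

theorem exists_near (d : H → H → ℕ) {Y : Set H} (hY : Y.Nonempty) (x : H) :
    ∃ p, Near d Y x p := by
  obtain ⟨p, hp, hm⟩ := WellFounded.has_min (measure (fun z => d x z)).wf Y hY
  exact ⟨p, hp, fun z hz => not_lt.mp (hm z hz)⟩

theorem near_proj (h : HypM d δ) {Y : Set H} {Q : ℕ} (hQ : QC d Q Y) {x p z : H}
    (hp : Near d Y x p) (hz : z ∈ Y) : d x p + d p z ≤ d x z + (2 * (Q + δ) + 1) := by
  obtain ⟨m, h1, h2⟩ := h.geod p z ((d x p + d p z - d x z) / 2) (by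
    have := h.tri x z p; have := h.tri p x z; have := h.symm z p; have := h.symm p x; omega)
  obtain ⟨y', hy', h3⟩ := hQ p hp.1 z hz m (by omega)
  have := hp.2 y' hy'
  have := h.tri x m y'
  have := h.hyp p z x m
  have := h.tri x p z
  have := h.symm p x
  have := h.symm z m
  have := h.symm z x
  omega

theorem proj_between (h : HypM d δ) {Y : Set H} {Q : ℕ} (hQ : QC d Q Y) {x y p q : H}
    (hp : Near d Y x p) (hq : Near d Y y q) (hpq : 2 * (Q + δ) + 1 + δ < d p q) :
    d x p + d p q + d q y ≤ d x y + (2 * (2 * (Q + δ) + 1) + δ) := by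
  have := h.near_proj hQ hp hq.1
  have := h.near_proj hQ hq hp.1
  have := h.hyp x q y p
  have := h.symm p q
  have := h.symm y q
  have := h.symm y p
  omega

/-- Distance to a set. -/
noncomputable def dset (d : H → H → ℕ) (Y : Set H) (x : H) : ℕ := sInf (d x '' Y)

theorem dset_eq {Y : Set H} {x p : H} (hp : Near d Y x p) : dset d Y x = d x p := by
  apply le_antisymm
  · exact Nat.sInf_le ⟨p, hp.1, rfl⟩
  · have : (d x '' Y).Nonempty := ⟨_, p, hp.1, rfl⟩
    obtain ⟨z, hz, hz'⟩ := Nat.sInf_mem this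
    rw [dset, ← hz']
    exact hp.2 z hz

/-- The projection pseudometric of `Y`: the sup-distance on `Y` between the distance functions of
`x` and of `y`, each normalised by the distance to `Y`. It is exactly invariant and exactly
satisfies the triangle inequality, and it is within a constant of the distance between
nearest-point projections. -/
noncomputable def dproj (d : H → H → ℕ) (Y : Set H) (x y : H) : ℕ :=
  sSup ((fun z => (((d x z : ℤ) - dset d Y x) - ((d y z : ℤ) - dset d Y y)).natAbs) '' Y)

theorem dproj_le {Y : Set H} (hY : Y.Nonempty) {x y : H} {n : ℕ}
    (hn : ∀ z ∈ Y, (((d x z : ℤ) - dset d Y x) - ((d y z : ℤ) - dset d Y y)).natAbs ≤ n) :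
    dproj d Y x y ≤ n := by
  apply csSup_le (hY.image _)
  rintro _ ⟨z, hz, rfl⟩
  exact hn z hz

theorem dset_lip (h : HypM d δ) {Y : Set H} (hY : Y.Nonempty) (x y : H) :
    dset d Y x ≤ dset d Y y + d x y := by
  obtain ⟨p, hp⟩ := exists_near d hY x
  obtain ⟨q, hq⟩ := exists_near d hY y
  rw [dset_eq hp, dset_eq hq]
  have := hp.2 q hq.1
  have := h.tri x y q
  omega

theorem dproj_aux (h : HypM d δ) {Y : Set H} (hY : Y.Nonempty) (x y z : H) :
    (((d x z : ℤ) - dset d Y x) - ((d y z : ℤ) - dset d Y y)).natAbs ≤ 2 * d x y := by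
  have := h.dset_lip hY x y
  have := h.dset_lip hY y x
  have := h.tri x y z
  have := h.tri y x z
  have := h.symm x y
  omega

theorem le_dproj (h : HypM d δ) {Y : Set H} (x y z : H) (hz : z ∈ Y) :
    (((d x z : ℤ) - dset d Y x) - ((d y z : ℤ) - dset d Y y)).natAbs ≤ dproj d Y x y := by
  apply le_csSup
  · refine ⟨2 * d x y, ?_⟩
    rintro _ ⟨z', hz', rfl⟩
    exact h.dproj_aux ⟨z, hz⟩ x y z'
  · exact ⟨z, hz, rfl⟩

theorem dproj_lip (h : HypM d δ) {Y : Set H} (hY : Y.Nonempty) (x y : H) :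
    dproj d Y x y ≤ 2 * d x y :=
  dproj_le hY fun z _ => h.dproj_aux hY x y z

theorem dproj_self {Y : Set H} (hY : Y.Nonempty) (x : H) : dproj d Y x x = 0 :=
  Nat.le_zero.mp (dproj_le hY fun z _ => by simp)

theorem dproj_symm (Y : Set H) (x y : H) : dproj d Y x y = dproj d Y y x := by
  unfold dproj
  congr 1
  apply Set.image_congr
  intro z _
  omega

theorem dproj_tri (h : HypM d δ) {Y : Set H} (hY : Y.Nonempty) (x y z : H) :
    dproj d Y x z ≤ dproj d Y x y + dproj d Y y z := by
  refine dproj_le hY fun w hw => ?_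
  have := h.le_dproj x y w hw
  have := h.le_dproj y z w hw
  omega

theorem dset_inv (h : HypM d δ) (Y : Set H) (g x : H) :
    dset d ((fun z => g * z) '' Y) (g * x) = dset d Y x := by
  unfold dset
  rw [Set.image_image]
  simp only [h.inv]

theorem dproj_inv (h : HypM d δ) (Y : Set H) (g x y : H) :
    dproj d ((fun z => g * z) '' Y) (g * x) (g * y) = dproj d Y x y := by
  unfold dproj
  rw [Set.image_image]
  simp only [h.inv, h.dset_inv]

theorem dproj_le_near (h : HypM d δ) {Y : Set H} {Q : ℕ} (hQ : QC d Q Y) {x y p q : H}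
    (hp : Near d Y x p) (hq : Near d Y y q) :
    dproj d Y x y ≤ d p q + (2 * (Q + δ) + 1) := by
  refine dproj_le ⟨p, hp.1⟩ fun z hz => ?_
  rw [dset_eq hp, dset_eq hq]
  have := h.near_proj hQ hp hz
  have := h.near_proj hQ hq hz
  have := h.tri x p z
  have := h.tri y q z
  have := h.tri p q z
  have := h.tri q p z
  have := h.symm p q
  omega

theorem near_le_dproj (h : HypM d δ) {Y : Set H} {Q : ℕ} (hQ : QC d Q Y) {x y p q : H}
    (hp : Near d Y x p) (hq : Near d Y y q) :
    d p q ≤ dproj d Y x y + (2 * (Q + δ) + 1) := by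
  have := h.le_dproj x y p hp.1
  rw [dset_eq hp, dset_eq hq] at this
  have := h.near_proj hQ hq hp.1
  have := h.symm p q
  omega

theorem near_self (h : HypM d δ) {Y : Set H} {x : H} (hx : x ∈ Y) : Near d Y x x :=
  ⟨hx, fun z _ => by rw [h.self]; omega⟩

theorem dproj_mem (h : HypM d δ) {Y : Set H} {x y : H} (hx : x ∈ Y) (hy : y ∈ Y) :
    dproj d Y x y = d x y := by
  apply le_antisymm
  · refine dproj_le ⟨x, hx⟩ fun z hz => ?_
    rw [dset_eq (h.near_self hx), dset_eq (h.near_self hy), h.self, h.self]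
    have := h.tri x y z
    have := h.tri y x z
    have := h.symm x y
    omega
  · have := h.le_dproj x y x hx
    rw [dset_eq (h.near_self hx), dset_eq (h.near_self hy), h.self, h.self] at this
    have := h.symm x y
    omega

/-- One half of Behrstock's inequality: if the projection of `x` to `Yc` is no farther from `x` than
the projection to `Yb`, then `x` and that projection have close projections to `Yb`. -/
theorem dproj_of_closer (h : HypM d δ) {Yb : Set H} {Q : ℕ} (hQ : QC d Q Yb) {x p q : H}
    (hq : Near d Yb x q) (hle : d x p ≤ d x q) :
    dproj d Yb x p ≤ 3 * (2 * (Q + δ) + 1) + δ := by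
  obtain ⟨q', hq'⟩ := exists_near d ⟨q, hq.1⟩ p
  have h1 := h.dproj_le_near hQ hq hq'
  by_contra hcon
  have h2 := h.proj_between hQ hq hq' (by omega)
  omega

theorem behrstock (h : HypM d δ) {Yb Yc : Set H} {Q θ₀ : ℕ} (hQb : QC d Q Yb) (hQc : QC d Q Yc)
    (hb : ∀ x ∈ Yc, ∀ y ∈ Yc, dproj d Yb x y ≤ θ₀)
    (hc : ∀ x ∈ Yb, ∀ y ∈ Yb, dproj d Yc x y ≤ θ₀) {x yb yc : H} (hyb : yb ∈ Yb) (hyc : yc ∈ Yc) :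
    dproj d Yc x yb ≤ θ₀ + (3 * (2 * (Q + δ) + 1) + δ) ∨
      dproj d Yb x yc ≤ θ₀ + (3 * (2 * (Q + δ) + 1) + δ) := by
  obtain ⟨p, hp⟩ := exists_near d ⟨yc, hyc⟩ x
  obtain ⟨q, hq⟩ := exists_near d ⟨yb, hyb⟩ x
  rcases le_total (d x p) (d x q) with hle | hle
  · right
    have := h.dproj_of_closer hQb hq hle
    have := hb p hp.1 yc hyc
    have := h.dproj_tri ⟨yb, hyb⟩ x p yc
    omega
  · left
    have := h.dproj_of_closer hQc hp hle
    have := hc q hq.1 yb hyb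
    have := h.dproj_tri ⟨yc, hyc⟩ x q yb
    omega

end HypM

/-! ### Rotating families and the windmill -/

/-- A family of subsets `Y c` of `H`, permuted by `H`, each with a projection pseudometric `D c` and
an element `r c` fixing `c` and rotating by at least `ℓ c` as seen from `c`. Distinct members look
`θ`-small to each other and satisfy Behrstock's inequality. -/
structure Spin {H C : Type*} [Group H] [MulAction H C] (d : H → H → ℕ) (D : C → H → H → ℕ)
    (Y : C → Set H) (r : C → H) (ℓ : C → ℕ) (θ : ℕ) : Prop where
  self : ∀ c x, D c x x = 0
  symm : ∀ c x y, D c x y = D c y x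
  tri : ∀ c x y z, D c x z ≤ D c x y + D c y z
  equiv : ∀ (g : H) c x y, D (g • c) (g * x) (g * y) = D c x y
  lip : ∀ c x y, D c x y ≤ 2 * d x y
  nonempty : ∀ c, (Y c).Nonempty
  mem_smul : ∀ (g : H) c x, x ∈ Y c → g * x ∈ Y (g • c)
  conj : ∀ (g : H) c, r (g • c) = g * r c * g⁻¹
  fix : ∀ c, r c • c = c
  small : ∀ b c, b ≠ c → ∀ x ∈ Y b, ∀ y ∈ Y b, D c x y ≤ θ
  behr : ∀ b c, b ≠ c → ∀ yb ∈ Y b, ∀ yc ∈ Y c, ∀ x, D c x yb ≤ θ ∨ D b x yc ≤ θ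
  spin : ∀ c x (k : ℤ), k ≠ 0 → ℓ c ≤ D c x (r c ^ k * x)
  len_smul : ∀ (g : H) c, ℓ (g • c) = ℓ c
  four_le : 4 ≤ θ
  big : ∀ c, 100 * θ ≤ ℓ c

namespace Spin

variable {H C : Type*} [Group H] [MulAction H C] {d : H → H → ℕ} {D : C → H → H → ℕ}
  {Y : C → Set H} {r : C → H} {ℓ : C → ℕ} {θ : ℕ}

theorem fix_zpow (S : Spin d D Y r ℓ θ) (c : C) (k : ℤ) : r c ^ k • c = c := by
  have h1 : r c ∈ MulAction.stabilizer H c := S.fix c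
  exact (MulAction.stabilizer H c).zpow_mem h1 k

theorem conj_zpow (S : Spin d D Y r ℓ θ) (g : H) (c : C) (k : ℤ) :
    r (g • c) ^ k = g * r c ^ k * g⁻¹ := by
  rw [S.conj, _root_.conj_zpow]

theorem equiv_rot (S : Spin d D Y r ℓ θ) (c : C) (k : ℤ) (x y : H) :
    D c (r c ^ k * x) (r c ^ k * y) = D c x y := by
  have := S.equiv (r c ^ k) c x y
  rwa [S.fix_zpow] at this

/-- Elements obtained from `1` by successive rotations, each of which turns `1` by almost the full
rotation length as seen from its centre. -/
inductive Green (D : C → H → H → ℕ) (r : C → H) (ℓ : C → ℕ) (θ : ℕ) : H → Prop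
  | one : Green D r ℓ θ 1
  | rot (c : C) (k : ℤ) (n : H) : Green D r ℓ θ n →
      ℓ c ≤ D c 1 (r c ^ k * n) + (8 * θ + 4) → Green D r ℓ θ (r c ^ k * n)

/-- A stage of the windmill: a `G`-invariant set `W` that looks small from each centre whose rotation
has not yet been added to `G`. -/
structure Stage (D : C → H → H → ℕ) (r : C → H) (ℓ : C → ℕ) (θ : ℕ)
    (W : Set H) (G : Subgroup H) : Prop where
  one_mem : 1 ∈ W
  act : ∀ g ∈ G, ∀ w ∈ W, g * w ∈ W
  alt : ∀ c, r c ∈ G ∨ ∀ w ∈ W, ∀ w' ∈ W, D c w w' ≤ 6 * θ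
  green : ∀ n ∈ G, Green D r ℓ θ n

/-- The `1`-neighbourhood of `W`. -/
def nbhd (d : H → H → ℕ) (W : Set H) : Set H := {x | ∃ w ∈ W, d w x ≤ 1}

/-- The centres to be added at the next stage of the windmill. -/
def newC (d : H → H → ℕ) (D : C → H → H → ℕ) (r : C → H) (θ : ℕ) (W : Set H) (G : Subgroup H) :
    Set C :=
  {c | r c ∉ G ∧ ∃ w ∈ nbhd d W, ∃ w' ∈ nbhd d W, 2 * θ < D c w w'}

/-- Normal forms: alternating products of rotations about centres in `A`, ending with an element of
`G`. The option records the centre of the leading rotation. -/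
inductive NF (r : C → H) (A : Set C) (G : Subgroup H) : Option C → H → Prop
  | base (g : H) : g ∈ G → NF r A G none g
  | step (b : C) (k : ℤ) (o : Option C) (n : H) : b ∈ A → k ≠ 0 → o ≠ some b → NF r A G o n →
      NF r A G (some b) (r b ^ k * n)

theorem NF.mem_of_none {A : Set C} {G : Subgroup H} {n : H} (h : NF r A G none n) : n ∈ G := by
  cases h; assumption

theorem NF.smul (S : Spin d D Y r ℓ θ) {A : Set C} {G : Subgroup H}
    (hA : ∀ g ∈ G, ∀ b ∈ A, g • b ∈ A) {o : Option C} {n : H} (h : NF r A G o n) {g : H}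
    (hg : g ∈ G) : NF r A G (o.map (g • ·)) (g * n) := by
  induction h with
  | base g' hg' => exact NF.base _ (G.mul_mem hg hg')
  | step b k o n hb hk ho hn ih =>
    have e : g * (r b ^ k * n) = r (g • b) ^ k * (g * n) := by
      rw [S.conj_zpow]; group
    rw [e]
    refine NF.step _ k _ _ (hA g hg b hb) hk ?_ ih
    intro hc
    apply ho
    cases o with
    | none => simp at hc
    | some b' => simpa using hc

theorem NF.rot {A : Set C} {G : Subgroup H} {o : Option C} {n : H} (h : NF r A G o n)
    {b : C} (hb : b ∈ A) (k : ℤ) : ∃ o', NF r A G o' (r b ^ k * n) := by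
  by_cases hk : k = 0
  · subst hk; exact ⟨o, by simpa using h⟩
  by_cases ho : o = some b
  · subst ho
    cases h with
    | step _ k' o' n' _ hk' ho' hn' =>
      rw [← mul_assoc, ← zpow_add]
      by_cases h0 : k + k' = 0
      · rw [h0]; exact ⟨o', by simpa using hn'⟩
      · exact ⟨_, NF.step b _ o' n' hb h0 ho' hn'⟩
  · exact ⟨_, NF.step b k o n hb hk ho h⟩

/-- The group generated by `G` and the rotations about the centres in `A`. -/
def extG (r : C → H) (A : Set C) (G : Subgroup H) : Subgroup H :=
  Subgroup.closure ((G : Set H) ∪ r '' A)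

theorem le_extG (A : Set C) (G : Subgroup H) : G ≤ extG r A G :=
  fun _ hg => Subgroup.subset_closure (Or.inl hg)

theorem rot_mem_extG {A : Set C} (G : Subgroup H) {b : C} (hb : b ∈ A) : r b ∈ extG r A G :=
  Subgroup.subset_closure (Or.inr ⟨b, hb, rfl⟩)

theorem exists_NF (S : Spin d D Y r ℓ θ) {A : Set C} {G : Subgroup H}
    (hA : ∀ g ∈ G, ∀ b ∈ A, g • b ∈ A) {n : H} (hn : n ∈ extG r A G) : ∃ o, NF r A G o n := by
  induction hn using Subgroup.closure_induction_left with
  | one => exact ⟨none, NF.base 1 G.one_mem⟩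
  | mul_left x hx y _ ih =>
    obtain ⟨o, ho⟩ := ih
    rcases hx with hx | ⟨b, hb, rfl⟩
    · exact ⟨_, ho.smul S hA hx⟩
    · simpa using ho.rot hb 1
  | inv_mul_cancel x hx y _ ih =>
    obtain ⟨o, ho⟩ := ih
    rcases hx with hx | ⟨b, hb, rfl⟩
    · exact ⟨_, ho.smul S hA (G.inv_mem hx)⟩
    · simpa using ho.rot hb (-1)

section Step

variable {W : Set H} {G : Subgroup H}

theorem nbhd_diam (S : Spin d D Y r ℓ θ) (T : Stage D r ℓ θ W G) {c : C}
    (hc : r c ∉ G) {w w' : H} (hw : w ∈ nbhd d W) (hw' : w' ∈ nbhd d W) :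
    D c w w' ≤ 6 * θ + 4 := by
  obtain ⟨u, hu, h1⟩ := hw
  obtain ⟨u', hu', h1'⟩ := hw'
  have h2 := (T.alt c).resolve_left hc u hu u' hu'
  have := S.tri c w u w'
  have := S.tri c u u' w'
  have := S.lip c u w
  have := S.lip c u' w'
  have := S.symm c u w
  omega

theorem nbhd_act {δ : ℕ} (hd : HypM d δ) (T : Stage D r ℓ θ W G) {g w : H} (hg : g ∈ G)
    (hw : w ∈ nbhd d W) : g * w ∈ nbhd d W := by
  obtain ⟨u, hu, h⟩ := hw
  exact ⟨g * u, T.act g hg u hu, by rwa [hd.inv]⟩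

theorem subset_nbhd {δ : ℕ} (hd : HypM d δ) : W ⊆ nbhd d W :=
  fun w hw => ⟨w, hw, by rw [hd.self]; omega⟩

theorem conj_mem_iff (S : Spin d D Y r ℓ θ) {g : H} (hg : g ∈ G) (c : C) :
    r (g • c) ∈ G ↔ r c ∈ G := by
  rw [S.conj]
  constructor
  · intro h
    have := G.mul_mem (G.mul_mem (G.inv_mem hg) h) hg
    simpa [mul_assoc] using this
  · intro h
    exact G.mul_mem (G.mul_mem hg h) (G.inv_mem hg)

theorem newC_smul {δ : ℕ} (hd : HypM d δ) (S : Spin d D Y r ℓ θ) (T : Stage D r ℓ θ W G) {g : H}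
    (hg : g ∈ G) {b : C} (hb : b ∈ newC d D r θ W G) : g • b ∈ newC d D r θ W G := by
  obtain ⟨h1, w, hw, w', hw', h2⟩ := hb
  refine ⟨fun h => h1 ((conj_mem_iff S hg b).mp h), g * w, nbhd_act hd T hg hw, g * w',
    nbhd_act hd T hg hw', ?_⟩
  rwa [S.equiv]

/-- A new centre separates points of the neighbourhood, so by Behrstock's inequality it projects near
that neighbourhood on every other centre. -/
theorem newC_near (S : Spin d D Y r ℓ θ) {b c : C} (hb : b ∈ newC d D r θ W G) (hbc : b ≠ c)
    {yb : H} (hyb : yb ∈ Y b) : ∃ w ∈ nbhd d W, D c w yb ≤ θ := by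
  obtain ⟨_, w, hw, w', hw', h2⟩ := hb
  obtain ⟨yc, hyc⟩ := S.nonempty c
  have h3 := S.tri b w yc w'
  have h4 := S.symm b w' yc
  rcases S.behr b c hbc yb hyb yc hyc w with h | h
  · exact ⟨w, hw, h⟩
  rcases S.behr b c hbc yb hyb yc hyc w' with h' | h'
  · exact ⟨w', hw', h'⟩
  omega

theorem claim_one {δ : ℕ} (hd : HypM d δ) (S : Spin d D Y r ℓ θ) (T : Stage D r ℓ θ W G)
    {o : Option C} {n : H} (h : NF r (newC d D r θ W G) G o n) :
    ∀ b, o = some b → ∀ w₀ ∈ nbhd d W, ∀ w ∈ nbhd d W, ℓ b ≤ D b w₀ (n * w) + (8 * θ + 4) := by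
  induction h with
  | base g hg => intro b hb; simp at hb
  | step b k o n hb hk ho hn ih =>
    intro b' hb' w₀ hw₀ w hw
    obtain rfl : b = b' := by simpa using hb'
    have key : D b w₀ (n * w) ≤ 8 * θ + 4 := by
      cases o with
      | none =>
        have := nbhd_diam S T hb.1 hw₀ (nbhd_act hd T hn.mem_of_none hw)
        omega
      | some a =>
        have hab : a ≠ b := by simpa using ho
        have ha : a ∈ newC d D r θ W G := by cases hn; assumption
        obtain ⟨ya, hya⟩ := S.nonempty a
        obtain ⟨yb, hyb⟩ := S.nonempty b
        obtain ⟨u, hu, h1⟩ := newC_near S ha hab hya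
        obtain ⟨v, hv, h2⟩ := newC_near S hb hab.symm hyb
        have h3 := ih a rfl v hv w hw
        have h4 := S.tri a v yb (n * w)
        have h4' := S.symm a (n * w) yb
        have h5 := S.big a
        have h6 := S.four_le
        rcases S.behr a b hab ya hya yb hyb (n * w) with h | h
        · have := S.tri b w₀ u (n * w)
          have := S.tri b u ya (n * w)
          have := S.symm b ya (n * w)
          have := nbhd_diam S T hb.1 hw₀ hu
          omega
        · omega
    have h1 := S.spin b (n * w) k hk
    have h2 := S.tri b (n * w) w₀ (r b ^ k * (n * w))
    have h3 := S.symm b (n * w) w₀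
    rw [mul_assoc]
    omega

theorem not_mem_extG_smul (S : Spin d D Y r ℓ θ) {A : Set C} {g : H} (hg : g ∈ extG r A G) {c : C}
    (hc : r c ∉ extG r A G) : r (g • c) ∉ extG r A G := by
  rwa [conj_mem_iff S hg]

theorem claim_two {δ : ℕ} (hd : HypM d δ) (S : Spin d D Y r ℓ θ) (T : Stage D r ℓ θ W G)
    {o : Option C} {n : H} (h : NF r (newC d D r θ W G) G o n) :
    ∀ p c, r c ∉ extG r (newC d D r θ W G) G → (∃ w ∈ nbhd d W, D c p w ≤ 2 * θ) →
      (∀ b, o = some b → ∃ w ∈ nbhd d W, D b p w ≤ 2 * θ) →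
      ∀ w₁ ∈ nbhd d W, D c p (n * w₁) ≤ 6 * θ := by
  have hdiam : ∀ c, r c ∉ extG r (newC d D r θ W G) G → ∀ w ∈ nbhd d W, ∀ w' ∈ nbhd d W,
      D c w w' ≤ 2 * θ := by
    intro c hc w hw w' hw'
    by_contra hcon
    exact hc (rot_mem_extG G ⟨fun h => hc (le_extG _ _ h), w, hw, w', hw', by omega⟩)
  induction h with
  | base g hg =>
    intro p c hc ⟨w, hw, h1⟩ _ w₁ hw₁
    have := hdiam c hc w hw _ (nbhd_act hd T hg hw₁)
    have := S.tri c p w (g * w₁)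
    omega
  | step b k o n hb hk ho hn ih =>
    intro p c hc ⟨w, hw, h1⟩ h2 w₁ hw₁
    have hbG := rot_mem_extG (r := r) G hb
    have hbc : b ≠ c := by rintro rfl; exact hc hbG
    obtain ⟨yb, hyb⟩ := S.nonempty b
    obtain ⟨yc, hyc⟩ := S.nonempty c
    obtain ⟨u, hu, h3⟩ := h2 b rfl
    have h4 := claim_one hd S T (NF.step b k o n hb hk ho hn) b rfl
    have hbig := S.big b
    have h4le := S.four_le
    by_cases hcase : D b (r b ^ k * n * w₁) yc ≤ θ
    · -- rotate back by `r b ^ (-k)`, which replaces the centre `c` and the base point `p`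
      have hmem : r b ^ (-k) ∈ extG r (newC d D r θ W G) G := Subgroup.zpow_mem _ hbG _
      have hres := ih (r b ^ (-k) * p) (r b ^ (-k) • c) (not_mem_extG_smul S hmem hc) ?_ ?_ w₁ hw₁
      · have e := S.equiv (r b ^ k) (r b ^ (-k) • c) (r b ^ (-k) * p) (n * w₁)
        rw [smul_smul, ← mul_assoc, ← mul_assoc, ← zpow_add, add_neg_cancel, zpow_zero, one_smul,
          one_mul] at e
        rwa [e]
      · obtain ⟨v, hv, h5⟩ := newC_near S hb (c := r b ^ (-k) • c) (fun h => hbc (by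
          have h6 := congrArg (fun t => r b ^ k • t) h
          simpa [S.fix_zpow, smul_smul] using h6)) (yb := r b ^ (-k) * yb) (by
            have := S.mem_smul (r b ^ (-k)) b yb hyb
            rwa [S.fix_zpow] at this)
        refine ⟨v, hv, ?_⟩
        have e := S.equiv (r b ^ (-k)) c (r b ^ k * v) yb
        rw [← mul_assoc, ← zpow_add, neg_add_cancel, zpow_zero, one_mul] at e
        have e' := S.equiv (r b ^ (-k)) c p (r b ^ k * v)
        rw [← mul_assoc (r b ^ (-k)) (r b ^ k), ← zpow_add, neg_add_cancel, zpow_zero, one_mul] at e'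
        have h7 := h4 u hu w₁ hw₁
        have h8 := S.tri b u p (r b ^ k * n * w₁)
        have h9 := S.tri b p yc (r b ^ k * n * w₁)
        have h10 := S.symm b u p
        have h11 := S.symm b yc (r b ^ k * n * w₁)
        have h12 := (S.behr b c hbc yb hyb yc hyc p).resolve_right (by omega)
        have := S.tri c p yb (r b ^ k * v)
        have := S.symm c (r b ^ k * v) yb
        omega
      · intro b' hb'
        subst hb'
        have hbb : b' ≠ b := by simpa using ho
        have hb'A : b' ∈ newC d D r θ W G := by cases hn; assumption
        obtain ⟨v, hv, h5⟩ := newC_near S hb hbb.symm hyb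
        obtain ⟨yb', hyb'⟩ := S.nonempty b'
        obtain ⟨v', hv', h6⟩ := newC_near S hb'A hbb hyb'
        refine ⟨v, hv, ?_⟩
        have h7 := S.equiv_rot b (-k) p (r b ^ k * v')
        rw [← mul_assoc (r b ^ (-k)) (r b ^ k), ← zpow_add, neg_add_cancel, zpow_zero, one_mul] at h7
        have h8 := S.spin b v' k hk
        have h9 := S.tri b v' u (r b ^ k * v')
        have h10 := S.tri b u p (r b ^ k * v')
        have h11 := nbhd_diam S T hb.1 hv' hu
        have h12 := S.symm b u p
        have h13 := S.tri b (r b ^ (-k) * p) yb' v'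
        have h14 := S.symm b yb' v'
        have h15 := (S.behr b b' hbb.symm yb hyb yb' hyb' (r b ^ (-k) * p)).resolve_right (by omega)
        have := S.tri b' (r b ^ (-k) * p) yb v
        have := S.symm b' yb v
        omega
    · have h5 := (S.behr b c hbc yb hyb yc hyc (r b ^ k * n * w₁)).resolve_right hcase
      obtain ⟨v, hv, h6⟩ := newC_near S hb hbc hyb
      have := hdiam c hc w hw v hv
      have := S.tri c p w (r b ^ k * n * w₁)
      have := S.tri c w v (r b ^ k * n * w₁)
      have := S.tri c v yb (r b ^ k * n * w₁)
      have := S.symm c yb (r b ^ k * n * w₁)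
      omega

theorem stage_step {δ : ℕ} (hd : HypM d δ) (S : Spin d D Y r ℓ θ) (T : Stage D r ℓ θ W G) :
    ∃ W' G', Stage D r ℓ θ W' G' ∧ nbhd d W ⊆ W' := by
  have hA : ∀ g ∈ G, ∀ b ∈ newC d D r θ W G, g • b ∈ newC d D r θ W G :=
    fun g hg b hb => newC_smul hd S T hg hb
  have h1 : (1 : H) ∈ nbhd d W := subset_nbhd hd T.one_mem
  refine ⟨{x | ∃ g ∈ extG r (newC d D r θ W G) G, ∃ w ∈ nbhd d W, x = g * w},
    extG r (newC d D r θ W G) G, ⟨⟨1, Subgroup.one_mem _, 1, h1, by simp⟩, ?_, ?_, ?_⟩, ?_⟩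
  · rintro g hg _ ⟨g', hg', w, hw, rfl⟩
    exact ⟨g * g', Subgroup.mul_mem _ hg hg', w, hw, by group⟩
  · intro c
    by_cases hc : r c ∈ extG r (newC d D r θ W G) G
    · exact Or.inl hc
    right
    rintro _ ⟨g, hg, w, hw, rfl⟩ _ ⟨g', hg', w', hw', rfl⟩
    obtain ⟨o, ho⟩ := exists_NF S hA (Subgroup.mul_mem _ (Subgroup.inv_mem _ hg) hg')
    have h2 := claim_two hd S T ho w (g⁻¹ • c) (not_mem_extG_smul S (Subgroup.inv_mem _ hg) hc)
      ⟨w, hw, by rw [S.self]; omega⟩ (fun b _ => ⟨w, hw, by rw [S.self]; omega⟩) w' hw'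
    have e := S.equiv g (g⁻¹ • c) w (g⁻¹ * g' * w')
    rw [smul_smul, mul_inv_cancel, one_smul] at e
    have e2 : g * (g⁻¹ * g' * w') = g' * w' := by group
    rw [e2] at e
    rwa [e]
  · intro n hn
    obtain ⟨o, ho⟩ := exists_NF S hA hn
    clear hn
    induction ho with
    | base g hg => exact T.green g hg
    | step b k o n hb hk ho hn ih =>
      refine Green.rot b k n ih ?_
      have := claim_one hd S T (NF.step b k o n hb hk ho hn) b rfl 1 h1 1 h1
      rwa [mul_one] at this
  · intro w hw
    exact ⟨1, Subgroup.one_mem _, w, hw, by simp⟩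

end Step

theorem exists_stage {δ : ℕ} (hd : HypM d δ) (S : Spin d D Y r ℓ θ) (j : ℕ) :
    ∃ W G, Stage D r ℓ θ W G ∧ {x | d 1 x ≤ j} ⊆ W := by
  induction j with
  | zero =>
    refine ⟨{1}, ⊥, ⟨rfl, ?_, ?_, ?_⟩, ?_⟩
    · intro g hg w hw
      rw [Subgroup.mem_bot] at hg
      subst hg; simpa using hw
    · intro c
      right
      rintro w rfl w' rfl
      rw [S.self]; omega
    · intro n hn
      rw [Subgroup.mem_bot] at hn
      subst hn; exact Green.one
    · intro x hx
      exact (hd.eq_of (Nat.le_zero.mp hx)).symm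
  | succ j ih =>
    obtain ⟨W, G, T, hW⟩ := ih
    obtain ⟨W', G', T', hW'⟩ := stage_step hd S T
    refine ⟨W', G', T', fun x hx => hW' ?_⟩
    have hx' : d 1 x ≤ j + 1 := hx
    by_cases hle : d 1 x ≤ j
    · exact subset_nbhd hd (hW hle)
    · obtain ⟨z, h1, h2⟩ := hd.geod 1 x j (by omega)
      exact ⟨z, hW (show d 1 z ≤ j by omega), by omega⟩

/-- The normal subgroup generated by the rotations. -/
def rotG (r : C → H) : Subgroup H := Subgroup.closure (Set.range r)

theorem rot_mem (c : C) : r c ∈ rotG r := Subgroup.subset_closure ⟨c, rfl⟩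

theorem rotG_normal (S : Spin d D Y r ℓ θ) : (rotG r).Normal := by
  constructor
  intro n hn g
  induction hn using Subgroup.closure_induction with
  | mem x hx =>
    obtain ⟨c, rfl⟩ := hx
    rw [← S.conj]
    exact rot_mem _
  | one => simp
  | mul x y _ _ hx hy =>
    have := Subgroup.mul_mem _ hx hy
    simpa [mul_assoc] using this
  | inv x _ hx =>
    have := Subgroup.inv_mem _ hx
    simpa [mul_assoc] using this

theorem green_of_mem {δ : ℕ} (hd : HypM d δ) (S : Spin d D Y r ℓ θ) {n : H} (hn : n ∈ rotG r) :
    Green D r ℓ θ n := by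
  have key : ∃ j : ℕ, ∀ W G, Stage D r ℓ θ W G → {x | d 1 x ≤ j} ⊆ W → n ∈ G := by
    induction hn using Subgroup.closure_induction with
    | mem x hx =>
      obtain ⟨c, rfl⟩ := hx
      refine ⟨d 1 (r c), fun W G T hW => ?_⟩
      refine (T.alt c).resolve_right fun h => ?_
      have h1 := h 1 T.one_mem (r c) (hW (le_refl (d 1 (r c))))
      have h2 := S.spin c 1 1 one_ne_zero
      rw [zpow_one, mul_one] at h2
      have := S.big c
      have := S.four_le
      omega
    | one => exact ⟨0, fun W G _ _ => G.one_mem⟩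
    | mul x y _ _ hx hy =>
      obtain ⟨i, hi⟩ := hx
      obtain ⟨j, hj⟩ := hy
      refine ⟨max i j, fun W G T hW => G.mul_mem (hi W G T ?_) (hj W G T ?_)⟩
      · exact fun x hx => hW (le_trans (show d 1 x ≤ i from hx) (le_max_left _ _))
      · exact fun x hx => hW (le_trans (show d 1 x ≤ j from hx) (le_max_right _ _))
    | inv x _ hx =>
      obtain ⟨i, hi⟩ := hx
      exact ⟨i, fun W G T hW => G.inv_mem (hi W G T hW)⟩
  obtain ⟨j, hj⟩ := key
  obtain ⟨W, G, T, hW⟩ := exists_stage hd S j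
  exact T.green n (hj W G T hW)

/-- Greendlinger-type induction over the normal subgroup generated by the rotations, seen from an
arbitrary base point `x`. -/
theorem green_induction {δ : ℕ} (hd : HypM d δ) (S : Spin d D Y r ℓ θ) (x : H) {P : H → Prop}
    (h1 : P 1)
    (h2 : ∀ c (k : ℤ) n, n ∈ rotG r → P n → ℓ c ≤ D c x (r c ^ k * n * x) + (8 * θ + 4) →
      P (r c ^ k * n)) {n : H} (hn : n ∈ rotG r) : P n := by
  have hN := rotG_normal S
  have hg := green_of_mem hd S (hN.conj_mem' n hn x)
  have key : ∀ m, Green D r ℓ θ m → x * m * x⁻¹ ∈ rotG r ∧ P (x * m * x⁻¹) := by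
    intro m hm
    induction hm with
    | one => simpa using (⟨Subgroup.one_mem _, h1⟩ : (1 : H) ∈ rotG r ∧ P 1)
    | rot c k m hm hl ih =>
      have e : x * (r c ^ k * m) * x⁻¹ = r (x • c) ^ k * (x * m * x⁻¹) := by
        rw [S.conj_zpow]; group
      rw [e]
      refine ⟨Subgroup.mul_mem _ (Subgroup.zpow_mem _ (rot_mem _) _) ih.1, h2 _ k _ ih.1 ih.2 ?_⟩
      rw [← e, S.len_smul]
      have := S.equiv x c 1 (r c ^ k * m)
      rw [mul_one] at this
      rwa [inv_mul_cancel_right, this]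
  have := (key _ hg).2
  simpa [mul_assoc] using this

/-- A nontrivial element of the kernel moves each point far, as seen from some centre. -/
theorem exists_far {δ : ℕ} (hd : HypM d δ) (S : Spin d D Y r ℓ θ) (x : H) {n : H}
    (hn : n ∈ rotG r) (h1 : n ≠ 1) : ∃ c, ℓ c ≤ D c x (n * x) + (8 * θ + 4) := by
  have : n = 1 ∨ ∃ c, ℓ c ≤ D c x (n * x) + (8 * θ + 4) := by
    refine S.green_induction hd x (P := fun n => n = 1 ∨ ∃ c, ℓ c ≤ D c x (n * x) + (8 * θ + 4))
      (Or.inl rfl) ?_ hn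
    intro c k n _ _ h
    exact Or.inr ⟨c, h⟩
  exact this.resolve_left h1

end Spin

/-! ### The electrified metric -/

section Electric

variable {H C : Type*} [Group H] {d : H → H → ℕ} {δ : ℕ} {Y : C → Set H} {Q : ℕ}

/-- Adjacency after coning off each `Y c`. -/
def adj (d : H → H → ℕ) (Y : C → Set H) (x y : H) : Prop :=
  d x y ≤ 1 ∨ ∃ c, x ∈ Y c ∧ y ∈ Y c

/-- The path metric of the graph `adj`. -/
noncomputable def dX (d : H → H → ℕ) (Y : C → Set H) (x y : H) : ℕ :=
  sInf {k | ∃ f : ℕ → H, f 0 = x ∧ f k = y ∧ ∀ i < k, adj d Y (f i) (f (i + 1))}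

theorem dX_le {f : ℕ → H} {m : ℕ} (hf : ∀ i < m, adj d Y (f i) (f (i + 1))) {i j : ℕ}
    (hij : i ≤ j) (hj : j ≤ m) : dX d Y (f i) (f j) ≤ j - i := by
  refine Nat.sInf_le ⟨fun t => f (i + t), by simp, by simp [Nat.add_sub_cancel' hij], ?_⟩
  intro t ht
  exact hf (i + t) (by omega)

theorem dX_le_one {x y : H} (h : adj d Y x y) : dX d Y x y ≤ 1 :=
  Nat.sInf_le ⟨fun t => if t = 0 then x else y, by simp, by simp, by
    intro i hi
    obtain rfl : i = 0 := by omega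
    simpa using h⟩

theorem dX_self (x : H) : dX d Y x x = 0 :=
  Nat.le_zero.mp (Nat.sInf_le ⟨fun _ => x, rfl, rfl, by simp⟩)

theorem chain_append {x y z : H} {a b : ℕ}
    (h1 : ∃ f : ℕ → H, f 0 = x ∧ f a = y ∧ ∀ i < a, adj d Y (f i) (f (i + 1)))
    (h2 : ∃ f : ℕ → H, f 0 = y ∧ f b = z ∧ ∀ i < b, adj d Y (f i) (f (i + 1))) :
    ∃ f : ℕ → H, f 0 = x ∧ f (a + b) = z ∧ ∀ i < a + b, adj d Y (f i) (f (i + 1)) := by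
  obtain ⟨f, f0, fa, hf⟩ := h1
  obtain ⟨g, g0, gb, hg⟩ := h2
  refine ⟨fun i => if i ≤ a then f i else g (i - a), by simp [f0], ?_, ?_⟩
  · by_cases hb : b = 0
    · subst hb; simp [fa, ← gb, g0]
    · simp [hb, gb]
  · intro i hi
    rcases lt_trichotomy i a with h | h | h
    · have h1 : i ≤ a := h.le
      have h2 : i + 1 ≤ a := h
      simpa [h1, h2] using hf i h
    · subst h
      have := hg 0 (by omega)
      simpa [fa, g0] using this
    · have h1 : ¬ i ≤ a := by omega
      have h2 : ¬ i + 1 ≤ a := by omega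
      have := hg (i - a) (by omega)
      have e : i - a + 1 = i + 1 - a := by omega
      simpa [h1, h2, e] using this

theorem exists_chain_d (hd : HypM d δ) (x y : H) :
    ∃ f : ℕ → H, f 0 = x ∧ f (d x y) = y ∧ ∀ i < d x y, adj d Y (f i) (f (i + 1)) := by
  obtain ⟨n, hn⟩ : ∃ n, d x y = n := ⟨_, rfl⟩
  rw [hn]
  induction n generalizing y with
  | zero => exact ⟨fun _ => x, rfl, hd.eq_of hn, by simp⟩
  | succ n ih =>
    obtain ⟨z, h1, h2⟩ := hd.geod x y n (by omega)
    refine chain_append (ih z h1) ⟨fun t => if t = 0 then z else y, by simp, by simp, ?_⟩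
    intro i hi
    obtain rfl : i = 0 := by omega
    have h3 : adj d Y z y := Or.inl (by omega)
    simpa using h3

theorem exists_chain (hd : HypM d δ) (x y : H) :
    ∃ f : ℕ → H, f 0 = x ∧ f (dX d Y x y) = y ∧ ∀ i < dX d Y x y, adj d Y (f i) (f (i + 1)) := by
  have : {k | ∃ f : ℕ → H, f 0 = x ∧ f k = y ∧ ∀ i < k, adj d Y (f i) (f (i + 1))}.Nonempty :=
    ⟨_, exists_chain_d hd x y⟩
  exact Nat.sInf_mem this

theorem dX_le_d (hd : HypM d δ) (x y : H) : dX d Y x y ≤ d x y :=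
  Nat.sInf_le (exists_chain_d hd x y)

theorem dX_tri (hd : HypM d δ) (x y z : H) : dX d Y x z ≤ dX d Y x y + dX d Y y z :=
  Nat.sInf_le (chain_append (exists_chain hd x y) (exists_chain hd y z))

theorem adj_symm (hd : HypM d δ) {x y : H} (h : adj d Y x y) : adj d Y y x := by
  rcases h with h | ⟨c, h1, h2⟩
  · left; rwa [hd.symm]
  · exact Or.inr ⟨c, h2, h1⟩

theorem dX_symm (hd : HypM d δ) (x y : H) : dX d Y x y = dX d Y y x := by
  have key : ∀ x y, dX d Y x y ≤ dX d Y y x := by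
    intro x y
    obtain ⟨f, f0, f1, hf⟩ := exists_chain (Y := Y) hd y x
    refine Nat.sInf_le ⟨fun i => f (dX d Y y x - i), by simpa using f1, by simpa using f0, ?_⟩
    intro i hi
    have := adj_symm hd (hf (dX d Y y x - (i + 1)) (by omega))
    have e : dX d Y y x - (i + 1) + 1 = dX d Y y x - i := by omega
    rwa [e] at this
  exact le_antisymm (key x y) (key y x)

theorem dX_split (hd : HypM d δ) (x y : H) {k : ℕ} (hk : k ≤ dX d Y x y) :
    ∃ z, dX d Y x z ≤ k ∧ dX d Y z y + k ≤ dX d Y x y := by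
  obtain ⟨f, f0, f1, hf⟩ := exists_chain (Y := Y) hd x y
  have h1 := dX_le hf (Nat.zero_le k) hk
  have h2 := dX_le hf hk le_rfl
  rw [f0] at h1
  rw [f1] at h2
  exact ⟨f k, by omega, by omega⟩

/-- A chain in the electrified metric passes near each point almost between its ends, up to an error
logarithmic in its length. -/
theorem chain_log (hd : HypM d δ) (hQ : ∀ c, HypM.QC d Q (Y c)) (k : ℕ) :
    ∀ (f : ℕ → H) (m e : ℕ) (z : H), m ≤ 2 ^ k → (∀ i < m, adj d Y (f i) (f (i + 1))) →
      d (f 0) z + d z (f m) ≤ d (f 0) (f m) + e →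
      ∃ i ≤ m, dX d Y (f i) z ≤ Q + 1 + e + (k + 1) * δ := by
  induction k with
  | zero =>
    intro f m e z hm hf hz
    refine ⟨0, Nat.zero_le _, ?_⟩
    have h0 : m = 0 ∨ m = 1 := by simp at hm; omega
    rcases h0 with rfl | rfl
    · have := dX_le_d (Y := Y) hd (f 0) z
      rw [hd.self] at hz
      omega
    · rcases hf 0 (by omega) with h | ⟨c, h1, h2⟩
      · have := dX_le_d (Y := Y) hd (f 0) z
        simp only [zero_add] at h
        omega
      · obtain ⟨z', h3, h4⟩ := hd.near_between hz
        obtain ⟨y', hy', h5⟩ := hQ c _ h1 _ h2 z' h3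
        have h6 := dX_le_one (d := d) (Y := Y) (Or.inr ⟨c, h1, hy'⟩)
        have := dX_tri (Y := Y) hd (f 0) y' z
        have := dX_le_d (Y := Y) hd y' z
        have := hd.symm y' z
        have := hd.tri z z' y'
        omega
  | succ k ih =>
    intro f m e z hm hf hz
    by_cases hle : m ≤ 2 ^ k
    · obtain ⟨i, hi, h⟩ := ih f m e z hle hf hz
      exact ⟨i, hi, h.trans (by nlinarith)⟩
    · have h2 : 2 ^ (k + 1) = 2 ^ k + 2 ^ k := by ring
      rcases hd.almost_between (f (2 ^ k)) hz with h | h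
      · obtain ⟨i, hi, h⟩ := ih f (2 ^ k) (e + δ) z le_rfl (fun i hi => hf i (by omega)) h
        exact ⟨i, by omega, h.trans (by nlinarith)⟩
      · obtain ⟨i, hi, h⟩ := ih (fun t => f (2 ^ k + t)) (m - 2 ^ k) (e + δ) z (by omega)
          (fun i hi => hf (2 ^ k + i) (by omega)) (by
            have e1 : 2 ^ k + (m - 2 ^ k) = m := by omega
            simpa [e1] using h)
        exact ⟨2 ^ k + i, by omega, h.trans (by nlinarith)⟩

theorem log_growth (A δ : ℕ) : ∃ k₀, ∀ k, k₀ ≤ k → 6 * A + 6 * (k + 1) * δ ≤ 2 ^ (k - 1) := by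
  refine ⟨2 * (6 * A + 18 * δ) + 1, fun k hk => ?_⟩
  obtain ⟨j, hj⟩ : ∃ j, j = (k - 1) / 2 := ⟨_, rfl⟩
  have h1 : (j + 1) * (j + 1) ≤ 2 ^ (k - 1) := by
    have h2 : j + 1 ≤ 2 ^ j := Nat.lt_two_pow_self
    calc (j + 1) * (j + 1) ≤ 2 ^ j * 2 ^ j := Nat.mul_le_mul h2 h2
      _ = 2 ^ (j + j) := (pow_add _ _ _).symm
      _ ≤ 2 ^ (k - 1) := Nat.pow_le_pow_right (by norm_num) (by omega)
  refine le_trans ?_ h1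
  have h3 : k ≤ 2 * j + 2 := by omega
  have h4 : 6 * A + 18 * δ ≤ j := by omega
  calc 6 * A + 6 * (k + 1) * δ ≤ 6 * A + 6 * (2 * j + 2 + 1) * δ := by gcongr
    _ ≤ (j + 1) * (6 * A + 18 * δ) := by nlinarith [Nat.zero_le (j * A), Nat.zero_le (j * δ)]
    _ ≤ (j + 1) * (j + 1) := Nat.mul_le_mul le_rfl (by omega)

theorem exists_at_dX (hd : HypM d δ) (z : H) (R : ℕ) (n : ℕ) :
    ∀ x, d x z = n → R ≤ dX d Y z x → ∃ z₁, d x z₁ + d z₁ z = d x z ∧ dX d Y z z₁ = R := by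
  induction n with
  | zero =>
    intro x hx hR
    have := dX_le_d (Y := Y) hd z x
    have := hd.symm z x
    exact ⟨x, by simp [hd.self], by omega⟩
  | succ n ih =>
    intro x hx hR
    by_cases h : dX d Y z x = R
    · exact ⟨x, by simp [hd.self], h⟩
    · obtain ⟨x', h1, h2⟩ := hd.geod x z 1 (by omega)
      have := dX_tri (Y := Y) hd z x' x
      have := dX_le_d (Y := Y) hd x' x
      have := hd.symm x' x
      obtain ⟨z₁, h3, h4⟩ := ih x' (by omega) (by omega)
      refine ⟨z₁, ?_, h4⟩
      have := hd.tri x x' z₁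
      have := hd.tri x z₁ z
      omega

/-- Geodesics of the electrified metric stay uniformly close, in that metric, to geodesics of `d`.
The bound does not depend on the family `Y`, only on its quasiconvexity constant. -/
theorem dX_close.{u, v} {H : Type u} [Group H] {d : H → H → ℕ} {δ : ℕ} (hd : HypM d δ) (Q e : ℕ) :
    ∃ R₀ : ℕ, ∀ {C : Type v} (Y : C → Set H), (∀ c, HypM.QC d Q (Y c)) →
      ∀ (f : ℕ → H) (m : ℕ), (∀ i < m, adj d Y (f i) (f (i + 1))) → dX d Y (f 0) (f m) = m →
      ∀ z, d (f 0) z + d z (f m) ≤ d (f 0) (f m) + e → ∃ i ≤ m, dX d Y (f i) z ≤ R₀ := by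
  obtain ⟨k₀, hk₀⟩ := log_growth (Q + 1 + (e + 2 * δ)) δ
  refine ⟨Q + 1 + (e + 2 * δ) + (k₀ + 1) * δ, ?_⟩
  intro C Y hQ f m hf hm
  classical
  have hex : ∃ R, ∀ z, d (f 0) z + d z (f m) ≤ d (f 0) (f m) + e → ∃ i ≤ m, dX d Y (f i) z ≤ R :=
    ⟨d (f 0) (f m) + e, fun z hz => ⟨0, Nat.zero_le _, by
      have := dX_le_d (Y := Y) hd (f 0) z; omega⟩⟩
  -- `R` is the largest distance from such a point `z` to the chain
  obtain ⟨R, hR, hmin⟩ : ∃ R, (∀ z, d (f 0) z + d z (f m) ≤ d (f 0) (f m) + e →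
      ∃ i ≤ m, dX d Y (f i) z ≤ R) ∧ ∀ R', R' < R → ¬ ∀ z, d (f 0) z + d z (f m) ≤
      d (f 0) (f m) + e → ∃ i ≤ m, dX d Y (f i) z ≤ R' :=
    ⟨Nat.find hex, Nat.find_spec hex, fun R' h => Nat.find_min hex h⟩
  suffices hsuff : R ≤ Q + 1 + (e + 2 * δ) + (k₀ + 1) * δ by
    intro z hz
    obtain ⟨i, hi, h⟩ := hR z hz
    exact ⟨i, hi, h.trans hsuff⟩
  rcases Nat.eq_zero_or_pos R with h0 | hpos
  · omega
  have hlt := hmin (R - 1) (by omega)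
  push Not at hlt
  obtain ⟨z, hz, hfar⟩ := hlt
  have hfar' : ∀ i ≤ m, R ≤ dX d Y (f i) z := fun i hi => by have := hfar i hi; omega
  obtain ⟨k, hk1, hk2⟩ : ∃ k, 6 * R ≤ 2 ^ k ∧ 2 ^ (k - 1) < 6 * R :=
    ⟨Nat.clog 2 (6 * R), Nat.le_pow_clog (by norm_num) _,
      Nat.pow_pred_clog_lt_self (by norm_num) (by omega)⟩
  have hRk : R ≤ Q + 1 + (e + 2 * δ) + (k + 1) * δ := by
    -- points at distance `2R` on the two sides of `z`, and points of the chain near them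
    obtain ⟨z₁, i₁, h1, h2, hi1, h3, h4⟩ : ∃ z₁ i₁, d (f 0) z₁ + d z₁ z = d (f 0) z ∧
        dX d Y z z₁ ≤ 2 * R ∧ i₁ ≤ m ∧ dX d Y z₁ (f i₁) ≤ R ∧
        ((f i₁ = z₁ ∧ i₁ = 0) ∨ dX d Y z z₁ = 2 * R) := by
      by_cases hc : dX d Y z (f 0) ≤ 2 * R
      · exact ⟨f 0, 0, by simp [hd.self], hc, Nat.zero_le _, by simp [dX_self], Or.inl ⟨rfl, rfl⟩⟩
      · obtain ⟨z₁, h1, h2⟩ := exists_at_dX (Y := Y) hd z (2 * R) _ (f 0) rfl (by omega)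
        have := hd.tri z₁ z (f m)
        obtain ⟨i, hi, h3⟩ := hR z₁ (by omega)
        exact ⟨z₁, i, h1, h2.le, hi, by rwa [dX_symm hd], Or.inr h2⟩
    obtain ⟨z₂, i₂, h1', h2', hi2, h3', h4'⟩ : ∃ z₂ i₂, d (f m) z₂ + d z₂ z = d (f m) z ∧
        dX d Y z z₂ ≤ 2 * R ∧ i₂ ≤ m ∧ dX d Y z₂ (f i₂) ≤ R ∧
        ((f i₂ = z₂ ∧ i₂ = m) ∨ dX d Y z z₂ = 2 * R) := by
      by_cases hc : dX d Y z (f m) ≤ 2 * R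
      · exact ⟨f m, m, by simp [hd.self], hc, le_rfl, by simp [dX_self], Or.inl ⟨rfl, rfl⟩⟩
      · obtain ⟨z₂, h1, h2⟩ := exists_at_dX (Y := Y) hd z (2 * R) _ (f m) rfl (by omega)
        have := hd.tri z₂ z (f 0)
        have := hd.symm (f m) z₂
        have := hd.symm (f m) z
        have := hd.symm (f 0) z₂
        have := hd.symm (f 0) z
        obtain ⟨i, hi, h3⟩ := hR z₂ (by omega)
        exact ⟨z₂, i, h1, h2.le, hi, by rwa [dX_symm hd], Or.inr h2⟩
    have hb : d z₁ z + d z z₂ ≤ d z₁ z₂ + e := by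
      have := hd.tri (f 0) z₁ (f m)
      have := hd.tri z₁ z₂ (f m)
      have := hd.symm (f m) z₂
      have := hd.symm (f m) z
      have := hd.symm z z₂
      omega
    have hside : ∀ u v : H, dX d Y u v ≤ R → d u z + d z v ≤ d u v + (e + 2 * δ) →
        dX d Y u z ≤ dX d Y u v + (Q + 1 + (e + 2 * δ) + (k + 1) * δ) := by
      intro u v huv hb
      obtain ⟨g, g0, g1, hg⟩ := exists_chain (Y := Y) hd u v
      obtain ⟨i, hi, h⟩ := chain_log hd hQ k g _ (e + 2 * δ) z (by omega) hg (by rwa [g0, g1])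
      have h5 := dX_le hg (Nat.zero_le i) hi
      rw [g0] at h5
      have := dX_tri (Y := Y) hd u (g i) z
      omega
    have hmid : ∀ i j, i ≤ j → j ≤ m → j - i ≤ 6 * R →
        d (f i) z + d z (f j) ≤ d (f i) (f j) + (e + 2 * δ) →
        R ≤ Q + 1 + (e + 2 * δ) + (k + 1) * δ := by
      intro i j hij hj hR6 hb
      obtain ⟨t, ht, h⟩ := chain_log hd hQ k (fun t => f (i + t)) (j - i) (e + 2 * δ) z (by omega)
        (fun t ht => hf (i + t) (by omega)) (by simpa [Nat.add_sub_cancel' hij] using hb)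
      exact (hfar' (i + t) (by omega)).trans h
    have hgeo : ∀ i j, i ≤ j → j ≤ m → dX d Y (f i) (f j) = j - i := by
      intro i j hij hj
      have a1 := dX_le hf hij hj
      have a2 := dX_le hf (Nat.zero_le i) (hij.trans hj)
      have a3 := dX_le hf hj le_rfl
      have a4 := dX_tri (Y := Y) hd (f 0) (f i) (f m)
      have a5 := dX_tri (Y := Y) hd (f i) (f j) (f m)
      omega
    have hi12 : dX d Y (f i₁) (f i₂) ≤ 6 * R := by
      have a1 := dX_tri (Y := Y) hd (f i₁) z₁ (f i₂)
      have a2 := dX_tri (Y := Y) hd z₁ z (f i₂)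
      have a3 := dX_tri (Y := Y) hd z z₂ (f i₂)
      have a4 := dX_symm (Y := Y) hd (f i₁) z₁
      have a5 := dX_symm (Y := Y) hd z z₁
      omega
    rcases hd.almost_between (f i₁) hb with h | h
    · have a1 := hside z₁ (f i₁) h3 (by omega)
      have a2 := dX_symm (Y := Y) hd z z₁
      rcases h4 with ⟨h5, h6⟩ | h5
      · rw [h5, dX_self] at a1
        have := hfar' i₁ hi1
        rw [h5] at this
        omega
      · omega
    · rcases hd.almost_between (f i₂) h with h | h
      · rcases le_total i₁ i₂ with hle | hle
        · rw [hgeo _ _ hle hi2] at hi12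
          exact hmid _ _ hle hi2 hi12 (by omega)
        · rw [dX_symm hd, hgeo _ _ hle hi1] at hi12
          refine hmid _ _ hle hi1 hi12 ?_
          have := hd.symm (f i₁) z
          have := hd.symm (f i₂) z
          have := hd.symm (f i₁) (f i₂)
          omega
      · have b1 := hd.symm (f i₂) z
        have b2 := hd.symm z₂ z
        have b3 := hd.symm (f i₂) z₂
        have a1 := hside z₂ (f i₂) h3' (by omega)
        have a2 := dX_symm (Y := Y) hd z z₂
        rcases h4' with ⟨h5, h6⟩ | h5
        · rw [h5, dX_self] at a1
          have := hfar' i₂ hi2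
          rw [h5] at this
          omega
        · omega
  by_cases hkk : k₀ ≤ k
  · have := hk₀ k hkk
    have e1 : 6 * (k + 1) * δ = 6 * ((k + 1) * δ) := by ring
    omega
  · have : (k + 1) * δ ≤ (k₀ + 1) * δ := Nat.mul_le_mul (by omega) le_rfl
    omega

/-- Almost-geodesic triples of `d` stay almost geodesic in the electrified metric. -/
theorem dX_between.{u, v} {H : Type u} [Group H] {d : H → H → ℕ} {δ : ℕ} (hd : HypM d δ) (Q e : ℕ) :
    ∃ R₀ : ℕ, ∀ {C : Type v} (Y : C → Set H), (∀ c, HypM.QC d Q (Y c)) →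
      ∀ x z y, d x z + d z y ≤ d x y + e → dX d Y x z + dX d Y z y ≤ dX d Y x y + R₀ := by
  obtain ⟨R, hR⟩ := dX_close.{u, v} hd Q e
  refine ⟨2 * R, fun Y hQ x z y hz => ?_⟩
  obtain ⟨f, f0, f1, hf⟩ := exists_chain (Y := Y) hd x y
  obtain ⟨i, hi, h⟩ := hR Y hQ f _ hf (by rw [f0, f1]) z (by rwa [f0, f1])
  have h1 := dX_le hf (Nat.zero_le i) hi
  have h2 := dX_le hf hi le_rfl
  rw [f0] at h1
  rw [f1] at h2
  have := dX_tri (Y := Y) hd x (f i) z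
  have := dX_tri (Y := Y) hd z (f i) y
  have := dX_symm (Y := Y) hd z (f i)
  omega

theorem exists_cross (hd : HypM d δ) (x y z w : H) (h1 : d x y + d z w ≤ d x z + d y w + δ)
    (h2 : d x w + d y z ≤ d x z + d y w + δ) :
    ∃ p, d x p + d p z ≤ d x z + (3 * δ + 2) ∧ d y p + d p w ≤ d y w + (3 * δ + 2) := by
  obtain ⟨p, hp, hp'⟩ := hd.geod x z ((d x y + d x z - d y z) / 2) (by
    have := hd.tri x z y; have := hd.symm z y; omega)
  refine ⟨p, by omega, ?_⟩
  have := hd.hyp y p x z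
  have := hd.hyp w p x z
  have := hd.symm y x
  have := hd.symm p z
  have := hd.symm p x
  have := hd.symm w x
  have := hd.symm w z
  have := hd.symm w p
  have := hd.symm y z
  have := hd.tri x y z
  have := hd.tri y x z
  omega

/-- The electrified metric is hyperbolic, with constant independent of the family `Y`. -/
theorem dX_hyp.{u, v} {H : Type u} [Group H] {d : H → H → ℕ} {δ : ℕ} (hd : HypM d δ) (Q : ℕ) :
    ∃ δ' : ℕ, ∀ {C : Type v} (Y : C → Set H), (∀ c, HypM.QC d Q (Y c)) →
      ∀ x y z w, dX d Y x y + dX d Y z w ≤ dX d Y x z + dX d Y y w + δ' ∨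
        dX d Y x y + dX d Y z w ≤ dX d Y x w + dX d Y y z + δ' := by
  obtain ⟨R, hR⟩ := dX_between.{u, v} hd Q (3 * δ + 2)
  refine ⟨2 * R, fun Y hQ x y z w => ?_⟩
  have key : ∀ x y z w, d x y + d z w ≤ d x z + d y w + δ → d x w + d y z ≤ d x z + d y w + δ →
      dX d Y x y + dX d Y z w ≤ dX d Y x z + dX d Y y w + 2 * R := by
    intro x y z w h1 h2
    obtain ⟨p, h3, h4⟩ := exists_cross hd x y z w h1 h2
    have := hR Y hQ x p z h3
    have := hR Y hQ y p w h4
    have := dX_tri (Y := Y) hd x p y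
    have := dX_tri (Y := Y) hd z p w
    have := dX_symm (Y := Y) hd y p
    have := dX_symm (Y := Y) hd z p
    omega
  have h := hd.hyp x y z w
  rcases le_total (d x w + d y z) (d x z + d y w) with hle | hle
  · exact Or.inl (key x y z w (by omega) (by omega))
  · right
    have e1 := hd.symm w z
    have := key x y w z (by omega) (by omega)
    have := dX_symm (Y := Y) hd w z
    omega

end Electric

/-! ### Hyperbolicity of the quotient -/

namespace Spin

variable {H C : Type*} [Group H] [MulAction H C] {d : H → H → ℕ} {δ : ℕ}
  {Y : C → Set H} {r : C → H} {ℓ : C → ℕ} {θ : ℕ} {D : C → H → H → ℕ}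

theorem adj_mul (hd : HypM d δ) (S : Spin d D Y r ℓ θ) (g : H) {x y : H} (h : adj d Y x y) :
    adj d Y (g * x) (g * y) := by
  rcases h with h | ⟨c, h1, h2⟩
  · left; rwa [hd.inv]
  · exact Or.inr ⟨g • c, S.mem_smul g c x h1, S.mem_smul g c y h2⟩

theorem dX_mul (hd : HypM d δ) (S : Spin d D Y r ℓ θ) (g x y : H) :
    dX d Y (g * x) (g * y) = dX d Y x y := by
  have key : ∀ g x y, dX d Y (g * x) (g * y) ≤ dX d Y x y := by
    intro g x y
    obtain ⟨f, f0, f1, hf⟩ := exists_chain (Y := Y) hd x y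
    exact Nat.sInf_le ⟨fun i => g * f i, by simp [f0], by simp [f1],
      fun i hi => S.adj_mul hd g (hf i hi)⟩
  refine le_antisymm (key g x y) ?_
  simpa using key g⁻¹ (g * x) (g * y)

theorem rot_mem_Y (S : Spin d D Y r ℓ θ) {c : C} {x : H} (hx : x ∈ Y c) (k : ℤ) :
    r c ^ k * x ∈ Y c := by
  have := S.mem_smul (r c ^ k) c x hx
  rwa [S.fix_zpow] at this

theorem proj_between_of_far (hd : HypM d δ) {Q : ℕ} {Z : Set H} (hQ : HypM.QC d Q Z)
    (hZ : Z.Nonempty) {x y : H}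
    (h : 2 * (2 * (Q + δ) + 1) + δ < HypM.dproj d Z x y) :
    ∃ p ∈ Z, d x p + d p y ≤ d x y + (2 * (2 * (Q + δ) + 1) + δ) := by
  obtain ⟨p, hp⟩ := HypM.exists_near d hZ x
  obtain ⟨q, hq⟩ := HypM.exists_near d hZ y
  have h1 := hd.dproj_le_near hQ hp hq
  have h2 := hd.proj_between hQ hp hq (by omega)
  have := hd.tri p q y
  exact ⟨p, hp.1, by omega⟩

/-- Bounded geodesic image: if `x` and `y` look far apart from `c`, then an electrified geodesic from
`x` to `y` crosses `Y c`, and its tail can be rotated without increasing its length. -/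
theorem dX_rot.{u, v} {H : Type u} [Group H] {d : H → H → ℕ} {δ : ℕ} (hd : HypM d δ) (Q : ℕ) :
    ∃ K : ℕ, ∀ {C : Type v} [MulAction H C] {Y : C → Set H} {r : C → H} {ℓ : C → ℕ} {θ : ℕ}
      (_ : Spin d (fun c => HypM.dproj d (Y c)) Y r ℓ θ) (_ : ∀ c, HypM.QC d Q (Y c)),
      ∀ c x y, K * θ ≤ HypM.dproj d (Y c) x y → ∀ k : ℤ,
        dX d Y x (r c ^ k * y) ≤ dX d Y x y := by
  obtain ⟨R, hR⟩ := dX_close.{u, v} hd Q (2 * (2 * (Q + δ) + 1) + δ)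
  obtain ⟨A, hA⟩ : ∃ A, A = 2 * (2 * (Q + δ) + 1) + δ := ⟨_, rfl⟩
  rw [← hA] at hR
  refine ⟨2 * A + (2 * R + 3) + 1, ?_⟩
  intro C _ Y r ℓ θ S hQ c x y hK k
  have hθ := S.four_le
  obtain ⟨f, f0, fm, hf⟩ := exists_chain (Y := Y) hd x y
  obtain ⟨m, hm⟩ : ∃ m, m = dX d Y x y := ⟨_, rfl⟩
  rw [← hm] at fm hf
  by_cases hedge : ∃ i < m, f i ∈ Y c ∧ f (i + 1) ∈ Y c
  · obtain ⟨i, hi, h1, h2⟩ := hedge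
    have h3 := dX_le_one (d := d) (Y := Y) (Or.inr ⟨c, h1, S.rot_mem_Y h2 k⟩)
    have h4 := S.dX_mul hd (r c ^ k) (f (i + 1)) y
    have h5 := dX_le hf (Nat.zero_le i) hi.le
    have h6 := dX_le hf (show i + 1 ≤ m by omega) le_rfl
    rw [f0] at h5
    rw [fm] at h6
    have := dX_tri (Y := Y) hd x (f i) (r c ^ k * y)
    have := dX_tri (Y := Y) hd (f i) (r c ^ k * f (i + 1)) (r c ^ k * y)
    omega
  exfalso
  push Not at hedge
  have hstep : ∀ i < m, HypM.dproj d (Y c) (f i) (f (i + 1)) ≤ θ := by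
    intro i hi
    rcases hf i hi with h | ⟨b, h1, h2⟩
    · have := S.lip c (f i) (f (i + 1))
      omega
    · have hbc : b ≠ c := by
        rintro rfl
        exact hedge i hi h1 h2
      exact S.small b c hbc _ h1 _ h2
  have hsteps : ∀ i n, i + n ≤ m → HypM.dproj d (Y c) (f i) (f (i + n)) ≤ n * θ := by
    intro i n
    induction n with
    | zero => intro _; simp [HypM.dproj_self (S.nonempty c)]
    | succ n ih =>
      intro hn
      have h1 := ih (by omega)
      have h2 := hstep (i + n) (by omega)
      have h3 := S.tri c (f i) (f (i + n)) (f (i + (n + 1)))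
      simp only [← add_assoc] at h3 ⊢
      have : (n + 1) * θ = n * θ + θ := by ring
      omega
  have hgeo : ∀ i j, i ≤ j → j ≤ m → dX d Y (f i) (f j) = j - i := by
    intro i j hij hj
    have a1 := dX_le hf hij hj
    have a2 := dX_le hf (Nat.zero_le i) (hij.trans hj)
    have a3 := dX_le hf hj le_rfl
    have a4 := dX_tri (Y := Y) hd (f 0) (f i) (f m)
    have a5 := dX_tri (Y := Y) hd (f i) (f j) (f m)
    rw [f0, fm] at a4
    rw [fm] at a5 a3
    rw [f0] at a2
    omega
  have hclose : ∀ i n, i + n ≤ m → A < HypM.dproj d (Y c) (f i) (f (i + n)) →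
      ∃ t ≤ n, ∃ s ∈ Y c, dX d Y (f (i + t)) s ≤ R := by
    intro i n hn h
    rw [hA] at h
    obtain ⟨s, hs, h1⟩ := proj_between_of_far hd (hQ c) (S.nonempty c) h
    obtain ⟨t, ht, h2⟩ := hR Y hQ (fun t => f (i + t)) n (fun t ht => hf (i + t) (by omega))
      (by simpa using hgeo i (i + n) (by omega) hn) s (by rw [← hA] at h1; simpa using h1)
    exact ⟨t, ht, s, hs, h2⟩
  classical
  have hAθ : A ≤ A * θ := Nat.le_mul_of_pos_right _ (by omega)
  have hK2 : (2 * A + (2 * R + 3) + 1) * θ = 2 * (A * θ) + (2 * R + 3) * θ + θ := by ring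
  have hex : ∃ i, i ≤ m ∧ ∃ s ∈ Y c, dX d Y (f i) s ≤ R := by
    obtain ⟨t, ht, h⟩ := hclose 0 m (by omega) (by simp only [zero_add, f0, fm]; omega)
    exact ⟨0 + t, by omega, h⟩
  -- `i` is the first and `j` the last index at which the geodesic is near `Y c`
  obtain ⟨i, ⟨him, si, hsi, hi⟩, hfirst⟩ : ∃ i, (i ≤ m ∧ ∃ s ∈ Y c, dX d Y (f i) s ≤ R) ∧
      ∀ i' < i, ¬ (i' ≤ m ∧ ∃ s ∈ Y c, dX d Y (f i') s ≤ R) :=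
    ⟨Nat.find hex, Nat.find_spec hex, fun i' h => Nat.find_min hex h⟩
  have hex2 : ∃ j, j ≤ m ∧ ∃ s ∈ Y c, dX d Y (f (m - j)) s ≤ R :=
    ⟨m - i, by omega, si, hsi, by rwa [show m - (m - i) = i by omega]⟩
  obtain ⟨j, ⟨hjm, sj, hsj, hj⟩, hlast⟩ : ∃ j, (j ≤ m ∧ ∃ s ∈ Y c, dX d Y (f (m - j)) s ≤ R) ∧
      ∀ j' < j, ¬ (j' ≤ m ∧ ∃ s ∈ Y c, dX d Y (f (m - j')) s ≤ R) :=
    ⟨Nat.find hex2, Nat.find_spec hex2, fun i' h => Nat.find_min hex2 h⟩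
  have hij : i ≤ m - j := by
    by_contra hcon
    exact hfirst (m - j) (by omega) ⟨by omega, sj, hsj, hj⟩
  have h1 : HypM.dproj d (Y c) (f 0) (f i) ≤ A + θ := by
    rcases Nat.eq_zero_or_pos i with h0 | hpos
    · rw [h0, HypM.dproj_self (S.nonempty c)]; omega
    · have h2 := hstep (i - 1) (by omega)
      rw [show i - 1 + 1 = i by omega] at h2
      have h3 := S.tri c (f 0) (f (i - 1)) (f i)
      by_contra hcon
      obtain ⟨t, ht, h4⟩ := hclose 0 (i - 1) (by omega) (by simp only [zero_add]; omega)
      exact hfirst (0 + t) (by omega) ⟨by omega, h4⟩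
  have h2 : HypM.dproj d (Y c) (f (m - j)) (f m) ≤ A + θ := by
    rcases Nat.eq_zero_or_pos j with h0 | hpos
    · rw [h0, Nat.sub_zero, HypM.dproj_self (S.nonempty c)]; omega
    · have h2 := hstep (m - j) (by omega)
      have h3 := S.tri c (f (m - j)) (f (m - j + 1)) (f m)
      by_contra hcon
      obtain ⟨t, ht, h4⟩ := hclose (m - j + 1) (j - 1) (by omega) (by
        rw [show m - j + 1 + (j - 1) = m by omega]; omega)
      exact hlast (j - 1 - t) (by omega) ⟨by omega, by
        rwa [show m - (j - 1 - t) = m - j + 1 + t by omega]⟩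
  have h3 : m - j - i ≤ 2 * R + 1 := by
    have a1 := hgeo i (m - j) hij (by omega)
    have a2 := dX_tri (Y := Y) hd (f i) si (f (m - j))
    have a3 := dX_tri (Y := Y) hd si sj (f (m - j))
    have a4 := dX_le_one (d := d) (Y := Y) (Or.inr ⟨c, hsi, hsj⟩)
    have a5 := dX_symm (Y := Y) hd sj (f (m - j))
    omega
  have h4 := hsteps i (m - j - i) (by omega)
  rw [show i + (m - j - i) = m - j by omega] at h4
  have h5 : (m - j - i) * θ ≤ (2 * R + 1) * θ := Nat.mul_le_mul h3 le_rfl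
  have h6 : (2 * R + 3) * θ = (2 * R + 1) * θ + 2 * θ := by ring
  have h7 := S.tri c (f 0) (f i) (f m)
  have h8 := S.tri c (f i) (f (m - j)) (f m)
  rw [f0, fm] at h7
  rw [f0] at h1
  rw [fm] at h2 h8
  omega

/-- A quadrilateral that closes up in the quotient by the rotations lifts to a quadrilateral with
sides no longer. -/
theorem lift_quad (hd : HypM d δ) (S : Spin d D Y r ℓ θ) {K : ℕ}
    (hrot : ∀ c x y, K * θ ≤ D c x y → ∀ k : ℤ, dX d Y x (r c ^ k * y) ≤ dX d Y x y)
    (hℓ : ∀ c, 4 * (K * θ) + (8 * θ + 4) ≤ ℓ c) (x : H) {n : H} (hn : n ∈ rotG r) :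
    ∀ v₁ v₂ v₃, ∃ m₁ ∈ rotG r, ∃ m₂ ∈ rotG r, ∃ m₃ ∈ rotG r,
      dX d Y x (m₁ * v₁) ≤ dX d Y x v₁ ∧ dX d Y (m₁ * v₁) (m₂ * v₂) ≤ dX d Y v₁ v₂ ∧
      dX d Y (m₂ * v₂) (m₃ * v₃) ≤ dX d Y v₂ v₃ ∧ dX d Y (m₃ * v₃) x ≤ dX d Y v₃ (n * x) := by
  refine S.green_induction hd x (P := fun n => ∀ v₁ v₂ v₃, ∃ m₁ ∈ rotG r, ∃ m₂ ∈ rotG r,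
      ∃ m₃ ∈ rotG r,
      dX d Y x (m₁ * v₁) ≤ dX d Y x v₁ ∧ dX d Y (m₁ * v₁) (m₂ * v₂) ≤ dX d Y v₁ v₂ ∧
      dX d Y (m₂ * v₂) (m₃ * v₃) ≤ dX d Y v₂ v₃ ∧ dX d Y (m₃ * v₃) x ≤ dX d Y v₃ (n * x)) ?_ ?_ hn
  · intro v₁ v₂ v₃
    refine ⟨1, Subgroup.one_mem _, 1, Subgroup.one_mem _, 1, Subgroup.one_mem _, ?_⟩
    simp
  · intro c k n _ ih hl v₁ v₂ v₃
    have hinv : ∀ u v, dX d Y (r c ^ (-k) * u) (r c ^ (-k) * v) = dX d Y u v :=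
      fun u v => S.dX_mul hd _ u v
    have hlast : r c ^ (-k) * (r c ^ k * n * x) = n * x := by
      rw [← mul_assoc, ← mul_assoc, ← zpow_add, neg_add_cancel, zpow_zero, one_mul]
    have hk : r c ^ (-k) ∈ rotG r := Subgroup.zpow_mem _ (rot_mem c) _
    have hsum := S.tri c x v₁ (r c ^ k * n * x)
    have hsum2 := S.tri c v₁ v₂ (r c ^ k * n * x)
    have hsum3 := S.tri c v₂ v₃ (r c ^ k * n * x)
    have hℓc := hℓ c
    have hcases : K * θ ≤ D c x v₁ ∨ K * θ ≤ D c v₁ v₂ ∨ K * θ ≤ D c v₂ v₃ ∨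
        K * θ ≤ D c v₃ (r c ^ k * n * x) := by omega
    rcases hcases with h | h | h | h
    · obtain ⟨m₁, hm₁, m₂, hm₂, m₃, hm₃, h1, h2, h3, h4⟩ :=
        ih (r c ^ (-k) * v₁) (r c ^ (-k) * v₂) (r c ^ (-k) * v₃)
      refine ⟨m₁ * r c ^ (-k), Subgroup.mul_mem _ hm₁ hk, m₂ * r c ^ (-k),
        Subgroup.mul_mem _ hm₂ hk, m₃ * r c ^ (-k), Subgroup.mul_mem _ hm₃ hk, ?_⟩
      rw [← hlast, hinv] at h4
      rw [hinv] at h2 h3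
      have := hrot c x v₁ h (-k)
      simp only [mul_assoc] at *
      exact ⟨by omega, by omega, by omega, by omega⟩
    · obtain ⟨m₁, hm₁, m₂, hm₂, m₃, hm₃, h1, h2, h3, h4⟩ :=
        ih v₁ (r c ^ (-k) * v₂) (r c ^ (-k) * v₃)
      refine ⟨m₁, hm₁, m₂ * r c ^ (-k),
        Subgroup.mul_mem _ hm₂ hk, m₃ * r c ^ (-k), Subgroup.mul_mem _ hm₃ hk, ?_⟩
      rw [← hlast, hinv] at h4
      rw [hinv] at h3
      have := hrot c v₁ v₂ h (-k)
      simp only [mul_assoc] at *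
      exact ⟨by omega, by omega, by omega, by omega⟩
    · obtain ⟨m₁, hm₁, m₂, hm₂, m₃, hm₃, h1, h2, h3, h4⟩ := ih v₁ v₂ (r c ^ (-k) * v₃)
      refine ⟨m₁, hm₁, m₂, hm₂, m₃ * r c ^ (-k), Subgroup.mul_mem _ hm₃ hk, ?_⟩
      rw [← hlast, hinv] at h4
      have := hrot c v₂ v₃ h (-k)
      simp only [mul_assoc] at *
      exact ⟨by omega, by omega, by omega, by omega⟩
    · obtain ⟨m₁, hm₁, m₂, hm₂, m₃, hm₃, h1, h2, h3, h4⟩ := ih v₁ v₂ v₃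
      refine ⟨m₁, hm₁, m₂, hm₂, m₃, hm₃, h1, h2, h3, ?_⟩
      have := hrot c v₃ _ h (-k)
      rw [hlast] at this
      omega

/-- The electrified distance in the quotient by the rotations. -/
noncomputable def dbar (d : H → H → ℕ) (Y : C → Set H) (r : C → H) (x y : H) : ℕ :=
  sInf {k | ∃ n ∈ rotG r, dX d Y x (n * y) = k}

theorem exists_dbar (d : H → H → ℕ) (Y : C → Set H) (r : C → H) (x y : H) :
    ∃ n ∈ rotG r, dX d Y x (n * y) = dbar d Y r x y := by
  have : {k | ∃ n ∈ rotG r, dX d Y x (n * y) = k}.Nonempty := ⟨_, 1, Subgroup.one_mem _, rfl⟩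
  exact Nat.sInf_mem this

theorem dbar_le {x y n : H} (hn : n ∈ rotG r) : dbar d Y r x y ≤ dX d Y x (n * y) :=
  Nat.sInf_le ⟨n, hn, rfl⟩

theorem dbar_mul (hd : HypM d δ) (S : Spin d D Y r ℓ θ) {m n : H} (hm : m ∈ rotG r)
    (hn : n ∈ rotG r) (x y : H) : dbar d Y r x y ≤ dX d Y (m * x) (n * y) := by
  have := S.dX_mul hd m⁻¹ (m * x) (n * y)
  rw [inv_mul_cancel_left, ← mul_assoc] at this
  rw [← this]
  exact dbar_le (Subgroup.mul_mem _ (Subgroup.inv_mem _ hm) hn)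

theorem dbar_hyp (hd : HypM d δ) (S : Spin d D Y r ℓ θ) {K δ' : ℕ}
    (hrot : ∀ c x y, K * θ ≤ D c x y → ∀ k : ℤ, dX d Y x (r c ^ k * y) ≤ dX d Y x y)
    (hℓ : ∀ c, 4 * (K * θ) + (8 * θ + 4) ≤ ℓ c)
    (hX : ∀ x y z w, dX d Y x y + dX d Y z w ≤ dX d Y x z + dX d Y y w + δ' ∨
        dX d Y x y + dX d Y z w ≤ dX d Y x w + dX d Y y z + δ') (x y z w : H) :
    dbar d Y r x y + dbar d Y r z w ≤ dbar d Y r x z + dbar d Y r y w + δ' ∨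
      dbar d Y r x y + dbar d Y r z w ≤ dbar d Y r x w + dbar d Y r y z + δ' := by
  obtain ⟨n₁, hn₁, h1⟩ := exists_dbar d Y r x z
  obtain ⟨n₂, hn₂, h2⟩ := exists_dbar d Y r y z
  obtain ⟨n₃, hn₃, h3⟩ := exists_dbar d Y r y w
  obtain ⟨n₄, hn₄, h4⟩ := exists_dbar d Y r x w
  -- the closed path `x, z, y, w, x` of the quotient, lifted to start at `x`
  have g2 : n₁ * n₂⁻¹ ∈ rotG r := Subgroup.mul_mem _ hn₁ (Subgroup.inv_mem _ hn₂)
  have g3 : n₁ * n₂⁻¹ * n₃ ∈ rotG r := Subgroup.mul_mem _ g2 hn₃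
  have g4 : n₁ * n₂⁻¹ * n₃ * n₄⁻¹ ∈ rotG r := Subgroup.mul_mem _ g3 (Subgroup.inv_mem _ hn₄)
  obtain ⟨m₁, hm₁, m₂, hm₂, m₃, hm₃, a1, a2, a3, a4⟩ := S.lift_quad hd hrot hℓ x g4 (n₁ * z)
    (n₁ * n₂⁻¹ * y) (n₁ * n₂⁻¹ * n₃ * w)
  have e2 : dX d Y (n₁ * z) (n₁ * n₂⁻¹ * y) = dbar d Y r y z := by
    rw [← h2, dX_symm hd, ← S.dX_mul hd (n₁ * n₂⁻¹) y]; congr 1; group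
  have e3 : dX d Y (n₁ * n₂⁻¹ * y) (n₁ * n₂⁻¹ * n₃ * w) = dbar d Y r y w := by
    rw [← h3, ← S.dX_mul hd (n₁ * n₂⁻¹) y]; congr 1; group
  have e4 : dX d Y (n₁ * n₂⁻¹ * n₃ * w) (n₁ * n₂⁻¹ * n₃ * n₄⁻¹ * x) = dbar d Y r x w := by
    rw [← h4, dX_symm hd, ← S.dX_mul hd (n₁ * n₂⁻¹ * n₃ * n₄⁻¹) x]; congr 1; group
  have b1 : dbar d Y r x y ≤ dX d Y x (m₂ * (n₁ * n₂⁻¹ * y)) := by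
    have := dbar_mul hd S (Subgroup.one_mem _) (Subgroup.mul_mem _ hm₂ g2) x y
    simpa only [one_mul, mul_assoc] using this
  have b2 : dbar d Y r z w ≤ dX d Y (m₁ * (n₁ * z)) (m₃ * (n₁ * n₂⁻¹ * n₃ * w)) := by
    have := dbar_mul hd S (Subgroup.mul_mem _ hm₁ hn₁) (Subgroup.mul_mem _ hm₃ g3) z w
    simpa only [one_mul, mul_assoc] using this
  rw [h1] at a1
  rw [e2] at a2
  rw [e3] at a3
  rw [e4] at a4
  have c1 := hX x (m₂ * (n₁ * n₂⁻¹ * y)) (m₁ * (n₁ * z)) (m₃ * (n₁ * n₂⁻¹ * n₃ * w))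
  have c2 := dX_symm (Y := Y) hd x (m₃ * (n₁ * n₂⁻¹ * n₃ * w))
  have c3 := dX_symm (Y := Y) hd (m₁ * (n₁ * z)) (m₂ * (n₁ * n₂⁻¹ * y))
  omega

end Spin

/-! ### Word metrics of quotients -/

section Quotient

variable {H C : Type} [Group H] [MulAction H C] {d : H → H → ℕ} {δ : ℕ}
  {Y : C → Set H} {r : C → H} {ℓ : C → ℕ} {θ : ℕ} {D : C → H → H → ℕ}

open Spin

theorem hyperbolic_quotient_aux (hd : HypM d δ) (S : Spin d D Y r ℓ θ) {δ' : ℕ}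
    (hyp : ∀ x y z w, dbar d Y r x y + dbar d Y r z w ≤ dbar d Y r x z + dbar d Y r y w + δ' ∨
      dbar d Y r x y + dbar d Y r z w ≤ dbar d Y r x w + dbar d Y r y z + δ')
    {Hb : Type} [Group Hb] (pr : H →* Hb) (hpr : Surjective pr) (hker : pr.ker = rotG r)
    (hfin : (pr '' {t | adj d Y 1 t}).Finite) : HyperbolicGroup Hb := by
  classical
  have := hfin.fintype
  let p : FreeGroup (pr '' {t | adj d Y 1 t}) →* Hb := FreeGroup.lift fun t => (t : Hb)
  have hword : ∀ m (x y : H), dX d Y x y = m → ∃ w, p w = pr (x⁻¹ * y) ∧ w.norm ≤ m := by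
    intro m
    induction m with
    | zero =>
      intro x y hxy
      obtain ⟨f, f0, f1, _⟩ := exists_chain (Y := Y) hd x y
      rw [hxy] at f1
      exact ⟨1, by simp [← f0, ← f1], by simp⟩
    | succ m ih =>
      intro x y hxy
      obtain ⟨f, f0, f1, hf⟩ := exists_chain (Y := Y) hd x y
      rw [hxy] at f1 hf
      have h1 := dX_le hf (show 1 ≤ m + 1 by omega) le_rfl
      rw [f1] at h1
      have h2 : dX d Y x (f 1) ≤ 1 := by
        have := dX_le hf (Nat.zero_le 1) (by omega)
        rwa [f0] at this
      have h3 := dX_tri (Y := Y) hd x (f 1) y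
      obtain ⟨w, hw, hw'⟩ := ih (f 1) y (by omega)
      have hadj := S.adj_mul hd x⁻¹ (hf 0 (by omega))
      rw [f0, inv_mul_cancel] at hadj
      refine ⟨FreeGroup.of ⟨pr (x⁻¹ * f 1), _, hadj, rfl⟩ * w, ?_, ?_⟩
      · rw [map_mul, hw]
        simp only [p, FreeGroup.lift_apply_of, ← map_mul]
        congr 1; group
      · have := FreeGroup.norm_mul_le (FreeGroup.of (⟨pr (x⁻¹ * f 1), _, hadj, rfl⟩ :
          pr '' {t | adj d Y 1 t})) w
        rw [FreeGroup.norm_of] at this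
        omega
  have hp : Surjective p := by
    intro g
    obtain ⟨h, rfl⟩ := hpr g
    obtain ⟨w, hw, _⟩ := hword _ 1 h rfl
    exact ⟨w, by simpa using hw⟩
  have hlist : ∀ (L : List (pr '' {t | adj d Y 1 t} × Bool)) (x : H),
      ∃ y, dX d Y x y ≤ L.length ∧ pr y = pr x * p (FreeGroup.mk L) := by
    intro L
    induction L with
    | nil =>
      intro x
      refine ⟨x, by simp [dX_self], ?_⟩
      have : (FreeGroup.mk [] : FreeGroup (pr '' {t | adj d Y 1 t})) = 1 := rfl
      rw [this, map_one, mul_one]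
    | cons a L ih =>
      intro x
      obtain ⟨⟨_, t, ht, rfl⟩, b⟩ := a
      have e : ∃ s, adj d Y 1 s ∧ pr s = p (FreeGroup.mk [(⟨pr t, t, ht, rfl⟩, b)]) := by
        cases b with
        | true =>
          refine ⟨t, ht, ?_⟩
          simp [p, FreeGroup.lift_mk]
        | false =>
          refine ⟨t⁻¹, ?_, by simp [p, FreeGroup.lift_mk]⟩
          have := S.adj_mul hd t⁻¹ (adj_symm hd ht)
          simpa using this
      obtain ⟨s, hs, hs'⟩ := e
      obtain ⟨y, hy, hy'⟩ := ih (x * s)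
      refine ⟨y, ?_, ?_⟩
      · have h1 := dX_tri (Y := Y) hd x (x * s) y
        have h2 := S.adj_mul hd x hs
        rw [mul_one] at h2
        have h3 := dX_le_one h2
        simp only [List.length_cons]
        omega
      · have e2 : FreeGroup.mk ((⟨pr t, t, ht, rfl⟩, b) :: L) =
            FreeGroup.mk [((⟨pr t, t, ht, rfl⟩ : pr '' {t | adj d Y 1 t}), b)] *
              FreeGroup.mk L := by
          rw [FreeGroup.mul_mk]; rfl
        rw [hy', map_mul, hs', e2, map_mul, mul_assoc]
  have hlen : ∀ x y : H, wlen p ((pr x)⁻¹ * pr y) = dbar d Y r x y := by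
    intro x y
    apply le_antisymm
    · obtain ⟨n, hn, h⟩ := exists_dbar d Y r x y
      obtain ⟨w, hw, hw'⟩ := hword _ x (n * y) h
      have h1 := wlen_le_norm p w
      have h2 : pr n = 1 := by
        rw [← MonoidHom.mem_ker, hker]; exact hn
      rw [hw, map_mul, map_mul, h2, one_mul, map_inv] at h1
      omega
    · obtain ⟨w, hw, hw'⟩ := exists_norm_eq_wlen p hp ((pr x)⁻¹ * pr y)
      obtain ⟨y', h1, h2⟩ := hlist w.toWord x
      rw [FreeGroup.mk_toWord, hw, mul_inv_cancel_left] at h2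
      have h3 : y' * y⁻¹ ∈ rotG r := by
        rw [← hker, MonoidHom.mem_ker, map_mul, h2, map_inv, mul_inv_cancel]
      have h4 := dbar_le (d := d) (Y := Y) (x := x) (y := y) h3
      rw [inv_mul_cancel_right] at h4
      rw [← hw']
      exact h4.trans h1
  refine ⟨_, inferInstance, inferInstance, p, (δ' : ℝ), hp, Nat.cast_nonneg _, ?_⟩
  intro x y z w
  obtain ⟨x, rfl⟩ := hpr x
  obtain ⟨y, rfl⟩ := hpr y
  obtain ⟨z, rfl⟩ := hpr z
  obtain ⟨w, rfl⟩ := hpr w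
  simp only [hlen]
  have h0 : (0 : ℝ) ≤ δ' := Nat.cast_nonneg _
  rcases hyp x y z w with h | h
  · have h' : ((dbar d Y r x y : ℝ) + dbar d Y r z w) ≤ dbar d Y r x z + dbar d Y r y w + δ' := by
      exact_mod_cast h
    have := le_max_left ((dbar d Y r x z : ℝ) + dbar d Y r y w)
      ((dbar d Y r x w : ℝ) + dbar d Y r y z)
    linarith
  · have h' : ((dbar d Y r x y : ℝ) + dbar d Y r z w) ≤ dbar d Y r x w + dbar d Y r y z + δ' := by
      exact_mod_cast h
    have := le_max_right ((dbar d Y r x z : ℝ) + dbar d Y r y w)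
      ((dbar d Y r x w : ℝ) + dbar d Y r y z)
    linarith

/-- The quotient by the rotations is hyperbolic, provided the rotation lengths are large compared with
`θ`, by a factor depending only on the hyperbolicity and quasiconvexity constants. -/
theorem hyperbolic_quotient {H : Type} [Group H] {d : H → H → ℕ} {δ : ℕ} (hd : HypM d δ) (Q : ℕ) :
    ∃ K : ℕ, ∀ {C : Type} [MulAction H C] {Y : C → Set H} {r : C → H} {ℓ : C → ℕ} {θ : ℕ}
      (_ : Spin d (fun c => HypM.dproj d (Y c)) Y r ℓ θ) (_ : ∀ c, HypM.QC d Q (Y c))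
      (_ : ∀ c, K * θ ≤ ℓ c) {Hb : Type} [Group Hb] (pr : H →* Hb) (_ : Surjective pr)
      (_ : pr.ker = rotG r) (_ : (pr '' {t | adj d Y 1 t}).Finite), HyperbolicGroup Hb := by
  obtain ⟨K, hK⟩ := dX_rot.{0, 0} hd Q
  obtain ⟨δ', hδ'⟩ := dX_hyp.{0, 0} hd Q
  refine ⟨4 * K + 12, ?_⟩
  intro C _ Y r ℓ θ S hQ hℓ Hb _ pr hpr hker hfin
  refine hyperbolic_quotient_aux hd S (δ' := δ') (fun x y z w => ?_) pr hpr hker hfin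
  refine S.dbar_hyp hd (hK S hQ) (fun c => ?_) (hδ' Y hQ) x y z w
  have h1 := hℓ c
  have h2 := S.four_le
  have : (4 * K + 12) * θ = 4 * (K * θ) + 12 * θ := by ring
  omega

end Quotient

/-! ### Finite subgroups of the quotient -/

/-- The extra properties of a rotating family used to lift finite subgroups: if two points are further
than `ρ b` apart as seen from `b` then a rotation about `b` brings them closer, `ρ` is smaller than the
rotation length, and stabilizers consist of rotations. -/
structure Spin.Fine {H C : Type*} [Group H] [MulAction H C] (d : H → H → ℕ) (D : C → H → H → ℕ)
    (Y : C → Set H) (r : C → H) (ℓ : C → ℕ) (θ : ℕ) (ρ : C → ℕ) : Prop where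
  closer : ∀ (b : C) (y y' : H), ρ b < D b y y' → ∃ k : ℤ, d y (r b ^ k * y') < d y y'
  rho_smul : ∀ (g : H) (c : C), ρ (g • c) = ρ c
  rho_le : ∀ c, ρ c + 60 * θ ≤ ℓ c
  big : ∀ c, 200 * θ ≤ ℓ c
  proj : ∀ (c : C) (x : H), ∃ y ∈ Y c, D c x y ≤ θ
  stab : ∀ (g : H) (c : C), g • c = c → g ∈ Spin.rotG r

namespace Spin

variable {H C : Type*} [Group H] [MulAction H C] {d : H → H → ℕ} {D : C → H → H → ℕ}
  {Y : C → Set H} {r : C → H} {ℓ : C → ℕ} {θ : ℕ} {ρ : C → ℕ} {δ : ℕ}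

/-- `y` cannot be brought substantially closer to `Y c` by rotating about other centres. -/
def Red (D : C → H → H → ℕ) (Y : C → Set H) (ρ : C → ℕ) (s : ℕ) (c : C) (y : H) : Prop :=
  ∀ b, b ≠ c → ∀ z ∈ Y c, D b z y ≤ ρ b + s

theorem exists_red (S : Spin d D Y r ℓ θ) (F : Fine d D Y r ℓ θ ρ) (c : C) (y : H) :
    ∃ n ∈ rotG r, Red D Y ρ θ c (n * y) := by
  obtain ⟨z₀, hz₀⟩ := S.nonempty c
  obtain ⟨⟨n, z⟩, ⟨hn, hz⟩, hm⟩ := WellFounded.has_min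
    (measure (fun p : H × H => d p.2 (p.1 * y))).wf {p | p.1 ∈ rotG r ∧ p.2 ∈ Y c}
    ⟨(1, z₀), Subgroup.one_mem _, hz₀⟩
  refine ⟨n, hn, fun b hb w hw => ?_⟩
  have h1 : D b z (n * y) ≤ ρ b := by
    by_contra hcon
    obtain ⟨k, hk⟩ := F.closer b z (n * y) (not_le.mp hcon)
    refine hm (r b ^ k * n, z) ⟨Subgroup.mul_mem _ (Subgroup.zpow_mem _ (rot_mem b) k) hn, hz⟩ ?_
    change d z (r b ^ k * n * y) < d z (n * y)
    rwa [mul_assoc]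
  have h2 := S.tri b w z (n * y)
  have h3 := S.small c b (Ne.symm hb) w hw z hz
  omega

theorem Red.mono {s s' : ℕ} (hs : s ≤ s') {c : C} {y : H} (h : Red D Y ρ s c y) :
    Red D Y ρ s' c y := fun b hb z hz => (h b hb z hz).trans (by omega)

theorem Red.smul (S : Spin d D Y r ℓ θ) (F : Fine d D Y r ℓ θ ρ) {s : ℕ} {c : C} {y : H}
    (h : Red D Y ρ s c y) (g : H) : Red D Y ρ s (g • c) (g * y) := by
  intro b hb z hz
  have h1 := h (g⁻¹ • b) (fun e => hb (by rw [← e, smul_inv_smul])) (g⁻¹ * z) (by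
    have := S.mem_smul g⁻¹ _ _ hz
    rwa [inv_smul_smul] at this)
  have h2 := S.equiv g (g⁻¹ • b) (g⁻¹ * z) y
  rw [smul_inv_smul, mul_inv_cancel_left] at h2
  rw [h2, ← F.rho_smul g⁻¹ b]
  exact h1

theorem Red.rot (S : Spin d D Y r ℓ θ) (F : Fine d D Y r ℓ θ ρ) {s : ℕ} {c : C} {y : H}
    (h : Red D Y ρ s c y) (k : ℤ) : Red D Y ρ s c (r c ^ k * y) := by
  have := h.smul S F (r c ^ k)
  rwa [S.fix_zpow] at this

/-- Two reduced translates of the same point agree, as seen from `c`, up to a rotation about `c`. -/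
theorem red_unique (hd : HypM d δ) (S : Spin d D Y r ℓ θ) (F : Fine d D Y r ℓ θ ρ) {c : C} {y n : H}
    (hn : n ∈ rotG r) (hy : Red D Y ρ (4 * θ) c y) :
    Red D Y ρ (4 * θ) c (n * y) → ∃ k : ℤ, D c y (r c ^ k * (n * y)) ≤ 2 * θ := by
  refine S.green_induction hd y
    (P := fun n => Red D Y ρ (4 * θ) c (n * y) → ∃ k : ℤ, D c y (r c ^ k * (n * y)) ≤ 2 * θ)
    ?_ ?_ hn
  · intro _
    refine ⟨0, ?_⟩
    simp [S.self]
  · intro b k m hm ih hbig hred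
    by_cases hbc : b = c
    · subst hbc
      have h1 := hred.rot S F (-k)
      rw [mul_assoc, zpow_neg, inv_mul_cancel_left] at h1
      obtain ⟨j, hj⟩ := ih h1
      refine ⟨j - k, ?_⟩
      rw [mul_assoc, ← mul_assoc (r b ^ (j - k)), ← zpow_add, sub_add_cancel]
      exact hj
    · refine ⟨0, ?_⟩
      rw [zpow_zero, one_mul]
      obtain ⟨yc, hyc⟩ := S.nonempty c
      obtain ⟨yb, hyb⟩ := S.nonempty b
      have h1 := hy b hbc yc hyc
      have h2 := hred b hbc yc hyc
      have h3 := S.tri b y yc (r b ^ k * m * y)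
      have h4 := S.symm b y yc
      have h5 := S.symm b yc (r b ^ k * m * y)
      have h6 := F.rho_le b
      have h7 := S.four_le
      have h8 := S.behr b c hbc yb hyb yc hyc y
      have h9 := S.behr b c hbc yb hyb yc hyc (r b ^ k * m * y)
      have h10 := S.tri c y yb (r b ^ k * m * y)
      have h11 := S.symm c yb (r b ^ k * m * y)
      omega

/-- The angle at the image of `c` in the quotient between the images of `x` and `y` is at most `t`. -/
def Ang (D : C → H → H → ℕ) (Y : C → Set H) (r : C → H) (θ : ℕ) (ρ : C → ℕ) (c : C) (x y : H)
    (t : ℕ) : Prop :=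
  ∃ n ∈ rotG r, ∃ m ∈ rotG r, Red D Y ρ (4 * θ) c (n * x) ∧ Red D Y ρ (4 * θ) c (m * y) ∧
    D c (n * x) (m * y) ≤ t

theorem Ang.mono {c : C} {x y : H} {t t' : ℕ} (ht : t ≤ t') (h : Ang D Y r θ ρ c x y t) :
    Ang D Y r θ ρ c x y t' := by
  obtain ⟨n, hn, m, hm, h1, h2, h3⟩ := h
  exact ⟨n, hn, m, hm, h1, h2, h3.trans ht⟩

theorem Ang.symm (S : Spin d D Y r ℓ θ) {c : C} {x y : H} {t : ℕ} (h : Ang D Y r θ ρ c x y t) :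
    Ang D Y r θ ρ c y x t := by
  obtain ⟨n, hn, m, hm, h1, h2, h3⟩ := h
  exact ⟨m, hm, n, hn, h2, h1, by rwa [S.symm]⟩

theorem Ang.tri (hd : HypM d δ) (S : Spin d D Y r ℓ θ) (F : Fine d D Y r ℓ θ ρ) {c : C}
    {x y z : H} {s t : ℕ} (h : Ang D Y r θ ρ c x y s) (h' : Ang D Y r θ ρ c y z t) :
    Ang D Y r θ ρ c x z (s + t + 2 * θ) := by
  obtain ⟨n, hn, m, hm, h1, h2, h3⟩ := h
  obtain ⟨m', hm', p, hp, h4, h5, h6⟩ := h'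
  have e : m' * y = m' * m⁻¹ * (m * y) := by group
  rw [e] at h4
  obtain ⟨k, hk⟩ := red_unique hd S F (Subgroup.mul_mem _ hm' (Subgroup.inv_mem _ hm)) h2 h4
  rw [← e] at hk
  refine ⟨n, hn, r c ^ k * p, Subgroup.mul_mem _ (Subgroup.zpow_mem _ (rot_mem c) k) hp, h1, ?_, ?_⟩
  · rw [mul_assoc]; exact h5.rot S F k
  · rw [mul_assoc]
    have := S.tri c (n * x) (m * y) (r c ^ k * (p * z))
    have := S.tri c (m * y) (r c ^ k * (m' * y)) (r c ^ k * (p * z))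
    have := S.equiv_rot c k (m' * y) (p * z)
    omega

theorem Ang.smul (S : Spin d D Y r ℓ θ) (F : Fine d D Y r ℓ θ ρ) {c : C} {x y : H} {t : ℕ}
    (h : Ang D Y r θ ρ c x y t) (g : H) : Ang D Y r θ ρ (g • c) (g * x) (g * y) t := by
  obtain ⟨n, hn, m, hm, h1, h2, h3⟩ := h
  have hN := rotG_normal S
  refine ⟨g * n * g⁻¹, hN.conj_mem n hn g, g * m * g⁻¹, hN.conj_mem m hm g, ?_, ?_, ?_⟩
  · have := h1.smul S F g
    convert this using 1; group
  · have := h2.smul S F g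
    convert this using 1; group
  · have := S.equiv g c (n * x) (m * y)
    rw [← this] at h3
    convert h3 using 2 <;> group

theorem Ang.mul_left {c : C} {x y : H} {t : ℕ}
    (h : Ang D Y r θ ρ c x y t) {u : H} (hu : u ∈ rotG r) : Ang D Y r θ ρ c (u * x) y t := by
  obtain ⟨n, hn, m, hm, h1, h2, h3⟩ := h
  refine ⟨n * u⁻¹, Subgroup.mul_mem _ hn (Subgroup.inv_mem _ hu), m, hm, ?_, h2, ?_⟩
  · convert h1 using 1; group
  · convert h3 using 2; group

theorem Ang.mul_right (S : Spin d D Y r ℓ θ) {c : C} {x y : H} {t : ℕ}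
    (h : Ang D Y r θ ρ c x y t) {u : H} (hu : u ∈ rotG r) : Ang D Y r θ ρ c x (u * y) t :=
  ((h.symm S).mul_left hu).symm S

/-- Centres with the same image in the quotient. -/
def Sim (r : C → H) (b c : C) : Prop := ∃ n ∈ rotG r, n • b = c

theorem Sim.symm {b c : C} (h : Sim r b c) : Sim r c b := by
  obtain ⟨n, hn, rfl⟩ := h
  exact ⟨n⁻¹, Subgroup.inv_mem _ hn, by simp⟩

theorem Sim.trans {a b c : C} (h : Sim r a b) (h' : Sim r b c) : Sim r a c := by
  obtain ⟨n, hn, rfl⟩ := h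
  obtain ⟨m, hm, rfl⟩ := h'
  exact ⟨m * n, Subgroup.mul_mem _ hm hn, by rw [mul_smul]⟩

theorem Sim.smul (S : Spin d D Y r ℓ θ) {b c : C} (h : Sim r b c) (g : H) :
    Sim r (g • b) (g • c) := by
  obtain ⟨n, hn, rfl⟩ := h
  refine ⟨g * n * g⁻¹, (rotG_normal S).conj_mem n hn g, ?_⟩
  simp [mul_smul]

theorem sim_smul_iff (S : Spin d D Y r ℓ θ) {b c : C} (g : H) :
    Sim r (g • b) (g • c) ↔ Sim r b c := by
  refine ⟨fun h => ?_, fun h => h.smul S g⟩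
  have := h.smul S g⁻¹
  rwa [inv_smul_smul, inv_smul_smul] at this

theorem ang_close (hd : HypM d δ) (S : Spin d D Y r ℓ θ) (F : Fine d D Y r ℓ θ ρ) (c : C) {x y : H}
    (h : d x y ≤ 1) : Ang D Y r θ ρ c x y 2 := by
  obtain ⟨n, hn, h1⟩ := exists_red S F c x
  have h4 := S.four_le
  refine ⟨n, hn, n, hn, h1.mono (by omega), ?_, ?_⟩
  · intro b hb z hz
    have := h1 b hb z hz
    have := S.tri b z (n * x) (n * y)
    have := S.lip b (n * x) (n * y)
    rw [hd.inv] at this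
    omega
  · have := S.lip c (n * x) (n * y)
    rw [hd.inv] at this
    omega

/-- Rotating `y'` about `b` so as to be nearest to `y` makes the angle at `b` at most `ρ b`. -/
theorem exists_rot_le (F : Fine d D Y r ℓ θ ρ) (b : C) (y y' : H) :
    ∃ k : ℤ, D b y (r b ^ k * y') ≤ ρ b := by
  obtain ⟨k, -, hm⟩ := WellFounded.has_min (measure (fun k : ℤ => d y (r b ^ k * y'))).wf
    Set.univ ⟨0, trivial⟩
  refine ⟨k, ?_⟩
  by_contra hcon
  obtain ⟨j, hj⟩ := F.closer b y _ (not_le.mp hcon)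
  refine hm (j + k) trivial ?_
  change d y (r b ^ (j + k) * y') < d y (r b ^ k * y')
  rwa [zpow_add, mul_assoc]

theorem ang_small (S : Spin d D Y r ℓ θ) (F : Fine d D Y r ℓ θ ρ) {b c : C}
    (hbc : ¬ Sim r b c) {x y : H} (hx : x ∈ Y b) (hy : y ∈ Y b) : Ang D Y r θ ρ c x y θ := by
  obtain ⟨n, hn, h1⟩ := exists_red S F c x
  have hnb : n • b ≠ c := fun e => hbc ⟨n, hn, e⟩
  obtain ⟨zc, hzc⟩ := S.nonempty c
  obtain ⟨k, hk⟩ := exists_rot_le F (n • b) zc (n * y)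
  have hX := S.mem_smul n b x hx
  have hY := rot_mem_Y S (S.mem_smul n b y hy) k
  refine ⟨n, hn, r (n • b) ^ k * n, Subgroup.mul_mem _ (Subgroup.zpow_mem _ (rot_mem _) k) hn,
    h1.mono (by omega), ?_, ?_⟩
  · intro a ha z hz
    rw [mul_assoc]
    by_cases hab : a = n • b
    · subst hab
      have := S.tri (n • b) z zc (r (n • b) ^ k * (n * y))
      have := S.small c (n • b) (Ne.symm ha) z hz zc hzc
      omega
    · have := S.tri a z (n * x) (r (n • b) ^ k * (n * y))
      have := S.small (n • b) a (Ne.symm hab) _ hX _ hY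
      have := h1 a ha z hz
      omega
  · rw [mul_assoc]
    exact S.small _ _ hnb _ hX _ hY

/-- The angle at `c` between `y` and some point of `Y b` is at most `t`. -/
def AngS (D : C → H → H → ℕ) (Y : C → Set H) (r : C → H) (θ : ℕ) (ρ : C → ℕ) (c : C) (y : H)
    (b : C) (t : ℕ) : Prop := ∃ z ∈ Y b, Ang D Y r θ ρ c y z t

/-- The angle at `c` between some points of `Y a` and `Y b` is at most `t`. -/
def AngSS (D : C → H → H → ℕ) (Y : C → Set H) (r : C → H) (θ : ℕ) (ρ : C → ℕ) (c : C) (a b : C)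
    (t : ℕ) : Prop := ∃ y ∈ Y a, AngS D Y r θ ρ c y b t

/-- Behrstock's inequality in the quotient. -/
theorem ang_behr (S : Spin d D Y r ℓ θ) (F : Fine d D Y r ℓ θ ρ) {b c : C}
    (hbc : ¬ Sim r b c) (y : H) :
    AngS D Y r θ ρ c y b (2 * θ) ∨ AngS D Y r θ ρ b y c θ := by
  obtain ⟨n, hn, h1⟩ := exists_red S F c y
  obtain ⟨zb, hzb⟩ := S.nonempty b
  obtain ⟨m, hm, h2⟩ := exists_red S F c zb
  have hw := S.mem_smul m b zb hzb
  obtain ⟨k, hk⟩ := exists_rot_le F c (m * zb) (n * y)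
  have h3 := h1.rot S F k
  by_cases hcase : D c (r c ^ k * (n * y)) (m * zb) ≤ 2 * θ
  · left
    refine ⟨zb, hzb, r c ^ k * n, Subgroup.mul_mem _ (Subgroup.zpow_mem _ (rot_mem _) k) hn, m, hm,
      ?_, h2.mono (by omega), ?_⟩
    · rw [mul_assoc]; exact h3.mono (by omega)
    · rw [mul_assoc]; exact hcase
  · right
    have hne : c ≠ m • b := fun e => hbc ⟨m, hm, e.symm⟩
    obtain ⟨zc, hzc, hzc'⟩ := F.proj c (m * zb)
    set y1 := r c ^ k * (n * y) with hy1
    set w := m * zb with hwdef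
    -- the angle at `m • b` between `y1` and `zc` is small, and both are reduced for `m • b`
    have key : Ang D Y r θ ρ (m • b) y1 zc θ := by
      refine ⟨1, Subgroup.one_mem _, 1, Subgroup.one_mem _, ?_, ?_, ?_⟩
      · rw [one_mul]
        intro a ha z hz
        have e1 := S.small (m • b) a (Ne.symm ha) z hz w hw
        have e2 := S.tri a z w y1
        by_cases hac : a = c
        · subst hac
          omega
        · obtain ⟨za, hza⟩ := S.nonempty a
          have e3 := S.behr a c hac za hza zc hzc y1
          have e4 := S.behr a c hac za hza zc hzc w
          have e5 := S.tri c y1 za w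
          have e6 := S.symm c za w
          have e7 := S.tri a w zc y1
          have e8 := h2 a hac zc hzc
          have e9 := h3 a hac zc hzc
          have e10 := S.symm a zc w
          have e11 := S.symm a y1 zc
          omega
      · rw [one_mul]
        intro a ha z hz
        have e1 := S.small (m • b) a (Ne.symm ha) z hz w hw
        have e2 := S.tri a z w zc
        by_cases hac : a = c
        · subst hac
          omega
        · have e8 := h2 a hac zc hzc
          have e10 := S.symm a zc w
          omega
      · rw [one_mul, one_mul]
        have e1 := S.behr (m • b) c (Ne.symm hne) w hw zc hzc y1
        omega
    have h5 := key.smul S F m⁻¹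
    rw [inv_smul_smul] at h5
    have hN := rotG_normal S
    refine ⟨zc, hzc, ?_⟩
    have h6 := h5.mul_left hm
    rw [mul_inv_cancel_left] at h6
    have h7 := h6.mul_right S hm
    rw [mul_inv_cancel_left] at h7
    have h8 := h7.mul_left (u := (r c ^ k * n)⁻¹)
      (Subgroup.inv_mem _ (Subgroup.mul_mem _ (Subgroup.zpow_mem _ (rot_mem _) k) hn))
    convert h8 using 1
    rw [hy1]; group

theorem AngS.mono {c b : C} {y : H} {t t' : ℕ} (ht : t ≤ t') (h : AngS D Y r θ ρ c y b t) :
    AngS D Y r θ ρ c y b t' := by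
  obtain ⟨z, hz, h⟩ := h
  exact ⟨z, hz, h.mono ht⟩

theorem AngSS.symm (S : Spin d D Y r ℓ θ) {c a b : C} {t : ℕ} (h : AngSS D Y r θ ρ c a b t) :
    AngSS D Y r θ ρ c b a t := by
  obtain ⟨y, hy, z, hz, h⟩ := h
  exact ⟨z, hz, y, hy, h.symm S⟩

theorem AngSS.smul (S : Spin d D Y r ℓ θ) (F : Fine d D Y r ℓ θ ρ) {c a b : C} {t : ℕ}
    (h : AngSS D Y r θ ρ c a b t) (g : H) : AngSS D Y r θ ρ (g • c) (g • a) (g • b) t := by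
  obtain ⟨y, hy, z, hz, h⟩ := h
  exact ⟨_, S.mem_smul g _ _ hy, _, S.mem_smul g _ _ hz, h.smul S F g⟩

theorem angSS_smul_iff (S : Spin d D Y r ℓ θ) (F : Fine d D Y r ℓ θ ρ) {c a b : C} {t : ℕ}
    (g : H) : AngSS D Y r θ ρ (g • c) (g • a) (g • b) t ↔ AngSS D Y r θ ρ c a b t := by
  refine ⟨fun h => ?_, fun h => h.smul S F g⟩
  have := h.smul S F g⁻¹
  simpa using this

/-- If the angles at `c` between `Y a`, `Y u` and between `Y u`, `Y b` are small, so is the one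
between `Y a` and `Y b`. -/
theorem AngSS.tri (hd : HypM d δ) (S : Spin d D Y r ℓ θ) (F : Fine d D Y r ℓ θ ρ) {c a u b : C}
    {s t : ℕ} (hu : ¬ Sim r u c) (h : AngSS D Y r θ ρ c a u s) (h' : AngSS D Y r θ ρ c u b t) :
    AngSS D Y r θ ρ c a b (s + t + 5 * θ) := by
  obtain ⟨y, hy, z, hz, h1⟩ := h
  obtain ⟨z', hz', x, hx, h2⟩ := h'
  refine ⟨y, hy, x, hx, ?_⟩
  have h3 := ang_small S F hu hz hz'
  exact ((h1.tri hd S F h3).tri hd S F h2).mono (by omega)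

/-- A sequence of centres making a large angle at each inner term progresses by at least one unit of
distance at each step. -/
theorem chain_length (hd : HypM d δ) (S : Spin d D Y r ℓ θ) (F : Fine d D Y r ℓ θ ρ)
    {e : ℕ → C} {k M : ℕ} (he : ∀ i ≤ k, ¬ Sim r (e i) (e (i + 1)))
    (hA : ∀ i < k, ¬ AngSS D Y r θ ρ (e (i + 1)) (e i) (e (i + 2)) (9 * θ))
    {p : ℕ → H} (hp : ∀ j, d (p j) (p (j + 1)) ≤ 1) (h0 : p 0 ∈ Y (e 0)) {n : H}
    (hn : n ∈ rotG r) {y : H} (hy : y ∈ Y (e (k + 1))) (hM : p M = n * y) : k ≤ M := by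
  have h4 := S.four_le
  -- a point to the left of `e (i + 1)` is to the left of `e (i + 2)`
  have next : ∀ i < k, ∀ x, AngS D Y r θ ρ (e (i + 1)) x (e i) (5 * θ) →
      AngS D Y r θ ρ (e (i + 2)) x (e (i + 1)) θ := by
    intro i hi x hx
    rcases ang_behr S F (b := e (i + 2)) (c := e (i + 1))
      (fun h => he (i + 1) (by omega) h.symm) x with h | h
    · exfalso
      obtain ⟨z, hz, h1⟩ := hx
      obtain ⟨w, hw, h2⟩ := h
      exact hA i hi ⟨z, hz, w, hw, ((h1.symm S).tri hd S F h2).mono (by omega)⟩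
    · exact h
  have main : ∀ j i, j ≤ i → i ≤ k → AngS D Y r θ ρ (e (i + 1)) (p j) (e i) θ := by
    intro j
    induction j with
    | zero =>
      intro i _ hi
      induction i with
      | zero =>
        have h1 := ang_small S F (he 0 (by omega)) h0 h0
        exact ⟨p 0, h0, h1⟩
      | succ i ih => exact next i (by omega) _ ((ih (by omega) (by omega)).mono (by omega))
    | succ j ih =>
      intro i hji hi
      obtain ⟨i, rfl⟩ : ∃ i', i = i' + 1 := ⟨i - 1, by omega⟩
      obtain ⟨z, hz, h1⟩ := ih i (by omega) (by omega)
      have h2 := ang_close hd S F (e (i + 1)) (hp j)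
      exact next i (by omega) _ ⟨z, hz, ((h2.symm S).tri hd S F h1).mono (by omega)⟩
  by_contra hcon
  obtain ⟨k, rfl⟩ : ∃ k', k = k' + 1 := ⟨k - 1, by omega⟩
  obtain ⟨z, hz, h1⟩ := main M k (by omega) (by omega)
  rw [hM] at h1
  have h2 := h1.mul_left (Subgroup.inv_mem _ hn)
  rw [inv_mul_cancel_left] at h2
  exact hA k (by omega) ⟨z, hz, y, hy, (h2.symm S).mono (by omega)⟩

end Spin

namespace Spin

variable {H C : Type*} [Group H] [MulAction H C] {d : H → H → ℕ} {D : C → H → H → ℕ}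
  {Y : C → Set H} {r : C → H} {ℓ : C → ℕ} {θ : ℕ} {ρ : C → ℕ} {δ : ℕ}

/-- There is a path with unit steps between any two points. -/
theorem exists_path (hd : HypM d δ) (x y : H) :
    ∃ p : ℕ → H, p 0 = x ∧ p (d x y) = y ∧ ∀ j, d (p j) (p (j + 1)) ≤ 1 := by
  generalize hm : d x y = m
  induction m generalizing y with
  | zero =>
    have := hd.eq_of hm
    subst this
    exact ⟨fun _ => x, rfl, rfl, fun j => by simp [hd.self]⟩
  | succ m ih =>
    obtain ⟨z, h1, h2⟩ := hd.geod x y m (by omega)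
    obtain ⟨p, h3, h4, h5⟩ := ih z h1
    refine ⟨fun j => if j ≤ m then p j else y, by simp [h3], by simp, fun j => ?_⟩
    rcases lt_trichotomy j m with h | h | h
    · simp only [h.le, show j + 1 ≤ m by omega, if_true]
      exact h5 j
    · subst h
      simp only [le_refl, if_true, show ¬ (j + 1 ≤ j) by omega, if_false, h4]
      omega
    · simp only [show ¬ (j ≤ m) by omega, show ¬ (j + 1 ≤ m) by omega, if_false, hd.self]
      omega

theorem not_sim_smul (F : Fine d D Y r ℓ θ ρ) {c : C} {f : H} (hf : f ∉ rotG r) :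
    ¬ Sim r (f • c) c := by
  rintro ⟨n, hn, h⟩
  apply hf
  have := F.stab (n * f) c (by rw [mul_smul, h])
  exact (Subgroup.mul_mem_cancel_left _ hn).mp this

/-- If `E` is a subgroup containing the rotations with finite index, then some centre sees no large
angle at another centre between two of its `E`-translates. -/
theorem exists_centre (hd : HypM d δ) (S : Spin d D Y r ℓ θ) (F : Fine d D Y r ℓ θ ρ)
    (c₀ : C) (E : Subgroup H) (T : Set H) (hT : T.Finite) (hTE : ∀ f ∈ E, ∃ n ∈ rotG r, ∃ t ∈ T, f = n * t)
    {f₀ : H} (hf₀ : f₀ ∈ E) (hf₀' : f₀ ∉ rotG r) :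
    ∃ c : C, ∀ b, ∀ f ∈ E, ∀ g ∈ E, ¬ Sim r (f • c) b → ¬ Sim r (g • c) b →
      AngSS D Y r θ ρ b (f • c) (g • c) (23 * θ) := by
  by_contra hcon
  push Not at hcon
  have hN := rotG_normal S
  obtain ⟨z₀, hz₀⟩ := S.nonempty c₀
  -- chains of length `k` from the orbit of `c₀`, in an arbitrary direction `u`
  have key : ∀ k : ℕ, ∃ c : C, ∀ u, ¬ Sim r c u → ∃ e : ℕ → C, (∃ f ∈ E, e 0 = f • c₀) ∧
      e k = c ∧ e (k + 1) = u ∧ (∀ i ≤ k, ¬ Sim r (e i) (e (i + 1))) ∧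
      ∀ i < k, ¬ AngSS D Y r θ ρ (e (i + 1)) (e i) (e (i + 2)) (9 * θ) := by
    intro k
    induction k with
    | zero =>
      refine ⟨c₀, fun u hu => ⟨fun i => if i = 0 then c₀ else u, ⟨1, E.one_mem, by simp⟩, by simp,
        by simp, fun i hi => ?_, fun i hi => by omega⟩⟩
      obtain rfl : i = 0 := by omega
      simpa using hu
    | succ k ih =>
      obtain ⟨c, hc⟩ := ih
      obtain ⟨b, f, hf, g, hg, hfb, hgb, hA⟩ := hcon c
      have step : ∀ h ∈ E, ¬ Sim r (h • c) b → ∀ u, ¬ Sim r b u →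
          ¬ AngSS D Y r θ ρ b (h • c) u (9 * θ) → ∃ e : ℕ → C, (∃ f ∈ E, e 0 = f • c₀) ∧
          e (k + 1) = b ∧ e (k + 1 + 1) = u ∧ (∀ i ≤ k + 1, ¬ Sim r (e i) (e (i + 1))) ∧
          ∀ i < k + 1, ¬ AngSS D Y r θ ρ (e (i + 1)) (e i) (e (i + 2)) (9 * θ) := by
        intro h hh hhb u hu hAu
        obtain ⟨e, ⟨f', hf', he0⟩, hek, hek1, hs, hang⟩ := hc (h⁻¹ • b) (fun hsim => hhb (by
          have := hsim.smul S h
          rwa [smul_inv_smul] at this))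
        refine ⟨fun i => if i ≤ k + 1 then h • e i else u, ⟨h * f', E.mul_mem hh hf', ?_⟩, ?_, ?_,
          ?_, ?_⟩
        · simp [he0, mul_smul]
        · simp [hek1]
        · simp
        · intro i hi
          rcases Nat.lt_or_ge i (k + 1) with h1 | h1
          · simp only [h1.le, if_true, show i + 1 ≤ k + 1 by omega, sim_smul_iff S]
            exact hs i (by omega)
          · obtain rfl : i = k + 1 := by omega
            simpa [hek1] using hu
        · intro i hi
          rcases Nat.lt_or_ge i k with h1 | h1
          · simp only [show i ≤ k + 1 by omega, if_true, show i + 1 ≤ k + 1 by omega,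
              show i + 2 ≤ k + 1 by omega, angSS_smul_iff S F]
            exact hang i h1
          · obtain rfl : i = k := by omega
            simpa [hek1, hek] using hAu
      refine ⟨b, fun u hu => ?_⟩
      by_cases h1 : AngSS D Y r θ ρ b (f • c) u (9 * θ)
      · refine step g hg hgb u hu fun h2 => hA ?_
        exact AngSS.tri hd S F (fun h => hu h.symm) h1 (h2.symm S)
          |> fun ⟨y, hy, z, hz, h⟩ => ⟨y, hy, z, hz, h.mono (by omega)⟩
      · exact step f hf hfb u hu h1
  -- the chains are bounded by the diameter of the orbit of `z₀`
  obtain ⟨M, hM⟩ : ∃ M, ∀ t ∈ T, ∀ t' ∈ T, d (t * z₀) (t' * z₀) ≤ M := by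
    have hfin := (hT.prod hT).image (fun p : H × H => d (p.1 * z₀) (p.2 * z₀))
    obtain ⟨M, hM⟩ := hfin.bddAbove
    exact ⟨M, fun t ht t' ht' => hM ⟨(t, t'), ⟨ht, ht'⟩, rfl⟩⟩
  obtain ⟨c, hc⟩ := key (M + 1)
  obtain ⟨g, hg, hgc⟩ : ∃ g ∈ E, ¬ Sim r c (g • c₀) := by
    by_contra h
    push Not at h
    have h1 := h 1 E.one_mem
    have h2 := h f₀ hf₀
    rw [one_smul] at h1
    exact not_sim_smul F hf₀' (h2.symm.trans h1)
  obtain ⟨e, ⟨f, hf, he0⟩, -, hek1, hs, hang⟩ := hc _ hgc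
  obtain ⟨n, hn, t, ht, rfl⟩ := hTE f hf
  obtain ⟨m, hm, t', ht', rfl⟩ := hTE g hg
  obtain ⟨p, hp0, hp1, hp⟩ := exists_path hd (n * (t * z₀)) (n * (t' * z₀))
  rw [hd.inv] at hp1
  have := chain_length hd S F hs hang hp (by
    rw [hp0, he0, ← mul_assoc]; exact S.mem_smul _ _ _ hz₀)
    (n := n * m⁻¹) (Subgroup.mul_mem _ hn (Subgroup.inv_mem _ hm))
    (y := m * t' * z₀) (by rw [hek1]; exact S.mem_smul _ _ _ hz₀)
    (M := d (t * z₀) (t' * z₀)) (by rw [hp1]; group)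
  have := hM t ht t' ht'
  omega

/-- Every finite subgroup of the quotient by the rotations lifts isomorphically. -/
theorem finite_lift (hd : HypM d δ) (S : Spin d D Y r ℓ θ) (F : Fine d D Y r ℓ θ ρ) (c₀ : C)
    {Hb : Type*} [Group Hb] (pr : H →* Hb) (hpr : Surjective pr) (hker : pr.ker = rotG r)
    (Fb : Subgroup Hb) [Finite Fb] : ∃ Fs : Subgroup H, Set.BijOn pr Fs Fb := by
  have hmem : ∀ x, x ∈ rotG r ↔ pr x = 1 := fun x => by rw [← hker, MonoidHom.mem_ker]
  have hN := rotG_normal S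
  have h4 := S.four_le
  by_cases htriv : ∀ f, pr f ∈ Fb → f ∈ rotG r
  · refine ⟨⊥, ?_, ?_, ?_⟩
    · rintro x hx
      obtain rfl : x = 1 := hx
      simp [Fb.one_mem]
    · intro x hx y hy _
      exact (show x = 1 from hx).trans (show y = 1 from hy).symm
    · intro y hy
      obtain ⟨x, rfl⟩ := hpr y
      exact ⟨1, rfl, by rw [(hmem x).mp (htriv x hy), map_one]⟩
  push Not at htriv
  obtain ⟨f₀, hf₀, hf₀'⟩ := htriv
  set E := Fb.comap pr with hE
  choose lift hlift using hpr
  obtain ⟨c, hc⟩ := exists_centre hd S F c₀ E (lift '' Fb) ((Set.toFinite _).image _) (by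
    intro f hf
    refine ⟨f * (lift (pr f))⁻¹, ?_, lift (pr f), ⟨pr f, hf, rfl⟩, by group⟩
    rw [hmem, map_mul, map_inv, hlift, mul_inv_cancel]) (f₀ := f₀) hf₀ hf₀'
  -- a point `y` of `Y c` in the direction of the translates of `c`
  obtain ⟨y, hy, hdir⟩ : ∃ y ∈ Y c, ∀ f ∈ E, f ∉ rotG r → AngS D Y r θ ρ c y (f • c) (29 * θ) := by
    obtain ⟨z₀, hz₀⟩ := S.nonempty (f₀ • c)
    obtain ⟨n, hn, h1⟩ := exists_red S F c z₀
    obtain ⟨y, hy, h2⟩ := F.proj c (n * z₀)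
    have h3 : Ang D Y r θ ρ c y z₀ θ := by
      refine ⟨1, Subgroup.one_mem _, n, hn, ?_, h1.mono (by omega), ?_⟩
      · rw [one_mul]
        intro b hb z hz
        have := S.small c b hb.symm z hz y hy
        omega
      · rw [one_mul, S.symm]; exact h2
    refine ⟨y, hy, fun f hf hf' => ?_⟩
    obtain ⟨z, hz, w, hw, h5⟩ := hc c f₀ hf₀ f hf (not_sim_smul F hf₀') (not_sim_smul F hf')
    have h6 := ang_small S F (not_sim_smul F hf₀') hz₀ hz
    exact ⟨w, hw, ((h3.tri hd S F h6).tri hd S F h5).mono (by omega)⟩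
  -- `G` is the set of lifts moving `y` by a small angle at each centre
  set G : Set H := {f | f ∈ E ∧ ∀ b, D b y (f * y) ≤ 36 * θ} with hG
  have hangc : ∀ f ∈ E, f ∉ rotG r → Ang D Y r θ ρ c y (f * y) (32 * θ) := by
    intro f hf hf'
    obtain ⟨w, hw, h1⟩ := hdir f hf hf'
    have h2 := ang_small S F (not_sim_smul F hf') hw (S.mem_smul f c y hy)
    exact (h1.tri hd S F h2).mono (by omega)
  have hangfc : ∀ f ∈ E, f ∉ rotG r → Ang D Y r θ ρ (f • c) y (f * y) (32 * θ) := by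
    intro f hf hf'
    have h1 := (hangc f⁻¹ (E.inv_mem hf) (fun h => hf' (inv_mem_iff.mp h))).smul S F f
    rw [mul_inv_cancel_left] at h1
    exact h1.symm S
  have hang : ∀ f ∈ E, f ∉ rotG r → ∀ b, Ang D Y r θ ρ b y (f * y) (32 * θ) := by
    intro f hf hf' b
    by_cases h1 : Sim r c b
    · obtain ⟨n, hn, rfl⟩ := h1
      have h2 := (hangc f hf hf').smul S F n
      have h3 := (h2.mul_left (Subgroup.inv_mem _ hn)).mul_right S (Subgroup.inv_mem _ hn)
      rwa [inv_mul_cancel_left, inv_mul_cancel_left] at h3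
    by_cases h1' : Sim r (f • c) b
    · obtain ⟨n, hn, rfl⟩ := h1'
      have h2 := (hangfc f hf hf').smul S F n
      have h3 := (h2.mul_left (Subgroup.inv_mem _ hn)).mul_right S (Subgroup.inv_mem _ hn)
      rwa [inv_mul_cancel_left, inv_mul_cancel_left] at h3
    obtain ⟨z, hz, w, hw, h2⟩ := hc b 1 E.one_mem f hf (by rwa [one_smul]) h1'
    rw [one_smul] at hz
    have h3 := ang_small S F h1 hy hz
    have h5 := ang_small S F h1' hw (S.mem_smul f c y hy)
    exact ((h3.tri hd S F h2).tri hd S F h5).mono (by omega)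
  have hex : ∀ f ∈ E, ∃ g ∈ G, pr g = pr f := by
    intro f hf
    by_cases hfN : f ∈ rotG r
    · refine ⟨1, ⟨E.one_mem, fun b => ?_⟩, by rw [(hmem f).mp hfN, map_one]⟩
      rw [one_mul, S.self]; omega
    obtain ⟨n, hn, hm⟩ := WellFounded.has_min (measure (fun n : H => d y (n * f * y))).wf
      (rotG r : Set H) ⟨1, Subgroup.one_mem _⟩
    have hnf : n * f ∈ E := by
      change pr (n * f) ∈ Fb
      rw [map_mul, (hmem n).mp hn, one_mul]
      exact hf
    have hnf' : n * f ∉ rotG r := fun h => hfN ((Subgroup.mul_mem_cancel_left _ hn).mp h)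
    have hrho : ∀ b, D b y (n * f * y) ≤ ρ b := by
      intro b
      by_contra hcon
      obtain ⟨k, hk⟩ := F.closer b _ _ (not_le.mp hcon)
      refine hm (r b ^ k * n) (Subgroup.mul_mem _ (Subgroup.zpow_mem _ (rot_mem b) k) hn) ?_
      change d y (r b ^ k * n * f * y) < d y (n * f * y)
      convert hk using 2
      group
    refine ⟨n * f, ⟨hnf, fun b => ?_⟩, by rw [map_mul, (hmem n).mp hn, one_mul]⟩
    by_contra hbig
    obtain ⟨zb, hzb⟩ := S.nonempty b
    -- both `y` and its translate are reduced for `b`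
    have hred : ∀ a, a ≠ b → ∀ z ∈ Y b, D a z y ≤ ρ a + 4 * θ ∧ D a z (n * f * y) ≤ ρ a + 4 * θ := by
      intro a ha z hz
      obtain ⟨za, hza⟩ := S.nonempty a
      have e1 := S.behr a b ha za hza z hz y
      have e2 := S.behr a b ha za hza z hz (n * f * y)
      have e3 := S.tri b y za (n * f * y)
      have e4 := S.symm b za (n * f * y)
      have e5 := hrho a
      have e6 := S.tri a y (n * f * y) z
      have e7 := S.tri a (n * f * y) y z
      have e8 := S.symm a (n * f * y) y
      have e9 := S.symm a y z
      have e10 := S.symm a (n * f * y) z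
      omega
    have hy1 : Red D Y ρ (4 * θ) b y := fun a ha z hz => (hred a ha z hz).1
    have hy2 : Red D Y ρ (4 * θ) b (n * f * y) := fun a ha z hz => (hred a ha z hz).2
    obtain ⟨u, hu, v, hv, h1, h2, h3⟩ := hang _ hnf hnf' b
    obtain ⟨i, hi⟩ := red_unique hd S F hu hy1 h1
    obtain ⟨j, hj⟩ := red_unique hd S F hv hy2 h2
    have e1 := S.equiv_rot b i (u * y) (v * (n * f * y))
    have e2 := S.tri b y (r b ^ i * (u * y)) (r b ^ i * (v * (n * f * y)))
    have e3 := S.equiv_rot b (i - j) (n * f * y) (r b ^ j * (v * (n * f * y)))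
    rw [← mul_assoc (r b ^ (i - j)) (r b ^ j), ← zpow_add, sub_add_cancel] at e3
    have e4 := S.tri b y (r b ^ i * (v * (n * f * y))) (r b ^ (i - j) * (n * f * y))
    have e5 := S.symm b (r b ^ (i - j) * (n * f * y)) (r b ^ i * (v * (n * f * y)))
    by_cases hij : i - j = 0
    · rw [hij, zpow_zero, one_mul] at e4 e5 e3
      omega
    · have e6 := S.spin b (n * f * y) (i - j) hij
      have e7 := S.tri b (n * f * y) y (r b ^ (i - j) * (n * f * y))
      have e8 := S.symm b (n * f * y) y
      have e9 := hrho b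
      have e10 := F.rho_le b
      omega
  have huniq : ∀ x, ∀ f g : H, pr f = pr g → (∀ b, D b (g * x) (f * x) ≤ 108 * θ) → f = g := by
    intro x f g hfg hD
    by_contra hne
    have h1 : f * g⁻¹ ∈ rotG r := by rw [hmem, map_mul, map_inv, hfg, mul_inv_cancel]
    obtain ⟨b, hb⟩ := exists_far hd S (g * x) h1 (fun h => hne (mul_inv_eq_one.mp h))
    have h2 := hD b
    have h3 := F.big b
    rw [mul_assoc, inv_mul_cancel_left] at hb
    omega
  have hinj : ∀ f ∈ G, ∀ g ∈ G, pr f = pr g → f = g := by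
    intro f hf g hg hfg
    refine huniq y f g hfg fun b => ?_
    have := S.tri b (g * y) y (f * y)
    have := S.symm b (g * y) y
    have := hf.2 b
    have := hg.2 b
    omega
  have hmul : ∀ f ∈ G, ∀ g ∈ G, f * g ∈ G := by
    intro f hf g hg
    obtain ⟨h, hh, he⟩ := hex (f * g) (E.mul_mem hf.1 hg.1)
    have : f * g = h := by
      refine huniq y _ _ he.symm fun b => ?_
      have e1 := S.tri b (h * y) y (f * g * y)
      have e2 := S.symm b (h * y) y
      have e3 := hh.2 b
      have e4 := S.tri b y (f * y) (f * g * y)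
      have e5 := hf.2 b
      have e6 := S.equiv f (f⁻¹ • b) y (g * y)
      rw [smul_inv_smul, ← mul_assoc] at e6
      have e7 := hg.2 (f⁻¹ • b)
      omega
    rwa [this]
  have hinv : ∀ f ∈ G, f⁻¹ ∈ G := by
    intro f hf
    refine ⟨E.inv_mem hf.1, fun b => ?_⟩
    have e6 := S.equiv f⁻¹ (f • b) (f * y) y
    rw [inv_smul_smul, inv_mul_cancel_left] at e6
    rw [e6, S.symm]
    exact hf.2 _
  have hone : (1 : H) ∈ G := ⟨E.one_mem, fun b => by rw [one_mul, S.self]; omega⟩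
  refine ⟨⟨⟨⟨G, fun {f g} hf hg => hmul f hf g hg⟩, hone⟩, fun {f} hf => hinv f hf⟩, ?_, ?_, ?_⟩
  · intro f hf
    exact hf.1
  · intro f hf g hg hfg
    exact hinj f hf g hg hfg
  · intro z hz
    obtain ⟨g, hg, h1⟩ := hex (lift z) (by change pr (lift z) ∈ Fb; rw [hlift]; exact hz)
    exact ⟨g, hg, by rw [h1, hlift]⟩

/-- A finite set on which distances are small compared with the rotation lengths embeds in the
quotient. -/
theorem injOn_of_small (hd : HypM d δ) (S : Spin d D Y r ℓ θ)
    {Hb : Type*} [Group Hb] (pr : H →* Hb) (hker : pr.ker = rotG r) {P : Set H} {R : ℕ}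
    (hP : ∀ x ∈ P, ∀ y ∈ P, d x y ≤ R) (hR : ∀ c, 2 * R + 8 * θ + 4 < ℓ c) : Set.InjOn pr P := by
  intro x hx y hy hxy
  by_contra hne
  have h1 : y * x⁻¹ ∈ rotG r := by
    rw [← hker, MonoidHom.mem_ker, map_mul, map_inv, hxy, mul_inv_cancel]
  obtain ⟨c, hc⟩ := exists_far hd S x h1 (fun h => hne (mul_inv_eq_one.mp h).symm)
  rw [inv_mul_cancel_right] at hc
  have := S.lip c x y
  have := hP x hx y hy
  have := hR c
  omega

end Spin

/-! ### Broken geodesics and loxodromic elements -/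

namespace HypM

variable {H : Type*} [Group H] {d : H → H → ℕ} {δ : ℕ}

/-- A bi-infinite sequence of points each of which is, up to an error `e`, between any earlier and any
later one. -/
def Line (d : H → H → ℕ) (p : ℤ → H) (e : ℕ) : Prop :=
  ∀ i j k, i ≤ j → j ≤ k → d (p i) (p j) + d (p j) (p k) ≤ d (p i) (p k) + e

theorem Line.mono {p : ℤ → H} {e e' : ℕ} (h : Line d p e) (he : e ≤ e') : Line d p e' :=
  fun i j k h1 h2 => (h i j k h1 h2).trans (by omega)

theorem Line.smul (hd : HypM d δ) {p : ℤ → H} {e : ℕ} (h : Line d p e) (g : H) :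
    Line d (fun i => g * p i) e := fun i j k h1 h2 => by
  simp only [hd.inv]
  exact h i j k h1 h2

theorem broken_step (hd : HypM d δ) {q : ℕ → H}
    (h1 : ∀ i, d (q i) (q (i + 1)) + (2 * δ + 1) ≤ d (q i) (q (i + 2)))
    (h2 : ∀ i, d (q (i + 1)) (q (i + 2)) + (2 * δ + 1) ≤ d (q i) (q (i + 2))) (n : ℕ) :
    d (q 0) (q n) + (δ + 1) ≤ d (q 0) (q (n + 1)) ∧
      d (q 0) (q (n + 1)) + d (q n) (q (n + 2)) ≤
        d (q 0) (q (n + 2)) + d (q n) (q (n + 1)) + δ := by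
  induction n with
  | zero =>
    have := h2 0
    have := hd.tri (q 0) (q 1) (q 2)
    have := hd.self (q 0)
    simp only [zero_add] at *
    omega
  | succ n ih =>
    have e1 := hd.hyp (q 0) (q (n + 1 + 1)) (q (n + 1)) (q (n + 1 + 2))
    have e2 := hd.symm (q (n + 1)) (q (n + 1 + 1))
    have e3 := h1 (n + 1)
    have e4 := h2 (n + 1)
    have e5 := h1 n
    simp only [show n + 1 + 1 = n + 2 by ring] at *
    omega

theorem line_step (hd : HypM d δ) {p : ℤ → H}
    (h1 : ∀ i, d (p i) (p (i + 1)) + (2 * δ + 1) ≤ d (p i) (p (i + 2)))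
    (h2 : ∀ i, d (p (i + 1)) (p (i + 2)) + (2 * δ + 1) ≤ d (p i) (p (i + 2))) {i j : ℤ}
    (hij : i ≤ j) : d (p i) (p j) + (δ + 1) ≤ d (p i) (p (j + 1)) ∧
      d (p i) (p (j + 1)) + d (p j) (p (j + 2)) ≤
        d (p i) (p (j + 2)) + d (p j) (p (j + 1)) + δ := by
  obtain ⟨n, rfl⟩ := Int.le.dest hij
  have := hd.broken_step (q := fun n => p (i + n)) (fun m => ?_) (fun m => ?_) n
  · simpa [add_assoc] using this
  · simpa [add_assoc] using h1 (i + m)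
  · simpa [add_assoc] using h2 (i + m)

theorem line_step' (hd : HypM d δ) {p : ℤ → H}
    (h1 : ∀ i, d (p i) (p (i + 1)) + (2 * δ + 1) ≤ d (p i) (p (i + 2)))
    (h2 : ∀ i, d (p (i + 1)) (p (i + 2)) + (2 * δ + 1) ≤ d (p i) (p (i + 2))) {j k : ℤ}
    (hjk : j < k) : d (p (j + 1)) (p k) + (δ + 1) ≤ d (p j) (p k) := by
  have := (hd.line_step (p := fun i => p (-i)) (fun i => ?_) (fun i => ?_)
    (show -k ≤ -(j + 1) by omega)).1
  · simp only [neg_neg, neg_add] at this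
    rw [show j + 1 + -1 = j by ring] at this
    rwa [hd.symm (p k), hd.symm (p k)] at this
  · have := h2 (-i - 2)
    rw [show -i - 2 + 1 = -(i + 1) by ring, show -i - 2 + 2 = -i by ring,
      show -i - 2 = -(i + 2) by ring] at this
    rwa [hd.symm (p (-(i + 1))), hd.symm (p (-(i + 2)))] at this
  · have := h1 (-i - 2)
    rw [show -i - 2 + 1 = -(i + 1) by ring, show -i - 2 + 2 = -i by ring,
      show -i - 2 = -(i + 2) by ring] at this
    rwa [hd.symm (p (-(i + 2))), hd.symm (p (-(i + 2)))] at this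

theorem line_edge (hd : HypM d δ) {p : ℤ → H}
    (h1 : ∀ i, d (p i) (p (i + 1)) + (2 * δ + 1) ≤ d (p i) (p (i + 2)))
    (h2 : ∀ i, d (p (i + 1)) (p (i + 2)) + (2 * δ + 1) ≤ d (p i) (p (i + 2))) {i j k : ℤ}
    (hij : i ≤ j) (hjk : j < k) :
    d (p i) (p (j + 1)) + d (p j) (p k) ≤ d (p i) (p k) + d (p j) (p (j + 1)) + δ := by
  have e1 := (hd.line_step h1 h2 hij).1
  have e2 := hd.line_step' h1 h2 hjk
  have e3 := hd.hyp (p i) (p (j + 1)) (p j) (p k)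
  have e4 := hd.symm (p (j + 1)) (p j)
  omega

/-- A broken geodesic whose segments are long compared with the backtracking at the corners is a
quasigeodesic line. -/
theorem line_of_junction (hd : HypM d δ) {p : ℤ → H} {A : ℕ}
    (hA : ∀ i, d (p i) (p (i + 1)) + d (p (i + 1)) (p (i + 2)) ≤ d (p i) (p (i + 2)) + A)
    (hL : ∀ i, A + 2 * δ + 1 ≤ d (p i) (p (i + 1))) :
    Line d p (A + 2 * δ) ∧ ∀ i j, i ≤ j →
      d (p i) (p j) + d (p j) (p (j + 1)) ≤ d (p i) (p (j + 1)) + (A + δ) := by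
  have h1 : ∀ i, d (p i) (p (i + 1)) + (2 * δ + 1) ≤ d (p i) (p (i + 2)) := fun i => by
    have := hA i; have := hL (i + 1)
    rw [add_assoc i 1 1, one_add_one_eq_two] at this
    omega
  have h2 : ∀ i, d (p (i + 1)) (p (i + 2)) + (2 * δ + 1) ≤ d (p i) (p (i + 2)) := fun i => by
    have := hA i; have := hL i
    omega
  have key : ∀ i j, i ≤ j →
      d (p i) (p j) + d (p j) (p (j + 1)) ≤ d (p i) (p (j + 1)) + (A + δ) := by
    intro i j hij
    rcases hij.eq_or_lt with rfl | hij
    · have := hd.self (p i); omega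
    · have e1 := (hd.line_step h1 h2 (i := i) (j := j - 1) (by omega)).2
      rw [show j - 1 + 1 = j by ring, show j - 1 + 2 = j + 1 by ring] at e1
      have e2 := hA (j - 1)
      rw [show j - 1 + 1 = j by ring, show j - 1 + 2 = j + 1 by ring] at e2
      omega
  refine ⟨fun i j k hij hjk => ?_, key⟩
  rcases hjk.eq_or_lt with rfl | hjk
  · have := hd.self (p j); omega
  · have := hd.line_edge h1 h2 hij hjk
    have := key i j hij
    omega

/-- A point almost between two terms of a line is almost between two consecutive ones. -/
theorem Line.near (hd : HypM d δ) {p : ℤ → H} {e₁ e : ℕ} (hp : Line d p e₁) {i k : ℤ} (hik : i < k)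
    {z : H} (hz : d (p i) z + d z (p k) ≤ d (p i) (p k) + e) :
    ∃ t, i ≤ t ∧ t < k ∧
      d (p t) z + d z (p (t + 1)) ≤ d (p t) (p (t + 1)) + (e₁ + 2 * e + 3 * δ) := by
  classical
  have hk : i + 1 + ((k - (i + 1)).toNat : ℤ) = k := by omega
  have hex : ∃ n : ℕ, d (p i) z + d z (p (i + 1 + n)) ≤ d (p i) (p (i + 1 + n)) + (e + δ) := by
    refine ⟨(k - (i + 1)).toNat, ?_⟩
    rw [hk]
    omega
  obtain ⟨n, hn, hmin, hle⟩ : ∃ n : ℕ,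
      d (p i) z + d z (p (i + 1 + n)) ≤ d (p i) (p (i + 1 + n)) + (e + δ) ∧
      (∀ m : ℕ, m < n → ¬ d (p i) z + d z (p (i + 1 + m)) ≤ d (p i) (p (i + 1 + m)) + (e + δ)) ∧
      n ≤ (k - (i + 1)).toNat :=
    ⟨Nat.find hex, Nat.find_spec hex, fun m hm => Nat.find_min hex hm,
      Nat.find_min' hex (by rw [hk]; omega)⟩
  rcases n with _ | n
  · refine ⟨i, le_refl _, hik, ?_⟩
    simp only [Nat.cast_zero, add_zero] at hn
    omega
  · have h1 := hmin n (by omega)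
    refine ⟨i + 1 + n, by omega, by omega, ?_⟩
    push_cast at hn
    rw [← add_assoc] at hn
    set q := p (i + 1 + n) with hq
    set q' := p (i + 1 + n + 1) with hq'
    have h2 := hd.almost_between q hz
    have h3 := hd.almost_between q hn
    have h4 := hp i (i + 1 + n) k (by omega) (by omega)
    rw [← hq] at h4
    have h5 := hd.symm z q
    have h6 := hd.tri z q q'
    have h7 := hd.tri (p i) z (p k)
    omega

/-- A loxodromic element: its powers form a line on which the distance grows at least linearly. -/
structure Lox (d : H → H → ℕ) (v : H) (κ : ℕ) : Prop where
  line : Line d (fun i => v ^ i) κ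
  lin : ∀ n : ℤ, n.natAbs ≤ d 1 (v ^ n) + κ

theorem lox_of_step (hd : HypM d δ) {v x : H}
    (h : d x (v * x) + (2 * δ + 1) ≤ d x (v * (v * x))) : ∃ κ, Lox d v κ := by
  set p : ℤ → H := fun i => v ^ i * x with hp
  have hinv : ∀ i j k : ℤ, d (v ^ (i + k) * x) (v ^ (j + k) * x) = d (v ^ i * x) (v ^ j * x) := by
    intro i j k
    rw [add_comm i, add_comm j, zpow_add, zpow_add, mul_assoc, mul_assoc, hd.inv]
  have e1 : ∀ i, d (p i) (p (i + 1)) = d x (v * x) := by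
    intro i
    have := hinv 0 1 i
    simp only [zero_add, zpow_zero, one_mul, zpow_one] at this
    rw [hp, ← this, add_comm 1 i]
  have e2 : ∀ i, d (p i) (p (i + 2)) = d x (v * (v * x)) := by
    intro i
    have := hinv 0 2 i
    rw [zero_add, zpow_zero, one_mul, zpow_two, mul_assoc v v x] at this
    rw [hp, ← this, add_comm 2 i]
  have h1 : ∀ i, d (p i) (p (i + 1)) + (2 * δ + 1) ≤ d (p i) (p (i + 2)) := fun i => by
    rw [e1, e2]; exact h
  have h2 : ∀ i, d (p (i + 1)) (p (i + 2)) + (2 * δ + 1) ≤ d (p i) (p (i + 2)) := fun i => by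
    have := e1 (i + 1)
    rw [add_assoc, one_add_one_eq_two] at this
    rw [this, e2]; exact h
  have hbase : ∀ i j : ℤ, d (v ^ i) (v ^ j) ≤ d (p i) (p j) + 2 * d 1 x ∧
      d (p i) (p j) ≤ d (v ^ i) (v ^ j) + 2 * d 1 x := by
    intro i j
    have a1 := hd.inv (v ^ i) 1 x
    have a2 := hd.inv (v ^ j) 1 x
    rw [mul_one] at a1 a2
    have a3 := hd.tri (v ^ i) (p i) (v ^ j)
    have a4 := hd.tri (p i) (p j) (v ^ j)
    have a5 := hd.tri (p i) (v ^ i) (p j)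
    have a6 := hd.tri (v ^ i) (v ^ j) (p j)
    have a7 := hd.symm (p i) (v ^ i)
    have a8 := hd.symm (p j) (v ^ j)
    simp only [hp] at *
    omega
  refine ⟨d x (v * x) + δ + 6 * d 1 x, fun i j k hij hjk => ?_, ?_⟩
  · have b1 := hbase i j
    have b2 := hbase j k
    have b3 := hbase i k
    rcases hjk.eq_or_lt with rfl | hjk
    · have := hd.self (v ^ j); simp only; omega
    · have := hd.line_edge h1 h2 hij hjk
      have := (hd.line_step h1 h2 hij).1
      have := e1 j
      simp only
      omega
  · have key : ∀ n : ℕ, n ≤ d (p 0) (p n) := by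
      intro n
      induction n with
      | zero => simp
      | succ n ih =>
        have := (hd.line_step h1 h2 (i := 0) (j := n) (by omega)).1
        push_cast
        omega
    intro n
    have h3 : d 1 (v ^ n) = d 1 (v ^ (n.natAbs : ℤ)) := by
      rcases Int.natAbs_eq n with h | h
      · rw [← h]
      · conv_lhs => rw [h]
        have := hd.inv (v ^ (n.natAbs : ℤ)) 1 (v ^ (-(n.natAbs : ℤ)))
        rw [mul_one, ← zpow_add, add_neg_cancel, zpow_zero] at this
        rw [← this, hd.symm]
    have h4 := (hbase 0 n.natAbs).2
    have h5 := key n.natAbs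
    rw [zpow_zero] at h4
    omega

/-- If `t` and `g * t` are not visibly loxodromic, then `g` moves the point at distance `s` on the way
from `1` to `t` by a bounded amount, unless `g` is visibly loxodromic. -/
theorem short_of_not_step (hd : HypM d δ) {g t p : H}
    (ht : d 1 (t * t) ≤ d 1 t + 2 * δ) (hgt : d 1 (g * t * (g * t)) ≤ d 1 (g * t) + 2 * δ)
    (hg : d p (g * (g * p)) ≤ d p (g * p) + 2 * δ)
    (hp : d 1 p + d p t = d 1 t) (hs : 2 * d 1 g + 4 * δ < d 1 p)
    (hT : 2 * d 1 p + 4 * d 1 g + 10 * δ < d 1 t) : d p (g * p) ≤ 9 * δ := by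
  have a1 : d t⁻¹ t = d 1 (t * t) := by rw [← hd.inv t, mul_inv_cancel]
  have a2 : d (t⁻¹ * g⁻¹) (g * t) = d 1 (g * t * (g * t)) := by
    rw [← hd.inv (g * t)]; congr 1; group
  have a3 : d t⁻¹ (t⁻¹ * g⁻¹) = d 1 g := by
    rw [← hd.inv (g * t)]
    rw [show g * t * t⁻¹ = g by group, show g * t * (t⁻¹ * g⁻¹) = 1 by group, hd.symm]
  have a4 : d 1 t⁻¹ = d 1 t := by rw [← hd.inv t, mul_one, mul_inv_cancel, hd.symm]
  have a5 : d g (g * t) = d 1 t := by have := hd.inv g 1 t; rwa [mul_one] at this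
  have a6 := hd.tri 1 g (g * t)
  have a7 := hd.tri t⁻¹ (t⁻¹ * g⁻¹) (g * t)
  -- `t` and `g * t` stay close for about half of the way
  have a8 : d t (g * t) ≤ d 1 t + 2 * d 1 g + 3 * δ := by
    have := hd.hyp 1 t⁻¹ t (g * t)
    omega
  have a9 : d g (g * p) = d 1 p := by have := hd.inv g 1 p; rwa [mul_one] at this
  have a10 : d (g * p) (g * t) = d p t := hd.inv g p t
  have a11 := hd.tri 1 g (g * p)
  have a12 := hd.tri g 1 (g * p)
  have a13 := hd.symm g 1
  have b1 : d 1 (g * p) + d (g * p) (g * t) ≤ d 1 (g * t) + δ := by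
    have := hd.almost_between (x := g) (y := g * t) (z := g * p) (e := 0) 1 (by omega)
    have := hd.symm (g * p) 1
    omega
  have b2 : d 1 (g * p) + d (g * p) t ≤ d 1 t + 2 * δ := by
    have := hd.almost_between t b1
    have := hd.tri 1 (g * p) t
    have := hd.symm t (g * p)
    omega
  have b3 := hd.hyp 1 t p (g * p)
  have b4 := hd.symm t p
  have b5 := hd.symm t (g * p)
  -- the displacements of `p` and `g * p` towards `t` agree
  have c1 : d g⁻¹ p = d 1 (g * p) := by rw [← hd.inv g, mul_inv_cancel]
  have c2 : d g⁻¹ (g * p) = d 1 (g * (g * p)) := by rw [← hd.inv g, mul_inv_cancel]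
  have c3 : d g⁻¹ 1 = d 1 g := by rw [← hd.inv g, mul_inv_cancel, mul_one]
  have c4 := hd.hyp g⁻¹ p (g * p) 1
  have c5 := hd.hyp g⁻¹ (g * p) p 1
  have c6 := hd.symm p 1
  have c7 := hd.symm (g * p) 1
  have c8 := hd.symm (g * p) p
  have c9 := hd.tri 1 p (g * (g * p))
  have c10 := hd.tri 1 (g * (g * p)) p
  have c11 := hd.symm (g * (g * p)) p
  omega

theorem ball_finite (hd : HypM d δ) (n : ℕ) : {x : H | d 1 x ≤ n}.Finite := hd.fin n

/-- An infinite subgroup contains a loxodromic element. -/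
theorem exists_lox (hd : HypM d δ) (G : Subgroup H) (hG : (G : Set H).Infinite) :
    ∃ v ∈ G, ∃ κ, Lox d v κ := by
  by_contra hcon
  push Not at hcon
  have hnl : ∀ g ∈ G, ∀ x, d x (g * (g * x)) ≤ d x (g * x) + 2 * δ := by
    intro g hg x
    by_contra h
    obtain ⟨κ, hκ⟩ := hd.lox_of_step (v := g) (x := x) (by omega)
    exact hcon g hg κ hκ
  have hball := hd.ball_finite (9 * δ)
  obtain ⟨S, hSG, hcard⟩ := hG.exists_subset_card_eq (hball.toFinset.card + 1)
  set R := S.sup (fun g => d 1 g) with hR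
  obtain ⟨t, htG, ht⟩ : ∃ t ∈ G, 2 * (2 * R + 4 * δ + 1) + 4 * R + 10 * δ < d 1 t := by
    by_contra h
    push Not at h
    exact hG ((hd.ball_finite _).subset h)
  obtain ⟨p, hp1, hp2⟩ := hd.geod 1 t (2 * R + 4 * δ + 1) (by omega)
  have hmove : ∀ g ∈ S, d p (g * p) ≤ 9 * δ := by
    intro g hg
    have hgG : g ∈ G := hSG hg
    have hgR : d 1 g ≤ R := Finset.le_sup (f := fun g => d 1 g) hg
    refine hd.short_of_not_step (t := t) ?_ ?_ (hnl g hgG p) (by omega) (by omega) (by omega)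
    · simpa using hnl t htG 1
    · simpa [mul_assoc] using hnl (g * t) (G.mul_mem hgG htG) 1
  have := Finset.card_le_card_of_injOn (s := S) (t := hball.toFinset) (fun g => p⁻¹ * (g * p))
    (fun g hg => by
      rw [Finset.mem_coe, Set.Finite.mem_toFinset]
      change d 1 (p⁻¹ * (g * p)) ≤ 9 * δ
      rw [← hd.inv p, mul_one, mul_inv_cancel_left]
      exact hmove g hg)
    (fun g _ g' _ h => by simpa using h)
  omega

end HypM

/-! ### Finite subgroups and virtually cyclic groups -/

/-- Finite subgroups have bounded order: the points minimising the largest distance to a finite subgroup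
form an invariant set of bounded diameter. -/
theorem HypM.card_le {H : Type*} [Group H] {d : H → H → ℕ} {δ : ℕ} (hd : HypM d δ) :
    ∃ M : ℕ, ∀ F : Subgroup H, Finite F → Nat.card F ≤ M := by
  classical
  refine ⟨(hd.fin (2 * δ + 1)).toFinset.card, fun F hF => ?_⟩
  have := Fintype.ofFinite F
  let rad : H → ℕ := fun c => Finset.univ.sup fun f : F => d c f
  have hle : ∀ c (f : F), d c f ≤ rad c := fun c f =>
    Finset.le_sup (f := fun f : F => d c f) (Finset.mem_univ f)
  obtain ⟨c, -, hc⟩ := WellFounded.has_min (measure rad).wf Set.univ ⟨1, trivial⟩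
  have hmin : ∀ x, rad c ≤ rad x := fun x => not_lt.mp (hc x trivial)
  have hmove : ∀ f : F, d c (f * c) ≤ 2 * δ + 1 := by
    intro f
    obtain ⟨m, h1, h2⟩ := hd.geod c (f * c) (d c (f * c) / 2) (by omega)
    have hR : rad c ≤ rad m := hmin m
    obtain ⟨g, -, hg⟩ := Finset.exists_mem_eq_sup Finset.univ ⟨1, Finset.mem_univ _⟩
      (fun f : F => d m f)
    have hg' : rad m = d m g := hg
    have h3 := hle c g
    have h4 := hle c (f⁻¹ * g)
    have h5 := hd.inv f c (f⁻¹ * g : F)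
    have h6 : (f : H) * ((f⁻¹ * g : F) : H) = g := by
      rw [← Subgroup.coe_mul, mul_inv_cancel_left]
    rw [h6] at h5
    have h7 := hd.hyp c (f * c) m g
    have h8 := hd.symm (f * c) m
    omega
  have := Finset.card_le_card_of_injOn (s := (Finset.univ : Finset F))
    (t := (hd.fin (2 * δ + 1)).toFinset) (fun f => c⁻¹ * (f * c))
    (fun f _ => by
      rw [Finset.mem_coe, Set.Finite.mem_toFinset]
      change d 1 (c⁻¹ * (f * c)) ≤ 2 * δ + 1
      rw [← hd.inv c, mul_one, mul_inv_cancel_left]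
      exact hmove f)
    (fun f _ g _ h => Subtype.ext (by simpa using h))
  rwa [Finset.card_univ, ← Nat.card_eq_fintype_card] at this

theorem pow_factorial_eq_one {K : Type*} [Group K] {M : ℕ} (F : Subgroup K) [Finite F]
    (hM : Nat.card F ≤ M) {x : K} (hx : x ∈ F) : x ^ M.factorial = 1 := by
  have h1 : (⟨x, hx⟩ : F) ^ Nat.card F = 1 := pow_card_eq_one'
  have h2 : x ^ Nat.card F = 1 := congrArg Subtype.val h1
  obtain ⟨c, hc⟩ := Nat.dvd_factorial (Nat.card_pos (α := F)) hM
  rw [hc, pow_mul, h2, one_pow]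

theorem commutatorSet_finite (L : Type*) [Group L] (Z : Subgroup L) (hZ : Z ≤ Subgroup.center L)
    [Z.FiniteIndex] : Finite (commutatorSet L) := by
  have hfi : (Subgroup.center L).FiniteIndex := Subgroup.finiteIndex_of_le hZ
  have hq : Finite (L ⧸ Subgroup.center L) := Subgroup.finite_quotient_of_finiteIndex
  -- the commutator of two elements depends only on their classes modulo the centre
  let f : (L ⧸ Subgroup.center L) × (L ⧸ Subgroup.center L) → L := fun p =>
    p.1.out * p.2.out * p.1.out⁻¹ * p.2.out⁻¹
  refine ((Set.finite_range f).subset ?_)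
  rintro _ ⟨x, y, rfl⟩
  refine ⟨(x, y), ?_⟩
  obtain ⟨a, ha⟩ := QuotientGroup.mk_out_eq_mul (Subgroup.center L) x
  obtain ⟨b, hb⟩ := QuotientGroup.mk_out_eq_mul (Subgroup.center L) y
  have ha' := Subgroup.mem_center_iff.mp a.2
  have hb' := Subgroup.mem_center_iff.mp b.2
  simp only [f, ha, hb, commutatorElement_def, mul_inv_rev]
  calc x * a * (y * b) * ((a : L)⁻¹ * x⁻¹) * ((b : L)⁻¹ * y⁻¹)
      = x * (a * (y * b)) * ((a : L)⁻¹ * x⁻¹) * ((b : L)⁻¹ * y⁻¹) := by group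
    _ = x * y * (b * x⁻¹) * ((b : L)⁻¹ * y⁻¹) := by rw [← ha']; group
    _ = x * y * x⁻¹ * y⁻¹ := by rw [← hb']; group

/-- In a virtually cyclic group whose finite subgroups have order at most `M`, commutators of squares
have order dividing `M!`. -/
theorem VirtuallyCyclic.comm_pow {K : Type*} [Group K] (hK : VirtuallyCyclic K) {M : ℕ}
    (hM : ∀ F : Subgroup K, Finite F → Nat.card F ≤ M) (x y : K) :
    (x ^ 2 * y ^ 2 * (x ^ 2)⁻¹ * (y ^ 2)⁻¹) ^ M.factorial = 1 := by
  obtain ⟨C, hC, hCi⟩ := hK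
  set Z := C.normalCore with hZ
  have hZi : Z.FiniteIndex := Subgroup.finiteIndex_normalCore C
  have hZC : Z ≤ C := Subgroup.normalCore_le C
  have hZn : Z.Normal := Subgroup.normalCore_normal C
  have hZc : IsCyclic Z := by
    have := (Subgroup.subgroupOfEquivOfLe hZC)
    exact isCyclic_of_surjective this this.surjective
  obtain ⟨z, hz⟩ := hZc.exists_generator
  by_cases hfin : Finite Z
  · have : Finite K := (Subgroup.finite_iff_finite_and_finiteIndex Z).mpr ⟨hfin, hZi⟩
    have : Finite (⊤ : Subgroup K) := inferInstance
    exact pow_factorial_eq_one (⊤ : Subgroup K) (hM _ this) trivial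
  have hinf : ∀ n : ℤ, (z : K) ^ n = 1 → n = 0 := by
    intro n hn
    by_contra h0
    apply hfin
    have h1 : IsOfFinOrder z := isOfFinOrder_iff_zpow_eq_one.mpr ⟨n, h0, Subtype.ext (by simpa using hn)⟩
    have h2 : Finite (Subgroup.zpowers z) := h1.finite_zpowers
    have h3 : Subgroup.zpowers z = ⊤ := (Subgroup.eq_top_iff' _).mpr hz
    rw [h3] at h2
    exact Finite.of_equiv _ Subgroup.topEquiv.toEquiv
  have hconj : ∀ g : K, ∃ n : ℤ, g * z * g⁻¹ = (z : K) ^ n := by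
    intro g
    obtain ⟨n, hn⟩ := Subgroup.mem_zpowers_iff.mp (hz ⟨g * z * g⁻¹, hZn.conj_mem _ z.2 g⟩)
    exact ⟨n, by simpa using (congrArg Subtype.val hn).symm⟩
  have hsq : ∀ g : K, g ^ 2 * z = z * g ^ 2 := by
    intro g
    obtain ⟨n, hn⟩ := hconj g
    obtain ⟨m, hm⟩ := hconj g⁻¹
    rw [inv_inv] at hm
    have h1 : (z : K) ^ (n * m) = z := by
      rw [zpow_mul, ← hn, conj_zpow, ← hm]; group
    have h2 : n * m = 1 := by
      have := hinf (n * m - 1) (by rw [zpow_sub_one, h1, mul_inv_cancel])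
      omega
    have h3 : n * n = 1 := by
      rcases Int.eq_one_or_neg_one_of_mul_eq_one h2 with h | h <;> rw [h] <;> norm_num
    have h4 : g * (g * z * g⁻¹) * g⁻¹ = z := by
      rw [hn, ← conj_zpow, hn, ← zpow_mul, h3, zpow_one]
    calc g ^ 2 * z = g * (g * z * g⁻¹) * g⁻¹ * g ^ 2 := by rw [pow_two]; group
      _ = z * g ^ 2 := by rw [h4]
  set L := Subgroup.centralizer (Z : Set K) with hL
  have hmem : ∀ g : K, g ^ 2 ∈ L := by
    intro g
    rw [hL, Subgroup.mem_centralizer_iff]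
    intro w hw
    obtain ⟨n, hn⟩ := Subgroup.mem_zpowers_iff.mp (hz ⟨w, hw⟩)
    have hn' : (z : K) ^ n = w := by simpa using congrArg Subtype.val hn
    have : Commute (g ^ 2) (z : K) := hsq g
    rw [← hn']
    exact ((this.zpow_right n).eq).symm
  have hZL : Z.subgroupOf L ≤ Subgroup.center L := by
    intro w hw
    rw [Subgroup.mem_center_iff]
    intro u
    exact Subtype.ext ((Subgroup.mem_centralizer_iff.mp u.2 w hw).symm)
  have : (Z.subgroupOf L).FiniteIndex := inferInstance
  have := commutatorSet_finite L (Z.subgroupOf L) hZL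
  have hcom : Finite (_root_.commutator L) := inferInstance
  have hF : Finite ((_root_.commutator L).map L.subtype) :=
    Set.Finite.image (s := ((_root_.commutator L : Subgroup L) : Set L)) L.subtype
      (Set.toFinite _)
  refine pow_factorial_eq_one _ (hM _ hF) ?_
  refine ⟨(⟨x ^ 2, hmem x⟩ : L) * ⟨y ^ 2, hmem y⟩ * ⟨x ^ 2, hmem x⟩⁻¹ * ⟨y ^ 2, hmem y⟩⁻¹, ?_, rfl⟩
  rw [← commutatorElement_def]
  exact Subgroup.commutator_mem_commutator (Subgroup.mem_top _) (Subgroup.mem_top _)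

/-! ### The elementary subgroup of a loxodromic element -/

/-- The elements that conjugate some nontrivial power of `v` to some nontrivial power of `v`; for a
loxodromic `v` this is the maximal virtually cyclic subgroup containing `v`. -/
def elem {H : Type*} [Group H] (v : H) : Subgroup H where
  carrier := {h | ∃ p q : ℤ, p ≠ 0 ∧ q ≠ 0 ∧ h * v ^ p = v ^ q * h}
  one_mem' := ⟨1, 1, by norm_num, by norm_num, by simp⟩
  mul_mem' := by
    rintro a b ⟨p, q, hp, hq, h⟩ ⟨p', q', hp', hq', h'⟩
    refine ⟨p' * p, q * q', mul_ne_zero hp' hp, mul_ne_zero hq hq', ?_⟩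
    have e1 : SemiconjBy a (v ^ p) (v ^ q) := h
    have e2 : SemiconjBy b (v ^ p') (v ^ q') := h'
    have e3 := e1.zpow_right q'
    have e4 := e2.zpow_right p
    rw [← zpow_mul, ← zpow_mul] at e3 e4
    rw [mul_comm q' p] at e4
    exact e3.mul_left e4
  inv_mem' := by
    rintro a ⟨p, q, hp, hq, h⟩
    refine ⟨q, p, hq, hp, ?_⟩
    have e1 : SemiconjBy a (v ^ p) (v ^ q) := h
    exact e1.inv_symm_left

theorem mem_elem {H : Type*} [Group H] {v h : H} :
    h ∈ elem v ↔ ∃ p q : ℤ, p ≠ 0 ∧ q ≠ 0 ∧ h * v ^ p = v ^ q * h := Iff.rfl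

theorem self_mem_elem {H : Type*} [Group H] (v : H) : v ∈ elem v :=
  ⟨1, 1, by norm_num, by norm_num, by simp⟩

namespace HypM

variable {H : Type*} [Group H] {d : H → H → ℕ} {δ : ℕ}

theorem d_one_mul (hd : HypM d δ) (x y : H) : d x (x * y) = d 1 y := by
  have := hd.inv x 1 y
  rwa [mul_one] at this

theorem d_one_inv (hd : HypM d δ) (x : H) : d 1 x⁻¹ = d 1 x := by
  rw [← hd.inv x, mul_one, mul_inv_cancel, hd.symm]

theorem d_eq (hd : HypM d δ) (x y : H) : d x y = d 1 (x⁻¹ * y) := by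
  rw [← hd.inv x⁻¹, inv_mul_cancel]

theorem len_mul (hd : HypM d δ) (x y : H) : d 1 (x * y) ≤ d 1 x + d 1 y := by
  have := hd.tri 1 x (x * y)
  rwa [hd.d_one_mul] at this

theorem len_zpow_neg (hd : HypM d δ) (v : H) (n : ℤ) : d 1 (v ^ (-n)) = d 1 (v ^ n) := by
  rw [zpow_neg, hd.d_one_inv]

theorem len_zpow_le (hd : HypM d δ) (v : H) (n : ℕ) : d 1 (v ^ (n : ℤ)) ≤ n * d 1 v := by
  induction n with
  | zero => simp [hd.self]
  | succ n ih =>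
    push_cast
    rw [zpow_add_one]
    have := hd.len_mul (v ^ (n : ℤ)) v
    rw [add_mul, one_mul]
    omega

theorem d_zpow (hd : HypM d δ) (v : H) (i j : ℤ) : d (v ^ i) (v ^ j) = d 1 (v ^ (j - i)) := by
  rw [hd.d_eq, ← zpow_neg, ← zpow_add]; congr 2; ring

namespace Lox

variable {v : H} {κ : ℕ}

theorem ne_one (hd : HypM d δ) (hv : Lox d v κ) {n : ℤ} (hn : n ≠ 0) : v ^ n ≠ 1 := by
  intro h
  have h1 := hv.lin (n * (κ + 1))
  rw [zpow_mul, h, one_zpow, hd.self, Int.natAbs_mul] at h1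
  have h2 : 1 ≤ n.natAbs := Int.natAbs_pos.mpr hn
  have h3 : ((κ : ℤ) + 1).natAbs = κ + 1 := by omega
  rw [h3] at h1
  have := Nat.mul_le_mul_right (κ + 1) h2
  omega

theorem inj (hd : HypM d δ) (hv : Lox d v κ) {i j : ℤ} (h : v ^ i = v ^ j) : i = j := by
  by_contra hne
  refine hv.ne_one hd (n := i - j) (by omega) ?_
  rw [zpow_sub, h, mul_inv_cancel]

theorem len_add (hd : HypM d δ) (hv : Lox d v κ) {m n : ℤ} (hm : 0 ≤ m) (hn : 0 ≤ n) :
    d 1 (v ^ m) + d 1 (v ^ n) ≤ d 1 (v ^ (m + n)) + κ := by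
  have := hv.line 0 m (m + n) hm (by omega)
  simp only [zpow_zero] at this
  rwa [zpow_add, hd.d_one_mul, ← zpow_add] at this

/-- A point almost between two points of an axis is near the axis. -/
theorem near (hd : HypM d δ) (hv : Lox d v κ) {i k : ℤ} {z : H} {e : ℕ}
    (hz : d (v ^ i) z + d z (v ^ k) ≤ d (v ^ i) (v ^ k) + e) :
    ∃ t : ℤ, d (v ^ t) z ≤ d 1 v + κ + 2 * e + 3 * δ := by
  have key : ∀ t : ℤ, d (v ^ t) (v ^ (t + 1)) = d 1 v := fun t => by
    rw [hd.d_zpow]; simp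
  rcases lt_trichotomy i k with h | h | h
  · obtain ⟨t, -, -, ht⟩ := Line.near hd hv.line h hz
    refine ⟨t, ?_⟩
    rw [key] at ht
    omega
  · subst h
    refine ⟨i, ?_⟩
    rw [hd.self] at hz
    omega
  · obtain ⟨t, -, -, ht⟩ := Line.near hd hv.line (i := k) (k := i) (z := z) (e := e) h (by
      have e1 := hd.symm (v ^ k) z
      have e2 := hd.symm z (v ^ i)
      have e3 := hd.symm (v ^ k) (v ^ i)
      omega)
    refine ⟨t, ?_⟩
    simp only [key] at ht
    omega

theorem len_ge (hv : Lox d v κ) (n : ℕ) {m : ℤ} (h : n + κ ≤ m.natAbs) : n ≤ d 1 (v ^ m) := by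
  have := hv.lin m; omega

theorem zpow_smul_line (hd : HypM d δ) (hv : Lox d v κ) {i j k : ℤ}
    (h : i ≤ j ∧ j ≤ k ∨ k ≤ j ∧ j ≤ i) :
    d (v ^ i) (v ^ j) + d (v ^ j) (v ^ k) ≤ d (v ^ i) (v ^ k) + κ := by
  rcases h with ⟨h1, h2⟩ | ⟨h1, h2⟩
  · exact hv.line i j k h1 h2
  · have := hv.line k j i h1 h2
    simp only at this
    have e1 := hd.symm (v ^ i) (v ^ k)
    have e2 := hd.symm (v ^ i) (v ^ j)
    have e3 := hd.symm (v ^ j) (v ^ k)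
    omega

/-- An element whose translate of the axis fellow-travels the axis both ways lies near the axis. -/
theorem elem_near (hd : HypM d δ) (hv : Lox d v κ) {h : H} (hh : h ∈ elem v) :
    ∃ t : ℤ, d (v ^ t) h ≤ d 1 v + 3 * κ + 7 * δ := by
  obtain ⟨p, q, hp, hq, h1⟩ := hh
  have hs : ∀ n : ℤ, h * v ^ (p * n) = v ^ (q * n) * h := fun n => by
    have e1 : SemiconjBy h (v ^ p) (v ^ q) := h1
    have := e1.zpow_right n
    rwa [← zpow_mul, ← zpow_mul] at this
  obtain ⟨n, hn⟩ : ∃ n : ℤ, n = ((d 1 h + 3 * κ + 2 * δ + 1 : ℕ) : ℤ) := ⟨_, rfl⟩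
  have hclose : ∀ n : ℤ, d (h * v ^ (p * n)) (v ^ (q * n)) = d 1 h := fun n => by
    rw [hs, hd.symm, hd.d_one_mul]
  have hbig : ∀ m : ℤ, n.natAbs ≤ m.natAbs → d 1 h + 2 * κ + 2 * δ + 1 ≤ d h (h * v ^ (p * m)) := by
    intro m hm
    rw [hd.d_one_mul]
    refine hv.len_ge _ ?_
    rw [Int.natAbs_mul]
    have : 1 ≤ p.natAbs := Int.natAbs_pos.mpr hp
    have := Nat.mul_le_mul_right m.natAbs this
    omega
  have b1 := hbig n le_rfl
  have b2 := hbig (-n) (by simp)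
  have c1 := hclose n
  have c2 := hclose (-n)
  have hline : d (h * v ^ (p * -n)) h + d h (h * v ^ (p * n)) ≤
      d (h * v ^ (p * -n)) (h * v ^ (p * n)) + κ := by
    have := hv.zpow_smul_line hd (i := p * -n) (j := 0) (k := p * n) (by
      rcases le_total 0 (p * n) with h | h
      · left; constructor <;> linarith
      · right; constructor <;> linarith)
    rw [zpow_zero, ← hd.inv h, ← hd.inv h 1, ← hd.inv h (v ^ (p * -n)) (v ^ (p * n)), mul_one] at this
    exact this
  have e1 := hd.symm h (h * v ^ (p * -n))
  have e2 := hd.almost_between (v ^ (q * n)) hline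
  have e3 := hd.symm (v ^ (q * n)) (h * v ^ (p * n))
  have e6 := hd.tri h (v ^ (q * n)) (h * v ^ (p * n))
  have e7 := hd.symm h (v ^ (q * n))
  have e8 : d (h * v ^ (p * -n)) h + d h (v ^ (q * n)) ≤
      d (h * v ^ (p * -n)) (v ^ (q * n)) + (κ + δ) := by omega
  have e9 := hd.almost_between (v ^ (q * -n)) e8
  obtain ⟨t, ht⟩ := hv.near hd (i := q * -n) (k := q * n) (z := h) (e := κ + 2 * δ) (by
    omega)
  exact ⟨t, by omega⟩

/-- A non virtually cyclic group is not contained in the elementary subgroup of one of its elements. -/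
theorem exists_not_mem_elem (hd : HypM d δ) (hv : Lox d v κ) {G : Subgroup H} (hvG : v ∈ G)
    (hG : ¬ VirtuallyCyclic G) : ∃ g ∈ G, g ∉ elem v := by
  by_contra hcon
  push Not at hcon
  refine hG ⟨Subgroup.zpowers ⟨v, hvG⟩, inferInstance, ?_⟩
  rw [Subgroup.finiteIndex_iff_finite_quotient]
  have hfin := hd.fin (d 1 v + 3 * κ + 7 * δ)
  have hfin' : {k : G | d 1 (k : H) ≤ d 1 v + 3 * κ + 7 * δ}.Finite :=
    hfin.preimage (f := ((↑) : G → H)) Subtype.val_injective.injOn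
  refine Set.finite_univ_iff.mp ((hfin'.image (fun k => ((k⁻¹ : G) : G ⧸ Subgroup.zpowers
    (⟨v, hvG⟩ : G)))).subset ?_)
  intro x _
  obtain ⟨h, rfl⟩ := QuotientGroup.mk_surjective x
  obtain ⟨t, ht⟩ := hv.elem_near hd (hcon _ (G.inv_mem h.2))
  refine ⟨(⟨v, hvG⟩ : G) ^ (-t) * h⁻¹, ?_, ?_⟩
  · change d 1 (((⟨v, hvG⟩ : G) ^ (-t) * h⁻¹ : G) : H) ≤ _
    push_cast
    rw [← hd.inv (v ^ t), mul_one, ← mul_assoc, ← zpow_add]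
    simpa using ht
  · simp only [mul_inv_rev, inv_inv]
    rw [QuotientGroup.eq]
    exact Subgroup.mem_zpowers_iff.mpr ⟨-t, by group⟩

/-- Two distinct translates of the axis have bounded intersection, algebraically. -/
theorem elem_inter_finite (hd : HypM d δ) (hv : Lox d v κ) {g : H} (hg : g ∉ elem v) :
    {k : H | k ∈ elem v ∧ g⁻¹ * k * g ∈ elem v}.Finite := by
  classical
  have hfin := hd.fin (d 1 v + 3 * κ + 7 * δ)
  have h1 : ∀ k : H, ∃ t : ℤ, k ∈ elem v → d 1 (v ^ (-t) * k) ≤ d 1 v + 3 * κ + 7 * δ := by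
    intro k
    by_cases hk : k ∈ elem v
    · obtain ⟨t, ht⟩ := hv.elem_near hd hk
      refine ⟨t, fun _ => ?_⟩
      rwa [← hd.inv (v ^ t), mul_one, ← mul_assoc, ← zpow_add, add_neg_cancel, zpow_zero, one_mul]
    · exact ⟨0, fun h => absurd h hk⟩
  choose τ hτ using h1
  refine Set.Finite.of_finite_image (f := fun k => (v ^ (-τ k) * k,
    v ^ (-τ (g⁻¹ * k * g)) * (g⁻¹ * k * g))) ((hfin.prod hfin).subset ?_) ?_
  · rintro _ ⟨k, ⟨hk1, hk2⟩, rfl⟩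
    exact ⟨hτ _ hk1, hτ _ hk2⟩
  · rintro k ⟨hk1, hk2⟩ k' ⟨hk1', hk2'⟩ h
    simp only [Prod.mk.injEq] at h
    obtain ⟨e1, e2⟩ := h
    set i := τ k; set i' := τ k'
    set j := τ (g⁻¹ * k * g); set j' := τ (g⁻¹ * k' * g)
    have e3 : k' = v ^ (i' - i) * k := by
      have : k' = v ^ i' * (v ^ (-i') * k') := by rw [← mul_assoc, ← zpow_add]; simp
      rw [this, ← e1, ← mul_assoc, ← zpow_add]; rfl
    have e4 : g⁻¹ * k' * g = v ^ (j' - j) * (g⁻¹ * k * g) := by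
      have : g⁻¹ * k' * g = v ^ j' * (v ^ (-j') * (g⁻¹ * k' * g)) := by
        rw [← mul_assoc, ← zpow_add]; simp
      rw [this, ← e2, ← mul_assoc, ← zpow_add]; rfl
    have e5 : g * v ^ (j' - j) = v ^ (i' - i) * g := by
      rw [e3] at e4
      have e6 : g⁻¹ * (v ^ (i' - i) * k) * g = (g⁻¹ * v ^ (i' - i) * g) * (g⁻¹ * k * g) := by group
      rw [e6] at e4
      have e7 := mul_right_cancel e4
      rw [← e7]; group
    by_contra hne
    have hi : i' - i ≠ 0 := fun h0 => hne (by rw [e3, h0]; simp)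
    have hj : j' - j ≠ 0 := fun h0 => by
      rw [h0, zpow_zero, mul_one] at e5
      exact hv.ne_one hd hi (by simpa using e5.symm)
    exact hg ⟨_, _, hj, hi, e5⟩

/-- There is little cancellation between powers of `v` separated by an element outside `elem v`. -/
theorem junction (hd : HypM d δ) (hv : Lox d v κ) {g : H} (hg : g ∉ elem v) :
    ∃ c, ∀ m n : ℤ, d 1 (v ^ m) + d 1 (v ^ n) ≤ d 1 (v ^ m * g * v ^ n) + c := by
  set e := 2 * d 1 g + κ + δ with he
  set B := hd.fin (d 1 v + κ + 2 * e + 3 * δ) with hB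
  set b := B.toFinset.card with hb
  refine ⟨d 1 g + 2 * (b * d 1 v) + κ + δ, fun m n => ?_⟩
  have hw : d (v ^ (-m)) (g * v ^ n) = d 1 (v ^ m * g * v ^ n) := by
    rw [hd.d_eq, zpow_neg, inv_inv, mul_assoc]
  have h1 : d 1 (v ^ n) ≤ d 1 (g * v ^ n) + d 1 g := by
    have := hd.len_mul g⁻¹ (g * v ^ n)
    rw [inv_mul_cancel_left, hd.d_one_inv] at this
    omega
  have h2 := hd.len_zpow_neg v m
  by_contra hcon
  push Not at hcon
  -- the first `b + 1` points of the first axis are near the second one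
  have hpt : ∀ i : ℕ, i ≤ b → ∃ t : ℤ,
      v ^ (Int.sign m * i) * g * v ^ t ∈ B.toFinset := by
    intro i hi
    have hlen : d 1 (v ^ (-(Int.sign m * i))) ≤ b * d 1 v := by
      have h3 : d 1 (v ^ (-(Int.sign m * i))) ≤ d 1 (v ^ (i : ℤ)) := by
        rw [hd.len_zpow_neg]
        rcases lt_trichotomy m 0 with h | h | h
        · rw [Int.sign_eq_neg_one_of_neg h, neg_one_mul, hd.len_zpow_neg]
        · rw [h]; simp [hd.self]
        · rw [Int.sign_eq_one_of_pos h, one_mul]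
      have h4 := hd.len_zpow_le v i
      have h5 := Nat.mul_le_mul_right (d 1 v) hi
      omega
    have hmb : b * d 1 v < d 1 (v ^ m) := by
      have h3 := hd.tri 1 (v ^ (-m)) (g * v ^ n)
      have h4 := hd.tri (v ^ (-m)) 1 (g * v ^ n)
      have h5 := hd.symm (v ^ (-m)) 1
      omega
    have him : (i : ℤ) < m.natAbs := by
      by_contra hlt
      push Not at hlt
      have h3 := hd.len_zpow_le v m.natAbs
      have h4 : d 1 (v ^ (m.natAbs : ℤ)) = d 1 (v ^ m) := by
        rcases Int.natAbs_eq m with h | h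
        · rw [← h]
        · conv_rhs => rw [h, hd.len_zpow_neg]
      have h5 : m.natAbs ≤ b := by omega
      have h6 := Nat.mul_le_mul_right (d 1 v) h5
      omega
    set z := v ^ (-(Int.sign m * i)) with hz
    have hl : d 1 z + d z (v ^ (-m)) ≤ d 1 (v ^ (-m)) + κ := by
      have := hv.zpow_smul_line hd (i := 0) (j := -(Int.sign m * i)) (k := -m) (by
        rcases lt_trichotomy m 0 with h | h | h
        · rw [Int.sign_eq_neg_one_of_neg h]; omega
        · omega
        · rw [Int.sign_eq_one_of_pos h]; omega)
      rwa [zpow_zero] at this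
    have h3 := hd.almost_between (g * v ^ n) hl
    have h4 := hd.tri 1 z (g * v ^ n)
    have h5 := hd.tri 1 z (v ^ (-m))
    have h6 := hd.symm (g * v ^ n) z
    have h7 := hd.symm (g * v ^ n) (v ^ (-m))
    have h8 : d 1 z + d z (g * v ^ n) ≤ d 1 (g * v ^ n) + (κ + δ) := by omega
    have h9 := hd.tri g 1 z
    have h10 := hd.tri 1 g (g * v ^ n)
    have h11 := hd.symm g 1
    have h12 : d g z + d z (g * v ^ n) ≤ d g (g * v ^ n) + e := by omega
    rw [← hd.inv g⁻¹ g z, ← hd.inv g⁻¹ z, ← hd.inv g⁻¹ g (g * v ^ n), inv_mul_cancel,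
      inv_mul_cancel_left] at h12
    obtain ⟨t, ht⟩ := hv.near hd (i := 0) (k := n) (z := g⁻¹ * z) (e := e) (by
      rw [zpow_zero]; exact h12)
    refine ⟨t, ?_⟩
    rw [Set.Finite.mem_toFinset]
    change d 1 _ ≤ _
    rw [← hd.inv g, mul_inv_cancel_left, hd.symm, hd.d_eq, hz, ← zpow_neg, neg_neg] at ht
    rwa [mul_assoc]
  choose! τ hτ using hpt
  obtain ⟨i, hi, j, hj, hij, heq⟩ := Finset.exists_ne_map_eq_of_card_lt_of_maps_to
    (s := Finset.range (b + 1)) (t := B.toFinset) (by rw [Finset.card_range]; omega)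
    (f := fun i : ℕ => v ^ (Int.sign m * i) * g * v ^ τ i) (fun i hi => hτ i (by
      have := Finset.mem_range.mp (Finset.mem_coe.mp hi); omega))
  have h3 : g * v ^ (τ i - τ j) = v ^ (Int.sign m * j - Int.sign m * i) * g := by
    rw [sub_eq_add_neg, zpow_add, sub_eq_neg_add, zpow_add (a := v) (-(Int.sign m * i)), ← mul_assoc,
      mul_assoc _ (v ^ (Int.sign m * j)), zpow_neg v (τ j), mul_inv_eq_iff_eq_mul, mul_assoc _ _ (v ^ τ j),
      ← heq, zpow_neg]
    group
  have hm0 : Int.sign m ≠ 0 := by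
    intro h0
    have hm0 : m = 0 := Int.sign_eq_zero_iff_zero.mp h0
    subst hm0
    rw [zpow_zero, hd.self, one_mul] at hcon
    omega
  have hne : Int.sign m * j - Int.sign m * i ≠ 0 := by
    rw [← mul_sub]
    exact mul_ne_zero hm0 (by omega)
  refine hg ⟨_, _, fun h0 => ?_, hne, h3⟩
  rw [h0, zpow_zero, mul_one] at h3
  exact hv.ne_one hd hne (by simpa using h3.symm)

end Lox

end HypM

/-! ### Products of powers of a loxodromic element -/

theorem exists_seq {H : Type*} [Group H] (s : ℤ → H) :
    ∃ P : ℤ → H, P 0 = 1 ∧ ∀ t, P (t + 1) = P t * s t := by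
  let Pp : ℕ → H := fun n => Nat.rec 1 (fun n x => x * s n) n
  let Pn : ℕ → H := fun n => Nat.rec 1 (fun n x => x * (s (-(n + 1)))⁻¹) n
  refine ⟨fun t => if 0 ≤ t then Pp t.toNat else Pn (-t).toNat, by simp [Pp], fun t => ?_⟩
  rcases lt_or_ge t 0 with h | h
  · obtain ⟨n, rfl⟩ : ∃ n : ℕ, t = -(n + 1) := ⟨(-t).toNat - 1, by omega⟩
    have e1 : (-(-((n : ℤ) + 1))).toNat = n + 1 := by omega
    beta_reduce
    rw [if_neg (not_le.mpr h), e1]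
    rcases n with _ | n
    · simp [Pp, Pn]
    · have e2 : ¬ (0 : ℤ) ≤ -(((n + 1 : ℕ) : ℤ) + 1) + 1 := by omega
      have e3 : (-(-(((n + 1 : ℕ) : ℤ) + 1) + 1)).toNat = n + 1 := by omega
      rw [if_neg e2, e3]
      have e4 : Pn (n + 1 + 1) = Pn (n + 1) * (s (-(((n + 1 : ℕ) : ℤ) + 1)))⁻¹ := rfl
      rw [e4, inv_mul_cancel_right]
  · lift t to ℕ using h
    have e1 : ((t : ℤ) + 1).toNat = t + 1 := by omega
    have e2 : (0 : ℤ) ≤ (t : ℤ) + 1 := by omega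
    beta_reduce
    rw [if_pos (by omega), if_pos (by omega), e1, Int.toNat_natCast]

theorem seq_period {H : Type*} [Group H] {s P : ℤ → H} (h0 : P 0 = 1)
    (h1 : ∀ t, P (t + 1) = P t * s t) {m : ℤ} (hm : ∀ t, s (t + m) = s t) (t : ℤ) :
    P (t + m) = P m * P t := by
  induction t using Int.induction_on with
  | zero => simp [h0]
  | succ i ih => rw [add_right_comm, h1, ih, hm, h1, mul_assoc]
  | pred i ih =>
    have e1 := h1 (-i - 1)
    have e2 := h1 (-i - 1 + m)
    rw [sub_add_cancel] at e1
    rw [add_right_comm, sub_add_cancel, ih, hm, e1, ← mul_assoc] at e2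
    exact (mul_right_cancel e2).symm

theorem seq_period_zpow {H : Type*} [Group H] {s P : ℤ → H} (h0 : P 0 = 1)
    (h1 : ∀ t, P (t + 1) = P t * s t) {m : ℤ} (hm : ∀ t, s (t + m) = s t) (t k : ℤ) :
    P (t + m * k) = P m ^ k * P t := by
  have h2 := seq_period h0 h1 hm
  induction k using Int.induction_on with
  | zero => simp
  | succ i ih =>
    rw [mul_add, mul_one, ← add_assoc, h2, ih, add_comm (i : ℤ), zpow_add, zpow_one, mul_assoc]
  | pred i ih =>
    have e := h2 (t + m * (-i - 1))
    rw [show t + m * (-i - 1) + m = t + m * -i by ring, ih] at e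
    rw [sub_eq_neg_add, zpow_add, zpow_neg_one, mul_assoc, e, add_comm (-1) (-(i : ℤ)),
      ← sub_eq_add_neg, inv_mul_cancel_left]

namespace HypM

variable {H : Type*} [Group H] {d : H → H → ℕ} {δ : ℕ}

/-- A bi-infinite product of large powers of `v` separated by short elements traces a line, if there
is little cancellation at the separating elements. -/
theorem line_of_seq (hd : HypM d δ) {v : H} {n : ℤ → ℤ} {g P : ℤ → H} {c G₀ : ℕ}
    (hP : ∀ t, P (t + 1) = P t * (v ^ n t * g t))
    (hc : ∀ t, d 1 (v ^ n t) + d 1 (v ^ n (t + 1)) ≤ d 1 (v ^ n t * g t * v ^ n (t + 1)) + c)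
    (hg : ∀ t, d 1 (g t) ≤ G₀) (hn : ∀ t, c + 4 * G₀ + 2 * δ + 1 ≤ d 1 (v ^ n t)) :
    Line d P (c + 3 * G₀ + 2 * δ) ∧ ∀ t, c + 3 * G₀ + 2 * δ + 1 ≤ d (P t) (P (t + 1)) := by
  have hL : ∀ t, d (P t) (P (t + 1)) = d 1 (v ^ n t * g t) := fun t => by rw [hP, hd.d_one_mul]
  have h1 : ∀ t, d 1 (v ^ n t) ≤ d 1 (v ^ n t * g t) + G₀ := fun t => by
    have := hd.len_mul (v ^ n t * g t) (g t)⁻¹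
    rw [mul_inv_cancel_right, hd.d_one_inv] at this
    have := hg t
    omega
  have h2 : ∀ t, c + 3 * G₀ + 2 * δ + 1 ≤ d (P t) (P (t + 1)) := fun t => by
    have := hn t
    have := h1 t
    rw [hL]
    omega
  refine ⟨(hd.line_of_junction (fun t => ?_) h2).1, h2⟩
  have e1 : t + 2 = t + 1 + 1 := by ring
  rw [e1, hL, hL, hP (t + 1), hP t, mul_assoc, hd.d_one_mul]
  have e2 := hd.len_mul (v ^ n t) (g t)
  have e3 := hd.len_mul (v ^ n (t + 1)) (g (t + 1))
  have e4 := hd.len_mul (v ^ n t * g t * (v ^ n (t + 1) * g (t + 1))) (g (t + 1))⁻¹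
  rw [hd.d_one_inv, ← mul_assoc (v ^ n t * g t), mul_inv_cancel_right] at e4
  rw [← mul_assoc (v ^ n t * g t)]
  have := hc t
  have := hg t
  have := hg (t + 1)
  omega

/-- A nonelementary subgroup contains a commutator of squares of infinite order. -/
theorem exists_commutator (hd : HypM d δ) {G : Subgroup H} {v g : H} {κ : ℕ} (hv : Lox d v κ)
    (hvG : v ∈ G) (hgG : g ∈ G) (hg : g ∉ elem v) :
    ∃ x ∈ G, ∃ y ∈ G, ∀ k : ℕ, k ≠ 0 → (x ^ 2 * y ^ 2 * (x ^ 2)⁻¹ * (y ^ 2)⁻¹) ^ k ≠ 1 := by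
  obtain ⟨c₁, hc₁⟩ := hv.junction hd hg
  obtain ⟨c₂, hc₂⟩ := hv.junction hd (g := g⁻¹) (fun h => hg (by simpa using (elem v).inv_mem h))
  set a : ℤ := ((max c₁ c₂ + 4 * d 1 g + 2 * δ + 1 + κ : ℕ) : ℤ) with ha
  refine ⟨v ^ a, G.zpow_mem hvG a, g * v ^ a * g⁻¹,
    G.mul_mem (G.mul_mem hgG (G.zpow_mem hvG a)) (G.inv_mem hgG), fun k hk => ?_⟩
  let n : ℤ → ℤ := fun t => if t % 4 < 2 then 2 * a else -(2 * a)
  let γ : ℤ → H := fun t => if t % 2 = 0 then g else g⁻¹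
  obtain ⟨P, h0, h1⟩ := exists_seq (fun t => v ^ n t * γ t)
  have hnat : ∀ t, (n t).natAbs = 2 * (max c₁ c₂ + 4 * d 1 g + 2 * δ + 1 + κ) := fun t => by
    simp only [n]
    split_ifs <;> omega
  obtain ⟨hline, hlong⟩ := hd.line_of_seq (v := v) (n := n) (g := γ) (c := max c₁ c₂) (G₀ := d 1 g)
    h1 (fun t => by
      simp only [γ]
      split_ifs
      · have := hc₁ (n t) (n (t + 1)); omega
      · have := hc₂ (n t) (n (t + 1)); omega)
    (fun t => by
      simp only [γ]
      split_ifs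
      · exact le_rfl
      · rw [hd.d_one_inv])
    (fun t => hv.len_ge _ (by rw [hnat]; omega))
  have hper := seq_period_zpow h0 h1 (m := 4) (fun t => by
    simp only [n, γ]
    rw [show (t + 4) % 4 = t % 4 by omega, show (t + 4) % 2 = t % 2 by omega]) 0 k
  have h4 : P 4 = (v ^ a) ^ 2 * (g * v ^ a * g⁻¹) ^ 2 * ((v ^ a) ^ 2)⁻¹ *
      ((g * v ^ a * g⁻¹) ^ 2)⁻¹ := by
    have e1 := h1 0
    have e2 := h1 1
    have e3 := h1 2
    have e4 := h1 3
    norm_num [n, γ] at e1 e2 e3 e4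
    rw [e4, e3, e2, e1, h0, conj_pow, two_mul, zpow_add, pow_two]
    group
  rw [h0, mul_one, zero_add, h4, zpow_natCast] at hper
  intro h
  rw [h] at hper
  have e1 := hline 0 1 (4 * k) (by omega) (by omega)
  have e2 := hlong 0
  rw [hper, h0, zero_add] at *
  rw [hd.self, hd.symm (P 1)] at e1
  omega

/-- If `G` normalises no nontrivial finite subgroup then every `u ≠ 1` is moved out of `elem v` by
some element of `G` that is itself outside `elem v`. -/
theorem exists_conj_not_mem (hd : HypM d δ) {G : Subgroup H} {v g : H} {κ : ℕ} (hv : Lox d v κ)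
    (hvG : v ∈ G) (hgG : g ∈ G) (hg : g ∉ elem v) (hE : EHset G = {1}) {u : H} (hu : u ≠ 1) :
    ∃ γ ∈ G, γ ∉ elem v ∧ γ⁻¹ * u * γ ∉ elem v := by
  classical
  by_contra hcon
  push Not at hcon
  have hfin := hv.elem_inter_finite hd hg
  -- a power of `v` that `g` moves out of the elementary subgroup
  obtain ⟨i, hi⟩ : ∃ i : ℤ, g⁻¹ * v ^ i * g ∉ elem v := by
    by_contra hall
    push Not at hall
    refine (Set.infinite_range_of_injective (f := fun i : ℤ => v ^ i)
      (fun i j h => hv.inj hd h)) (hfin.subset ?_)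
    rintro _ ⟨i, rfl⟩
    exact ⟨(elem v).zpow_mem (self_mem_elem v) i, hall i⟩
  set g' := v ^ i * g with hg'
  have hg'G : g' ∈ G := G.mul_mem (G.zpow_mem hvG i) hgG
  have hg'E : g' ∉ elem v := fun h =>
    hg (by simpa [hg'] using (elem v).mul_mem ((elem v).zpow_mem (self_mem_elem v) (-i)) h)
  have hgg' : g⁻¹ * g' ∉ elem v := by rwa [hg', ← mul_assoc]
  have hfin' := hv.elem_inter_finite hd hg'E
  have hfin'' := hv.elem_inter_finite hd hgg'
  have hfin3 : {k : H | g⁻¹ * k * g ∈ elem v ∧ g'⁻¹ * k * g' ∈ elem v}.Finite := by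
    refine Set.Finite.of_finite_image (f := fun k => g⁻¹ * k * g) (hfin''.subset ?_)
      (fun k _ k' _ h => by simpa using h)
    rintro _ ⟨k, ⟨h1, h2⟩, rfl⟩
    refine ⟨h1, ?_⟩
    have : (g⁻¹ * g')⁻¹ * (g⁻¹ * k * g) * (g⁻¹ * g') = g'⁻¹ * k * g' := by group
    rwa [this]
  have hmem : u ∈ EHset G := by
    refine ((hfin.union (hfin'.union hfin3))).subset ?_
    rintro _ ⟨γ, rfl⟩
    have hx : ∀ x ∈ G, (γ : H)⁻¹ * x ∉ elem v → x⁻¹ * (γ * u * (γ : H)⁻¹) * x ∈ elem v := by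
      intro x hx hγ
      have := hcon _ (G.mul_mem (G.inv_mem γ.2) hx) hγ
      rwa [mul_inv_rev, inv_inv, show x⁻¹ * γ * u * ((γ : H)⁻¹ * x) =
        x⁻¹ * (γ * u * (γ : H)⁻¹) * x by group] at this
    -- at most one of the three translates lies in the elementary subgroup
    have hxy : ∀ x y, x⁻¹ * y ∉ elem v → (γ : H)⁻¹ * x ∈ elem v → (γ : H)⁻¹ * y ∉ elem v := by
      intro x y hne h1 h2
      exact hne (by simpa using (elem v).mul_mem ((elem v).inv_mem h1) h2)
    have hx1 := hx 1 G.one_mem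
    have hx2 := hx g hgG
    have hx3 := hx g' hg'G
    have k1 := hxy 1 g (by simpa using hg)
    have k2 := hxy 1 g' (by simpa using hg'E)
    have k3 := hxy g g' hgg'
    simp only [inv_one, one_mul, mul_one] at hx1 k1 k2
    simp only [Set.mem_union, Set.mem_ofPred_eq]
    tauto
  rw [hE] at hmem
  exact hu hmem

/-- Killing pattern: a finite list of elements of `G` outside `elem v` such that only the identity
stays in `elem v` when conjugated by all the initial products. -/
theorem exists_pattern (hd : HypM d δ) {G : Subgroup H} {v g : H} {κ : ℕ} (hv : Lox d v κ)
    (hvG : v ∈ G) (hgG : g ∈ G) (hg : g ∉ elem v) (hE : EHset G = {1}) :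
    ∃ l : List H, (∀ γ ∈ l, γ ∈ G ∧ γ ∉ elem v) ∧
      ∀ k : H, (∀ n, (l.take n).prod⁻¹ * k * (l.take n).prod ∈ elem v) → k = 1 := by
  classical
  have key : ∀ S : Finset H, (1 : H) ∉ S → ∃ l : List H, (∀ γ ∈ l, γ ∈ G ∧ γ ∉ elem v) ∧
      ∀ k ∈ S, ∃ n, (l.take n).prod⁻¹ * k * (l.take n).prod ∉ elem v := by
    intro S
    induction S using Finset.induction_on with
    | empty => intro _; exact ⟨[], by simp, by simp⟩
    | insert k S hkS ih =>
      intro h1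
      rw [Finset.mem_insert, not_or] at h1
      obtain ⟨l, hl, hkill⟩ := ih h1.2
      obtain ⟨γ, hγG, hγ, hγ'⟩ := hd.exists_conj_not_mem hv hvG hgG hg hE
        (u := l.prod⁻¹ * k * l.prod) (fun h => h1.1 (by
          have : k = l.prod * (l.prod⁻¹ * k * l.prod) * l.prod⁻¹ := by group
          rw [this, h]; group))
      refine ⟨l ++ [γ], ?_, ?_⟩
      · intro x hx
        rcases List.mem_append.mp hx with h | h
        · exact hl x h
        · rw [List.mem_singleton.mp h]; exact ⟨hγG, hγ⟩
      · intro x hx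
        rcases Finset.mem_insert.mp hx with rfl | h
        · refine ⟨l.length + 1, ?_⟩
          rw [List.take_of_length_le (by simp), List.prod_append, List.prod_singleton]
          rwa [show (l.prod * γ)⁻¹ * x * (l.prod * γ) = γ⁻¹ * (l.prod⁻¹ * x * l.prod) * γ by group]
        · obtain ⟨n, hn⟩ := hkill x h
          rcases le_total n l.length with hle | hle
          · exact ⟨n, by rwa [List.take_append_of_le_length hle]⟩
          · refine ⟨l.length, ?_⟩
            rw [List.take_append_of_le_length le_rfl]
            rwa [List.take_of_length_le hle, ← List.take_length (l := l)] at hn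
  have hfin := hv.elem_inter_finite hd hg
  obtain ⟨l, hl, hkill⟩ := key ((hfin.image (fun k => g⁻¹ * k * g)).toFinset.erase 1) (by simp)
  refine ⟨g :: l, ?_, fun k hk => ?_⟩
  · intro x hx
    rcases List.mem_cons.mp hx with rfl | h
    · exact ⟨hgG, hg⟩
    · exact hl x h
  · by_contra hne
    have e1 := hk 0
    have e2 := hk 1
    simp only [List.take_zero, List.prod_nil, List.take_succ_cons, List.prod_cons, mul_one, inv_one,
      one_mul] at e1 e2
    obtain ⟨n, hn⟩ := hkill (g⁻¹ * k * g) (by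
      rw [Finset.mem_erase, Set.Finite.mem_toFinset]
      refine ⟨fun h => hne ?_, k, ⟨e1, e2⟩, rfl⟩
      have : k = g * (g⁻¹ * k * g) * g⁻¹ := by group
      rw [this, h]; group)
    have e3 := hk (n + 1)
    rw [List.take_succ_cons, List.prod_cons] at e3
    apply hn
    rwa [show (g * (l.take n).prod)⁻¹ * k * (g * (l.take n).prod) =
      (l.take n).prod⁻¹ * (g⁻¹ * k * g) * (l.take n).prod by group] at e3

end HypM

/-! ### Fellow travelling broken geodesics -/

/-- A broken geodesic all of whose segments are long and of the type `Sg`, and whose corners cannot be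
seen along any segment of type `Sg`. -/
structure Track {H : Type*} (d : H → H → ℕ) (Sg : H → H → Prop) (X : ℤ → H) (e R E L : ℕ) : Prop where
  line : HypM.Line d X e
  long : ∀ j, L ≤ d (X j) (X (j + 1))
  seg : ∀ j, Sg (X j) (X (j + 1))
  corner : ∀ j x y, Sg x y → ∃ z, d (X j) z ≤ R ∧
    d (X (j - 1)) z + d z (X (j + 1)) ≤ d (X (j - 1)) (X (j + 1)) + e ∧
    d x y + E < d x z + d z y

namespace Track

variable {H : Type*} [Group H] {d : H → H → ℕ} {δ : ℕ} {Sg : H → H → Prop} {X Z : ℤ → H}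
  {e R E L : ℕ}

theorem rev (hd : HypM d δ) (hs : ∀ x y, Sg x y → Sg y x) (hX : Track d Sg X e R E L) :
    Track d Sg (fun j => X (-j)) e R E L where
  line i j k hij hjk := by
    have := hX.line (-k) (-j) (-i) (by omega) (by omega)
    change d (X (-i)) (X (-j)) + d (X (-j)) (X (-k)) ≤ d (X (-i)) (X (-k)) + e
    have e1 := hd.symm (X (-k)) (X (-j))
    have e2 := hd.symm (X (-j)) (X (-i))
    have e3 := hd.symm (X (-k)) (X (-i))
    omega
  long j := by
    have := hX.long (-(j + 1))
    rw [show -(j + 1) + 1 = -j by ring] at this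
    rwa [hd.symm]
  seg j := by
    have := hX.seg (-(j + 1))
    rw [show -(j + 1) + 1 = -j by ring] at this
    exact hs _ _ this
  corner j x y hxy := by
    obtain ⟨z, h1, h2, h3⟩ := hX.corner (-j) x y hxy
    refine ⟨z, h1, ?_, h3⟩
    rw [show -(j - 1) = -j + 1 by ring, show -(j + 1) = -j - 1 by ring]
    have := hd.symm z (X (-j - 1))
    have := hd.symm z (X (-j + 1))
    have := hd.symm (X (-j + 1)) (X (-j - 1))
    omega

theorem smul (hd : HypM d δ) (hs : ∀ g x y, Sg x y → Sg (g * x) (g * y))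
    (hX : Track d Sg X e R E L) (h : H) : Track d Sg (fun j => h * X j) e R E L where
  line := hX.line.smul hd h
  long j := by rw [hd.inv]; exact hX.long j
  seg j := hs _ _ _ (hX.seg j)
  corner j x y hxy := by
    obtain ⟨z, h1, h2, h3⟩ := hX.corner j (h⁻¹ * x) (h⁻¹ * y) (hs _ _ _ hxy)
    refine ⟨h * z, by rwa [hd.inv], by simpa only [hd.inv] using h2, ?_⟩
    have e1 := hd.inv h (h⁻¹ * x) z
    have e2 := hd.inv h z (h⁻¹ * y)
    have e3 := hd.inv h (h⁻¹ * x) (h⁻¹ * y)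
    rw [mul_inv_cancel_left] at e1 e2 e3
    rw [mul_inv_cancel_left] at e3
    omega

/-- Every corner of the stretch of `X` that fellow travels `Z` is close to a corner of `Z`. -/
theorem near_corner (hd : HypM d δ) (hX : Track d Sg X e R E L) (hZ : Track d Sg Z e R E L) {w : ℕ}
    (hE : 3 * e + w + 2 * δ ≤ E) {i j k s u : ℤ} (hij : i < j) (hjk : j < k) (hsu : s < u)
    (hw : d (Z s) (X i) + d (X i) (X k) + d (X k) (Z u) ≤ d (Z s) (Z u) + w) :
    ∃ t, s ≤ t ∧ t ≤ u ∧ d (X j) (Z t) ≤ R + 9 * e + 3 * w + 6 * δ := by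
  have h1 := hX.line i j k hij.le hjk.le
  have h2 := hd.tri (Z s) (X i) (X j)
  have h3 := hd.tri (X j) (X k) (Z u)
  obtain ⟨t, hst, htu, ht⟩ := HypM.Line.near hd hZ.line hsu (z := X j) (e := e + w) (by omega)
  obtain ⟨z, hzR, hz1, hz2⟩ := hX.corner j _ _ (hZ.seg t)
  have h4 := hX.line i (j - 1) k (by omega) (by omega)
  have h5 := hX.line (j - 1) (j + 1) k (by omega) (by omega)
  have h6 := hd.tri (X i) (X (j - 1)) z
  have h7 := hd.tri z (X (j + 1)) (X k)
  have h8 := hd.tri (Z s) (X i) z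
  have h9 := hd.tri z (X k) (Z u)
  have h10 : d (Z s) z + d z (Z u) ≤ d (Z s) (Z u) + (3 * e + w) := by omega
  have l1 := hZ.line s t (t + 1) hst (by omega)
  have l2 := hZ.line s (t + 1) u (by omega) (by omega)
  have l3 := hZ.line s t u (by omega) (by omega)
  have l4 := hZ.line t (t + 1) u (by omega) (by omega)
  have l5 := hZ.line s t (t + 1) (by omega) (by omega)
  have t1 := hd.tri (Z s) (Z t) (X j)
  have t2 := hd.tri (X j) (Z (t + 1)) (Z u)
  have t3 := hd.tri (Z s) (X j) z
  have t4 := hd.tri (Z s) z (Z u)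
  have t5 := hd.tri z (X j) (Z (t + 1))
  have t6 := hd.symm z (X j)
  have t7 := hd.symm (Z t) (X j)
  have t8 := hd.tri (Z s) z (X j)
  have t9 := hd.tri z (X j) (Z u)
  have t10 := hd.tri (X j) z (Z u)
  have t11 := hd.tri (X j) z (Z (t + 1))
  have t12 := hd.tri (Z t) z (X j)
  have t13 := hd.symm (Z t) z
  have t14 := hd.symm z (Z (t + 1))
  by_contra hcon
  push Not at hcon
  have c1 := hcon t hst htu.le
  have c2 := hcon (t + 1) (by omega) (by omega)
  rcases hd.almost_between (Z (t + 1)) h10 with h11 | h11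
  · rcases hd.almost_between (Z t) h11 with h12 | h12 <;> omega
  · omega

/-- Corners of `Z` matched to consecutive corners of `X` are consecutive. -/
theorem consecutive (hd : HypM d δ) (hX : Track d Sg X e R E L) (hZ : Track d Sg Z e R E L) {C : ℕ}
    (hE : 2 * e + 2 * δ ≤ E) (hL : R + C + 6 * e + 6 * δ < L) {j s t : ℤ}
    (h1 : d (X j) (Z s) ≤ C) (h2 : d (X (j + 1)) (Z t) ≤ C) : t ≤ s + 1 := by
  by_contra hcon
  push Not at hcon
  obtain ⟨z, hzR, hz1, hz2⟩ := hZ.corner (s + 1) _ _ (hX.seg j)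
  rw [add_sub_cancel_right] at hz1
  have a1 := hZ.line s (s + 1 + 1) t (by omega) (by omega)
  have a2 := hd.tri z (Z (s + 1 + 1)) (Z t)
  have a3 := hZ.long s
  have a4 := hZ.long (s + 1)
  have a5 := hZ.line (s + 1) (s + 1 + 1) t (by omega) (by omega)
  have a6 := hd.tri (Z (s + 1)) z (Z t)
  have a7 := hd.tri (Z s) z (Z (s + 1))
  have a8 := hd.symm z (Z (s + 1))
  have a9 := hd.tri z (X (j + 1)) (Z t)
  have a10 := hd.tri (Z s) (X j) z
  have a11 := hd.symm (Z s) (X j)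
  have a12 : d (Z s) z + d z (Z t) ≤ d (Z s) (Z t) + 2 * e := by omega
  have a13 := hd.tri (Z s) z (X j)
  have a14 := hd.symm z (X (j + 1))
  have a15 := hd.symm z (X j)
  rcases hd.almost_between (X (j + 1)) a12 with h | h
  · rcases hd.almost_between (X j) h with h' | h' <;> omega
  · omega

/-- Two tracks that fellow travel in the same direction have matching corners. -/
theorem matching (hd : HypM d δ)
    (hX : Track d Sg X e R E L) (hZ : Track d Sg Z e R E L) {w C : ℕ}
    (hE : 3 * e + w + 2 * δ ≤ E) (hC : R + 9 * e + 3 * w + 6 * δ ≤ C)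
    (hL : R + 4 * C + 6 * e + 6 * δ + w < L) {i k s u : ℤ} (hsu : s < u)
    (hw : d (Z s) (X i) + d (X i) (X k) + d (X k) (Z u) ≤ d (Z s) (Z u) + w) :
    ∃ σ, ∀ j, i < j → j < k → d (X j) (Z (j + σ)) ≤ C := by
  have h1 : ∀ j, ∃ t, i < j → j < k → s ≤ t ∧ t ≤ u ∧ d (X j) (Z t) ≤ C := by
    intro j
    by_cases h : i < j ∧ j < k
    · obtain ⟨t, h1, h2, h3⟩ := near_corner hd hX hZ hE h.1 h.2 hsu hw
      exact ⟨t, fun _ _ => ⟨h1, h2, h3.trans hC⟩⟩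
    · exact ⟨0, fun h1 h2 => absurd ⟨h1, h2⟩ h⟩
  choose τ hτ using h1
  have hstep : ∀ j, i < j → j + 1 < k → τ (j + 1) = τ j + 1 := by
    intro j hij hjk
    obtain ⟨a1, a2, a3⟩ := hτ j hij (by omega)
    obtain ⟨b1, b2, b3⟩ := hτ (j + 1) (by omega) hjk
    have c1 := consecutive hd hX hZ (C := C) (by omega) (by omega) a3 b3
    refine le_antisymm c1 ?_
    by_contra hcon
    have c2 := hX.long j
    have c3 := hX.line j (j + 1) k (by omega) (by omega)
    have c4 := hX.line i j k (by omega) (by omega)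
    have c5 := hd.tri (Z s) (X i) (X j)
    have c6 := hd.tri (X (j + 1)) (X k) (Z u)
    have c7 := hZ.line s (τ (j + 1)) (τ j) (by omega) (by omega)
    have c8 := hZ.line (τ (j + 1)) (τ j) u (by omega) (by omega)
    have c9 := hZ.line s (τ (j + 1)) u (by omega) (by omega)
    have c10 := hd.tri (Z s) (Z (τ (j + 1))) (X j)
    have c11 := hd.tri (Z s) (X (j + 1)) (Z (τ (j + 1)))
    have c12 := hd.tri (Z s) (X j) (Z u)
    have c13 := hd.tri (X j) (Z (τ j)) (Z u)
    have c14 := hd.tri (Z (τ j)) (X j) (Z u)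
    have c15 := hd.symm (Z (τ j)) (X j)
    have c16 := hd.tri (Z (τ (j + 1))) (Z (τ j)) (Z u)
    have c17 := hd.symm (Z (τ (j + 1))) (X (j + 1))
    have c18 := hd.tri (X (j + 1)) (Z (τ (j + 1))) (Z u)
    have c19 := hd.tri (Z (τ (j + 1))) (X (j + 1)) (Z u)
    have c20 := hd.tri (X j) (Z (τ j)) (X (j + 1))
    have c21 := hd.tri (Z (τ j)) (Z (τ (j + 1))) (X (j + 1))
    have c22 := hd.symm (Z (τ (j + 1))) (Z (τ j))
    have c23 := hd.tri (Z s) (X i) (X (j + 1))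
    have c24 := hd.tri (Z s) (X (j + 1)) (Z u)
    have c25 := hd.tri (Z s) (Z (τ j)) (X j)
    have c26 := hd.tri (Z s) (X j) (Z (τ j))
    omega
  by_cases hik : i + 1 < k
  · refine ⟨τ (i + 1) - (i + 1), ?_⟩
    have hall : ∀ n : ℕ, i + 1 + n < k → τ (i + 1 + n) = τ (i + 1) + n := by
      intro n
      induction n with
      | zero => simp
      | succ n ih =>
        intro h
        push_cast at h ⊢
        rw [← add_assoc, hstep _ (by omega) (by omega), ih (by omega), add_assoc]
    intro j hij hjk
    have h2 := hall (j - (i + 1)).toNat (by omega)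
    have h3 : i + 1 + ((j - (i + 1)).toNat : ℤ) = j := by omega
    rw [h3] at h2
    have h4 := (hτ j hij hjk).2.2
    rwa [h2, show τ (i + 1) + ((j - (i + 1)).toNat : ℤ) = j + (τ (i + 1) - (i + 1)) by omega] at h4
  · exact ⟨0, fun j h1 h2 => by omega⟩

/-- Two tracks that fellow travel in opposite directions have matching corners. -/
theorem matching_rev (hd : HypM d δ) (hs : ∀ x y, Sg x y → Sg y x)
    (hX : Track d Sg X e R E L) (hZ : Track d Sg Z e R E L) {w C : ℕ}
    (hE : 3 * e + w + 2 * δ ≤ E) (hC : R + 9 * e + 3 * w + 6 * δ ≤ C)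
    (hL : R + 4 * C + 6 * e + 6 * δ + w < L) {i k s u : ℤ} (hsu : u < s)
    (hw : d (Z s) (X i) + d (X i) (X k) + d (X k) (Z u) ≤ d (Z s) (Z u) + w) :
    ∃ σ, ∀ j, i < j → j < k → d (X j) (Z (σ - j)) ≤ C := by
  obtain ⟨σ, hσ⟩ := matching hd hX (hZ.rev hd hs) hE hC hL (s := -s) (u := -u) (by omega)
    (by simpa only [neg_neg] using hw)
  refine ⟨-σ, fun j h1 h2 => ?_⟩
  have := hσ j h1 h2
  rwa [show -(j + σ) = -σ - j by ring] at this

end Track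

/-! ### The hull of a broken geodesic -/

/-- The union of all geodesics joining consecutive terms of `X`. -/
def hull {H : Type*} (d : H → H → ℕ) (X : ℤ → H) : Set H :=
  {z | ∃ t, d (X t) z + d z (X (t + 1)) = d (X t) (X (t + 1))}

namespace HypM

variable {H : Type*} [Group H] {d : H → H → ℕ} {δ : ℕ} {X : ℤ → H} {e : ℕ}

theorem mem_hull (hd : HypM d δ) (X : ℤ → H) (t : ℤ) : X t ∈ hull d X :=
  ⟨t, by rw [hd.self]; omega⟩

theorem hull_smul (hd : HypM d δ) (X : ℤ → H) (h : H) :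
    hull d (fun t => h * X t) = (fun z => h * z) '' hull d X := by
  ext z
  constructor
  · rintro ⟨t, ht⟩
    refine ⟨h⁻¹ * z, ⟨t, ?_⟩, mul_inv_cancel_left h z⟩
    rw [← hd.inv h, ← hd.inv h (h⁻¹ * z), mul_inv_cancel_left]
    rwa [hd.inv h (X t) (X (t + 1))] at ht
  · rintro ⟨z, ⟨t, ht⟩, rfl⟩
    exact ⟨t, by simpa only [hd.inv] using ht⟩

theorem hull_shift (d : H → H → ℕ) (X : ℤ → H) (m : ℤ) : hull d (fun t => X (t + m)) = hull d X := by
  ext z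
  constructor
  · rintro ⟨t, ht⟩
    exact ⟨t + m, by rwa [add_right_comm t m 1]⟩
  · rintro ⟨t, ht⟩
    refine ⟨t - m, ?_⟩
    simp only [sub_add_cancel, show t - m + 1 + m = t + 1 by ring]
    exact ht

/-- Points of different segments, in relation to the endpoints of their segments. -/
theorem hull_chain_lt (hd : HypM d δ) (hX : Line d X e) {x y : H} {t t' : ℤ}
    (hx : d (X t) x + d x (X (t + 1)) = d (X t) (X (t + 1)))
    (hy : d (X t') y + d y (X (t' + 1)) = d (X t') (X (t' + 1))) (htt : t < t') :
    d x (X (t + 1)) + d (X (t + 1)) (X t') + d (X t') y ≤ d x y + 2 * e ∧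
      d (X t) x + d x y + d y (X (t' + 1)) ≤ d (X t) (X (t' + 1)) + 2 * e := by
  have h1 := hX t (t + 1) (t' + 1) (by omega) (by omega)
  have h2 := hX (t + 1) t' (t' + 1) (by omega) (by omega)
  have h3 := hd.tri (X t) x (X (t' + 1))
  have h4 := hd.tri x y (X (t' + 1))
  have h5 := hd.tri x (X (t + 1)) y
  have h6 := hd.tri (X (t + 1)) (X t') y
  omega

theorem hull_chain (hd : HypM d δ) (hX : Line d X e) {x y : H} (hx : x ∈ hull d X)
    (hy : y ∈ hull d X) :
    ∃ i k, i < k ∧ (d (X i) x + d x y + d y (X k) ≤ d (X i) (X k) + (2 * e + δ) ∨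
      d (X i) y + d y x + d x (X k) ≤ d (X i) (X k) + (2 * e + δ)) := by
  obtain ⟨t, ht⟩ := hx
  obtain ⟨t', ht'⟩ := hy
  rcases lt_trichotomy t t' with h | rfl | h
  · have := (hd.hull_chain_lt hX ht ht' h).2
    exact ⟨t, t' + 1, by omega, Or.inl (by omega)⟩
  · refine ⟨t, t + 1, by omega, ?_⟩
    have h1 := hd.hyp x y (X t) (X (t + 1))
    have h2 := hd.symm x y
    have h3 := hd.symm x (X t)
    have h4 := hd.symm y (X t)
    omega
  · have := (hd.hull_chain_lt hX ht' ht h).2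
    exact ⟨t', t + 1, by omega, Or.inr (by omega)⟩

theorem hull_qc (hd : HypM d δ) (hX : Line d X e) : QC d (5 * e + 6 * δ) (hull d X) := by
  have key : ∀ x z y : H, ∀ i k, i < k → d x z + d z y = d x y →
      d (X i) x + d x y + d y (X k) ≤ d (X i) (X k) + (2 * e + δ) →
      ∃ y' ∈ hull d X, d z y' ≤ 5 * e + 6 * δ := by
    intro x z y i k hik hz h
    have h1 := hd.tri (X i) x z
    have h2 := hd.tri z y (X k)
    obtain ⟨t, -, -, ht⟩ := Line.near hd hX hik (z := z) (e := 2 * e + δ) (by omega)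
    obtain ⟨z', h3, h4⟩ := hd.near_between ht
    exact ⟨z', ⟨t, h3⟩, by omega⟩
  intro x hx y hy z hz
  obtain ⟨i, k, hik, h | h⟩ := hd.hull_chain hX hx hy
  · exact key x z y i k hik hz h
  · refine key y z x i k hik ?_ h
    have := hd.symm x y
    have := hd.symm x z
    have := hd.symm z y
    omega

theorem line_upper (hd : HypM d δ) {U : ℕ} (hU : ∀ j, d (X j) (X (j + 1)) ≤ U) (i : ℤ) (n : ℕ) :
    d (X i) (X (i + n)) ≤ n * U := by
  induction n with
  | zero => simp [hd.self]
  | succ n ih =>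
    have h1 := hd.tri (X i) (X (i + n)) (X (i + n + 1))
    have h2 := hU (i + n)
    push_cast
    rw [← add_assoc, add_mul, one_mul]
    omega

theorem line_lower (hX : Line d X e) {u : ℕ}
    (hu : ∀ j, u + e ≤ d (X j) (X (j + 1))) (i : ℤ) (n : ℕ) :
    n * u ≤ d (X i) (X (i + n)) := by
  induction n with
  | zero => simp
  | succ n ih =>
    have h1 := hX i (i + n) (i + n + 1) (by omega) (by omega)
    have h2 := hu (i + n)
    push_cast
    rw [← add_assoc, add_mul, one_mul]
    omega

/-- Points of the hull lying in segments at most `n` apart are at most `n + 1` segments apart. -/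
theorem hull_upper (hd : HypM d δ) {U : ℕ} (hU : ∀ j, d (X j) (X (j + 1)) ≤ U) {x y : H} {t t' : ℤ}
    (hx : d (X t) x + d x (X (t + 1)) = d (X t) (X (t + 1)))
    (hy : d (X t') y + d y (X (t' + 1)) = d (X t') (X (t' + 1))) {n : ℕ}
    (h1 : t ≤ t' + n) (h2 : t' ≤ t + n) : d x y ≤ (n + 2) * U := by
  have key : ∀ i k : ℤ, i ≤ k → k ≤ i + n → d (X i) (X k) ≤ n * U := by
    intro i k hik hk
    obtain ⟨m, rfl⟩ := Int.le.dest hik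
    exact (hd.line_upper hU i m).trans (Nat.mul_le_mul_right _ (by omega))
  have h3 := hU t
  have h4 := hU t'
  have h5 : d (X t) (X t') ≤ n * U := by
    rcases le_total t t' with h | h
    · exact key t t' h h2
    · rw [hd.symm]; exact key t' t h h1
  have h6 := hd.tri x (X t) y
  have h7 := hd.tri (X t) (X t') y
  have h8 := hd.symm x (X t)
  have : (n + 2) * U = n * U + 2 * U := by ring
  omega

/-- If the hull of `Z` has a large projection to the hull of `X`, then `Z` fellow travels a long
stretch of `X`. -/
theorem window (hd : HypM d δ) {Z : ℤ → H} (hX : Line d X e) (hZ : Line d Z e) {U W Q : ℕ}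
    (hQ : QC d Q (hull d X))
    (hU : ∀ j, d (X j) (X (j + 1)) ≤ U) {x y : H} (hx : x ∈ hull d Z) (hy : y ∈ hull d Z)
    (hxy : (W + 2) * U + (2 * (2 * (Q + δ) + 1) + δ) < dproj d (hull d X) x y) :
    ∃ i k s u : ℤ, i + W ≤ k ∧ s ≠ u ∧ d (Z s) (X i) + d (X i) (X k) + d (X k) (Z u) ≤
      d (Z s) (Z u) + (4 * e + 2 * δ + 2 * (2 * (Q + δ) + 1)) := by
  -- `x` and `y` may be exchanged so that the projection of `x` comes first
  have key : ∀ x y p q : H, ∀ t t' : ℤ, x ∈ hull d Z → y ∈ hull d Z →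
      d (X t) p + d p (X (t + 1)) = d (X t) (X (t + 1)) →
      d (X t') q + d q (X (t' + 1)) = d (X t') (X (t' + 1)) → t + W < t' →
      d x p + d p q + d q y ≤ d x y + (2 * (2 * (Q + δ) + 1) + δ) →
      ∃ i k s u : ℤ, i + W ≤ k ∧ s ≠ u ∧ d (Z s) (X i) + d (X i) (X k) + d (X k) (Z u) ≤
        d (Z s) (Z u) + (4 * e + 2 * δ + 2 * (2 * (Q + δ) + 1)) := by
    intro x y p q t t' hx hy hp hq htt h
    have h1 := (hd.hull_chain_lt hX hp hq (by omega)).1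
    have h2 := hd.tri x p (X (t + 1))
    have h3 := hd.tri (X t') q y
    obtain ⟨i, k, hik, h4 | h4⟩ := hd.hull_chain hZ hx hy
    · refine ⟨t + 1, t', i, k, by omega, by omega, ?_⟩
      have h5 := hd.tri (Z i) x (X (t + 1))
      have h6 := hd.tri (X t') y (Z k)
      omega
    · refine ⟨t + 1, t', k, i, by omega, by omega, ?_⟩
      have h5 := hd.tri (Z k) x (X (t + 1))
      have h6 := hd.tri (X t') y (Z i)
      have h7 := hd.symm (Z k) x
      have h8 := hd.symm (Z i) y
      have h9 := hd.symm x y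
      have h10 := hd.symm (Z k) (Z i)
      omega
  have hne : (hull d X).Nonempty := ⟨_, hd.mem_hull X 0⟩
  obtain ⟨p, hp⟩ := exists_near d hne x
  obtain ⟨q, hq⟩ := exists_near d hne y
  have h1 := hd.dproj_le_near hQ hp hq
  have h2 := hd.proj_between hQ hp hq (by omega)
  obtain ⟨t, ht⟩ := hp.1
  obtain ⟨t', ht'⟩ := hq.1
  by_cases hc : t ≤ t' + W ∧ t' ≤ t + W
  · have := hd.hull_upper hU ht ht' hc.1 hc.2
    omega
  · rcases lt_or_ge (t + W) t' with h | h
    · exact key x y p q t t' hx hy ht ht' h h2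
    · refine key y x q p t' t hy hx ht' ht (by omega) ?_
      have := hd.symm y q
      have := hd.symm q p
      have := hd.symm p x
      have := hd.symm y x
      omega

end HypM

/-! ### Corners and exponents -/

namespace HypM

variable {H : Type*} [Group H] {d : H → H → ℕ} {δ : ℕ}

/-- If many translates of `b` by powers of `w` are close to a translate of the axis of `v`, then `w`
and `v` have conjugate powers. -/
theorem pigeonhole_axis {v w A b : H} {S : Finset H} (hw : ∀ p : ℤ, p ≠ 0 → w ^ p ≠ 1)
    (h : ∀ j : ℕ, j ≤ S.card → ∃ t : ℤ, v ^ (-t) * (A⁻¹ * (w ^ (j : ℤ) * b)) ∈ S) :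
    ∃ p q : ℤ, p ≠ 0 ∧ q ≠ 0 ∧ v ^ q = A⁻¹ * w ^ p * A := by
  have h' : ∀ j : ℕ, ∃ t : ℤ, j ≤ S.card → v ^ (-t) * (A⁻¹ * (w ^ (j : ℤ) * b)) ∈ S := fun j => by
    by_cases hj : j ≤ S.card
    · obtain ⟨t, ht⟩ := h j hj; exact ⟨t, fun _ => ht⟩
    · exact ⟨0, fun h => absurd h hj⟩
  choose t ht using h'
  obtain ⟨i, hi, j, hj, hij, heq⟩ := Finset.exists_ne_map_eq_of_card_lt_of_maps_to
    (s := Finset.range (S.card + 1)) (t := S) (by simp)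
    (f := fun j : ℕ => v ^ (-t j) * (A⁻¹ * (w ^ (j : ℤ) * b)))
    (fun j hj => ht j (Nat.lt_succ_iff.mp (Finset.mem_range.mp hj)))
  have hpq : v ^ (t j - t i) = A⁻¹ * w ^ ((j : ℤ) - i) * A := by
    have e1 : v ^ (t j - t i) = v ^ t j * v ^ (-t i) := by rw [← zpow_add]; congr 1
    have e2 : v ^ t j * (v ^ (-t i) * (A⁻¹ * (w ^ (i : ℤ) * b))) = A⁻¹ * (w ^ (j : ℤ) * b) := by
      rw [heq, ← mul_assoc, ← zpow_add, add_neg_cancel, zpow_zero, one_mul]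
    rw [e1, zpow_sub]
    calc v ^ t j * v ^ (-t i)
        = v ^ t j * (v ^ (-t i) * (A⁻¹ * (w ^ (i : ℤ) * b))) * (A⁻¹ * (w ^ (i : ℤ) * b))⁻¹ := by
          group
      _ = A⁻¹ * (w ^ (j : ℤ) * b) * (A⁻¹ * (w ^ (i : ℤ) * b))⁻¹ := by rw [e2]
      _ = A⁻¹ * (w ^ (j : ℤ) * (w ^ (i : ℤ))⁻¹) * A := by group
  have hne : (j : ℤ) - i ≠ 0 := by omega
  refine ⟨_, _, hne, fun h0 => hw _ hne ?_, hpq⟩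
  rw [h0, zpow_zero] at hpq
  have : w ^ ((j : ℤ) - i) = A * (A⁻¹ * w ^ ((j : ℤ) - i) * A) * A⁻¹ := by group
  rw [this, ← hpq]; group

/-- A corner between two segments in the direction of `v` is not contained in a neighbourhood of a
single segment in the direction of `v'`. -/
theorem corner (hd : HypM d δ) {v v' g : H} {κ κ' : ℕ} (hv : Lox d v κ) (hv' : Lox d v' κ')
    (hg : g ∉ elem v) (E : ℕ) : ∃ J : ℕ, ∀ (A : H) (n : ℤ), ∃ i : ℤ, 0 ≤ i ∧ i ≤ J ∧
      (d A (A * v' ^ n) + E < d A (v ^ i) + d (v ^ i) (A * v' ^ n) ∨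
        d A (A * v' ^ n) + E < d A (g⁻¹ * v ^ (-i)) + d (g⁻¹ * v ^ (-i)) (A * v' ^ n)) := by
  set S := (hd.fin (d 1 v' + κ' + 2 * E + 3 * δ)).toFinset with hS
  refine ⟨S.card, fun A n => ?_⟩
  by_contra hcon
  push Not at hcon
  have key : ∀ z, d A z + d z (A * v' ^ n) ≤ d A (A * v' ^ n) + E →
      ∃ t : ℤ, v' ^ (-t) * (A⁻¹ * z) ∈ S := by
    intro z hz
    obtain ⟨t, ht⟩ := hv'.near hd (i := 0) (k := n) (z := A⁻¹ * z) (e := E) (by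
      have e1 := hd.inv A 1 (A⁻¹ * z)
      have e2 := hd.inv A (A⁻¹ * z) (v' ^ n)
      have e3 := hd.inv A 1 (v' ^ n)
      rw [mul_inv_cancel_left] at e1 e2
      rw [mul_one] at e1 e3
      rw [zpow_zero]
      omega)
    refine ⟨t, ?_⟩
    rw [hS, Set.Finite.mem_toFinset]
    change d 1 _ ≤ _
    rwa [zpow_neg, ← hd.d_eq]
  obtain ⟨p, q, hp, hq, h1⟩ := pigeonhole_axis (v := v') (w := v) (A := A) (b := 1) (S := S)
    (fun p hp => hv.ne_one hd hp) (fun j hj => by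
      rw [mul_one]
      exact key _ (hcon j (by omega) (by omega)).1)
  have hconj : ∀ p : ℤ, (g⁻¹ * v⁻¹ * g) ^ p = g⁻¹ * v ^ (-p) * g := fun p => by
    have := conj_zpow (a := g⁻¹) (b := v⁻¹) (i := p)
    rw [inv_inv] at this
    rw [this, inv_zpow, zpow_neg]
  obtain ⟨p', q', hp', hq', h2⟩ := pigeonhole_axis (v := v') (w := g⁻¹ * v⁻¹ * g) (A := A)
    (b := g⁻¹) (S := S)
    (fun p hp h => hv.ne_one hd (n := -p) (by omega) (by
      rw [hconj] at h
      have : v ^ (-p) = g * (g⁻¹ * v ^ (-p) * g) * g⁻¹ := by group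
      rw [this, h]; group))
    (fun j hj => by
      rw [hconj, mul_inv_cancel_right]
      exact key _ (hcon j (by omega) (by omega)).2)
  apply hg
  refine ⟨p * q', -(p' * q), mul_ne_zero hp hq', neg_ne_zero.mpr (mul_ne_zero hp' hq), ?_⟩
  have e1 : v ^ p = A * v' ^ q * A⁻¹ := by rw [h1]; group
  have e2 : (g⁻¹ * v⁻¹ * g) ^ p' = A * v' ^ q' * A⁻¹ := by rw [h2]; group
  have e3 : v ^ (p * q') = g⁻¹ * v ^ (-(p' * q)) * g := by
    rw [← hconj, zpow_mul, zpow_mul, e1, e2, conj_zpow, conj_zpow, ← zpow_mul, ← zpow_mul, mul_comm]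
  rw [e3]; group

/-- Uniformly in the element `k` of a finite set: if conjugation by a large power of `v` keeps `k` in a
given finite set, then `k` commutes with a fixed power of `v`. -/
theorem exists_comm {v : H} {K B : Set H} (hK : K.Finite) (hB : B.Finite) :
    ∃ M N : ℕ, 0 < M ∧ ∀ k ∈ K, ∀ n : ℕ, N ≤ n → v ^ (-(n : ℤ)) * k * v ^ (n : ℤ) ∈ B →
      Commute k (v ^ M) := by
  classical
  have h1 : ∀ k : H, ∃ M N : ℕ, 0 < M ∧ ∀ n : ℕ, N ≤ n → v ^ (-(n : ℤ)) * k * v ^ (n : ℤ) ∈ B →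
      Commute k (v ^ M) := by
    intro k
    by_cases hk : ∃ M : ℕ, 0 < M ∧ Commute k (v ^ M)
    · obtain ⟨M, hM, hc⟩ := hk
      exact ⟨M, 0, hM, fun _ _ _ => hc⟩
    · push Not at hk
      have hlt : ∀ n m : ℕ, n < m → v ^ (-(n : ℤ)) * k * v ^ (n : ℤ) ≠
          v ^ (-(m : ℤ)) * k * v ^ (m : ℤ) := by
        intro n m hnm heq
        obtain ⟨p, rfl⟩ := Nat.exists_eq_add_of_lt hnm
        apply hk (p + 1) (by omega)
        have e1 : v ^ ((n + p + 1 : ℕ) : ℤ) = v ^ (p + 1) * v ^ (n : ℤ) := by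
          rw [zpow_natCast, zpow_natCast, ← pow_add]; congr 1; ring
        rw [zpow_neg, zpow_neg, e1] at heq
        have e2 : v ^ (n : ℤ) * ((v ^ (n : ℤ))⁻¹ * k * v ^ (n : ℤ)) * (v ^ (n : ℤ))⁻¹ = k := by group
        rw [heq] at e2
        have e3 : (v ^ (p + 1))⁻¹ * k * v ^ (p + 1) = k := by
          refine Eq.trans ?_ e2
          group
        change k * v ^ (p + 1) = v ^ (p + 1) * k
        conv_rhs => rw [← e3]
        group
      have hinj : Injective (fun n : ℕ => v ^ (-(n : ℤ)) * k * v ^ (n : ℤ)) := by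
        intro n m hnm
        rcases lt_trichotomy n m with h | h | h
        · exact absurd hnm (hlt n m h)
        · exact h
        · exact absurd hnm.symm (hlt m n h)
      obtain ⟨N, hN⟩ := (hB.preimage hinj.injOn).bddAbove
      refine ⟨1, N + 1, one_pos, fun n hn hmem => ?_⟩
      have := hN hmem
      omega
  choose M N hM hMN using h1
  refine ⟨∏ k ∈ hK.toFinset, M k, hK.toFinset.sup N, Finset.prod_pos fun k _ => hM k, ?_⟩
  intro k hk n hn hmem
  have hk' : k ∈ hK.toFinset := hK.mem_toFinset.mpr hk
  obtain ⟨c, hc⟩ := Finset.dvd_prod_of_mem M hk'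
  rw [hc, pow_mul]
  exact (hMN k n ((Finset.le_sup hk').trans hn) hmem).pow_right c

theorem Lox.exists_exponent {v : H} {κ : ℕ} (hd : HypM d δ) (hv : Lox d v κ) {M : ℕ} (hM : 0 < M)
    (N T : ℕ) (hT : M * N * d 1 v ≤ T) :
    ∃ n : ℕ, N ≤ n ∧ M ∣ n ∧ T ≤ d 1 (v ^ (n : ℤ)) ∧ d 1 (v ^ (n : ℤ)) ≤ T + M * d 1 v := by
  classical
  have hex : ∃ k : ℕ, T ≤ d 1 (v ^ ((M * (N + k) : ℕ) : ℤ)) := by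
    refine ⟨T + κ, hv.len_ge T ?_⟩
    rw [Int.natAbs_natCast]
    have := Nat.le_mul_of_pos_left (N + (T + κ)) hM
    omega
  obtain ⟨k, hk, hmin⟩ : ∃ k : ℕ, T ≤ d 1 (v ^ ((M * (N + k) : ℕ) : ℤ)) ∧
      ∀ m < k, ¬ T ≤ d 1 (v ^ ((M * (N + m) : ℕ) : ℤ)) :=
    ⟨Nat.find hex, Nat.find_spec hex, fun m hm => Nat.find_min hex hm⟩
  have hle := Nat.le_mul_of_pos_left (N + k) hM
  refine ⟨M * (N + k), by omega, dvd_mul_right _ _, hk, ?_⟩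
  rcases k with _ | k
  · have := hd.len_zpow_le v (M * N)
    rw [add_zero]
    omega
  · have h1 := hmin k (by omega)
    have h2 := hd.len_mul (v ^ ((M * (N + k) : ℕ) : ℤ)) (v ^ (M : ℤ))
    rw [← zpow_add, ← Nat.cast_add, show M * (N + k) + M = M * (N + (k + 1)) by ring] at h2
    have h3 := hd.len_zpow_le v M
    omega

/-- Exponents for which the powers have comparable lengths, any two of which differ by more than
`gap`. -/
theorem exists_exponents (hd : HypM d δ) {I : Type*} [Finite I] {v : I → H} {κ : ℕ}
    (hv : ∀ i, Lox d (v i) κ) {M : I → ℕ} (hM : ∀ i, 0 < M i) (N gap u₀ : ℕ) :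
    ∃ u, u₀ ≤ u ∧ ∃ n : I → ℕ, (∀ i, N ≤ n i ∧ M i ∣ n i ∧ 10 * u ≤ d 1 (v i ^ (n i : ℤ)) ∧
      d 1 (v i ^ (n i : ℤ)) ≤ 11 * u) ∧
      ∀ i j, i ≠ j → d 1 (v i ^ (n i : ℤ)) + gap < d 1 (v j ^ (n j : ℤ)) ∨
        d 1 (v j ^ (n j : ℤ)) + gap < d 1 (v i ^ (n i : ℤ)) := by
  obtain ⟨b, ⟨f⟩⟩ := Finite.exists_equiv_fin I
  obtain ⟨B, hB⟩ := (Set.finite_range fun i => M i * d 1 (v i)).bddAbove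
  have hB' : ∀ i, M i * d 1 (v i) ≤ B := fun i => hB ⟨i, rfl⟩
  set s := B + gap + 1 with hs
  set u := u₀ + N * B + b * s with hu
  have h1 : ∀ i, ∃ n : ℕ, N ≤ n ∧ M i ∣ n ∧ 10 * u + f i * s ≤ d 1 (v i ^ (n : ℤ)) ∧
      d 1 (v i ^ (n : ℤ)) ≤ 10 * u + f i * s + M i * d 1 (v i) := fun i => by
    refine (hv i).exists_exponent hd (hM i) N _ ?_
    have := Nat.mul_le_mul_left N (hB' i)
    rw [show M i * N * d 1 (v i) = N * (M i * d 1 (v i)) by ring]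
    omega
  choose n hn using h1
  have hlt : ∀ i j, (f i : ℕ) < f j →
      d 1 (v i ^ (n i : ℤ)) + gap < d 1 (v j ^ (n j : ℤ)) := by
    intro i j hij
    have h2 := (hn i).2.2.2
    have h3 := (hn j).2.2.1
    have h4 := hB' i
    have h5 := Nat.mul_le_mul_right s (show (f i : ℕ) + 1 ≤ f j by omega)
    rw [add_mul, one_mul] at h5
    omega
  refine ⟨u, by omega, n, fun i => ⟨(hn i).1, (hn i).2.1, ?_, ?_⟩, fun i j hij => ?_⟩
  · have := (hn i).2.2.1; omega
  · have h2 := (hn i).2.2.2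
    have h3 := Nat.mul_le_mul_right s (show (f i : ℕ) + 1 ≤ b by omega)
    rw [add_mul, one_mul] at h3
    have h4 := hB' i
    omega
  · rcases lt_trichotomy (f i : ℕ) (f j) with h | h | h
    · exact Or.inl (hlt i j h)
    · exact absurd (f.injective (Fin.ext h)) hij
    · exact Or.inr (hlt j i h)

/-- A product of large powers of `v` separated by letters outside the elementary subgroup is a
track. -/
theorem track_of_seq (hd : HypM d δ) {v : H} {κ : ℕ} (hv : Lox d v κ) {n : ℤ → ℤ} {g P : ℤ → H}
    {c G₀ E J L : ℕ} {Sg : H → H → Prop} (hSg : ∀ h x y, Sg x y → Sg (h * x) (h * y))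
    (hP : ∀ t, P (t + 1) = P t * (v ^ n t * g t))
    (hc : ∀ t, ∀ m n : ℤ, d 1 (v ^ m) + d 1 (v ^ n) ≤ d 1 (v ^ m * g t * v ^ n) + c)
    (hg : ∀ t, d 1 (g t) ≤ G₀) (hn : ∀ t, c + 4 * G₀ + 2 * δ + 1 + L ≤ d 1 (v ^ n t))
    (hJ : ∀ t, J ≤ n t) (hseg : ∀ t, Sg (P t) (P (t + 1)))
    (hcor : ∀ t x y, Sg x y → ∃ i : ℤ, 0 ≤ i ∧ i ≤ J ∧
      (d x y + E < d x (v ^ i) + d (v ^ i) y ∨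
        d x y + E < d x ((g (t - 1))⁻¹ * v ^ (-i)) + d ((g (t - 1))⁻¹ * v ^ (-i)) y)) :
    Track d Sg P (c + 5 * G₀ + 2 * δ + κ) (J * d 1 v + G₀) E L := by
  obtain ⟨hline, -⟩ := hd.line_of_seq hP (fun t => hc t _ _) hg (fun t => by have := hn t; omega)
  have hlen : ∀ t, d 1 (v ^ n t) ≤ d (P t) (P (t + 1)) + G₀ := fun t => by
    have := hd.len_mul (v ^ n t * g t) (g t)⁻¹
    have e := hd.d_one_mul (P t) (v ^ n t * g t)
    rw [mul_inv_cancel_right, hd.d_one_inv] at this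
    rw [← hP t] at e
    have := hg t
    omega
  refine ⟨hline.mono (by omega), fun t => ?_, hseg, ?_⟩
  · have := hn t; have := hlen t; omega
  intro t x y hxy
  have hpt : ∀ (s : ℤ) (i : ℤ), 0 ≤ i → i ≤ n s →
      d (P s) (P s * v ^ i) + d (P s * v ^ i) (P (s + 1)) ≤
        d (P s) (P (s + 1)) + (κ + 2 * G₀) := by
    intro s i hi hin
    have h1 := hv.len_add hd hi (show 0 ≤ n s - i by omega)
    rw [add_sub_cancel] at h1
    have h2 : P (s + 1) = P s * v ^ i * (v ^ (n s - i) * g s) := by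
      rw [hP, mul_assoc (P s), ← mul_assoc (v ^ i), ← zpow_add, add_sub_cancel]
    have h3 : d (P s * v ^ i) (P (s + 1)) = d 1 (v ^ (n s - i) * g s) := by rw [h2, hd.d_one_mul]
    have h4 := hd.len_mul (v ^ (n s - i)) (g s)
    have h5 := hlen s
    have h6 := hg s
    rw [hd.d_one_mul, h3]
    omega
  have hpow : ∀ i : ℤ, 0 ≤ i → i ≤ J → d 1 (v ^ i) ≤ J * d 1 v := by
    intro i h0 hi
    lift i to ℕ using h0
    exact (hd.len_zpow_le v i).trans (Nat.mul_le_mul_right _ (by omega))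
  have hxy' := hSg (P t)⁻¹ _ _ hxy
  have hback : ∀ z, d ((P t)⁻¹ * x) ((P t)⁻¹ * y) + E <
      d ((P t)⁻¹ * x) z + d z ((P t)⁻¹ * y) → d x y + E < d x (P t * z) + d (P t * z) y := by
    intro z hz
    have e1 := hd.inv (P t) ((P t)⁻¹ * x) z
    have e2 := hd.inv (P t) z ((P t)⁻¹ * y)
    have e3 := hd.inv (P t) ((P t)⁻¹ * x) ((P t)⁻¹ * y)
    simp only [mul_inv_cancel_left] at e1 e2 e3
    omega
  have hJt := hJ t
  have hJt' := hJ (t - 1)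
  have hl := hline (t - 1) t (t + 1) (by omega) (by omega)
  have hcancel : t - 1 + 1 = t := by ring
  obtain ⟨i, h0, hi, h | h⟩ := hcor t _ _ hxy'
  · refine ⟨P t * v ^ i, ?_, ?_, hback _ h⟩
    · rw [hd.d_one_mul]; have := hpow i h0 hi; omega
    · have h1 := hpt t i h0 (by omega)
      have h2 := hd.tri (P (t - 1)) (P t) (P t * v ^ i)
      omega
  · have hz : P t * ((g (t - 1))⁻¹ * v ^ (-i)) = P (t - 1) * v ^ (n (t - 1) - i) := by
      have := hP (t - 1)
      rw [hcancel] at this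
      rw [this, zpow_sub, zpow_neg]
      group
    refine ⟨P t * ((g (t - 1))⁻¹ * v ^ (-i)), ?_, ?_, hback _ h⟩
    · rw [hd.d_one_mul]
      have h1 := hd.len_mul (g (t - 1))⁻¹ (v ^ (-i))
      have h2 := hpow i h0 hi
      have h3 := hg (t - 1)
      rw [hd.d_one_inv, zpow_neg, hd.d_one_inv] at h1
      rw [zpow_neg]
      omega
    · have h1 := hpt (t - 1) (n (t - 1) - i) (by omega) (by omega)
      rw [← hz, hcancel] at h1
      have h2 := hd.tri (P t * ((g (t - 1))⁻¹ * v ^ (-i))) (P t) (P (t + 1))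
      omega

end HypM

/-! ### Small cancellation -/

section Rigidity

variable {H : Type*} [Group H] {d : H → H → ℕ} {δ : ℕ}

/-- The axis of a product of powers of `v` with separating letters `g`, repeated periodically, is
determined by any long enough part of it. If two translates fellow-travel, comparing the lengths of
the segments shows that they have the same label and that the matching is a shift by whole periods; after
cancelling these, the remaining element commutes with the powers of `v` along the way, hence
its conjugates by the successive letters remain in the elementary subgroup of `v`, and it is trivial. -/
theorem rigid (hd : HypM d δ) {A : Type*} {Sg : H → H → Prop} {v : A → H} {n : A → ℤ → ℤ}
    {g P : A → ℤ → H} {m : A → ℤ} {e R E L C G₀ U W Q w : ℕ}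
    (hs : ∀ x y, Sg x y → Sg y x) (hs' : ∀ h x y, Sg x y → Sg (h * x) (h * y))
    (hT : ∀ a, Track d Sg (P a) e R E L)
    (hP0 : ∀ a, P a 0 = 1) (hP : ∀ a t, P a (t + 1) = P a t * (v a ^ n a t * g a t))
    (hn : ∀ a t, n a (t + m a) = n a t) (hg : ∀ a t, g a (t + m a) = g a t) (hm : ∀ a, 3 ≤ m a)
    (hn0 : ∀ a t, n a t ≠ 0) (hG : ∀ a t, d 1 (g a t) ≤ G₀)
    (hw : w = 4 * e + 2 * δ + 2 * (2 * (Q + δ) + 1)) (hQ : 5 * e + 6 * δ = Q)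
    (hE : 3 * e + w + 2 * δ ≤ E) (hC : R + 9 * e + 3 * w + 6 * δ ≤ C)
    (hL : R + 4 * C + 6 * e + 6 * δ + w < L)
    (hlen : ∀ a b t t', d (P a t) (P a (t + 1)) ≤ d (P b t') (P b (t' + 1)) + 2 * C →
      d (P b t') (P b (t' + 1)) ≤ d (P a t) (P a (t + 1)) + 2 * C → a = b ∧ m a ∣ t' - t)
    (hcomm : ∀ a t k, d 1 k ≤ C → d 1 (v a ^ (-n a t) * k * v a ^ n a t) ≤ C + 2 * G₀ →
      Commute k (v a ^ n a t))
    (hkill : ∀ (a : A) (κ : ℤ → H) (i : ℤ), (∀ j, i ≤ j → j ≤ i + W → κ j ∈ elem (v a)) →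
      (∀ j, i ≤ j → j < i + W → κ (j + 1) = (g a j)⁻¹ * κ j * g a j) →
      ∃ j, κ j = 1)
    (hU : ∀ a j, d (P a j) (P a (j + 1)) ≤ U) {a b : A} {h x y : H}
    (hx : x ∈ hull d (fun t => h * P b t)) (hy : y ∈ hull d (fun t => h * P b t))
    (hxy : (W + 6) * U + (2 * (2 * (Q + δ) + 1) + δ) < HypM.dproj d (hull d (P a)) x y) :
    a = b ∧ h ∈ Subgroup.zpowers (P a (m a)) := by
  have hZ : Track d Sg (fun t => h * P b t) e R E L := (hT b).smul hd hs' h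
  obtain ⟨i, k, s, u, hik, hsu, hwin⟩ := hd.window (W := W + 4) (hT a).line hZ.line
    (Q := Q) (hQ ▸ hd.hull_qc (hT a).line) (hU a) hx hy (by exact hxy)
  rw [← hw] at hwin
  rcases lt_or_gt_of_ne hsu with hsu | hsu
  · obtain ⟨σ, hσ⟩ := Track.matching hd (hT a) hZ hE hC hL hsu hwin
    have hlen' : ∀ j, i < j → j + 1 < k → a = b ∧ m a ∣ σ := by
      intro j h1 h2
      have e1 := hσ j h1 (by omega)
      have e2 := hσ (j + 1) (by omega) h2
      rw [add_right_comm] at e2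
      have e3 := hd.inv h (P b (j + σ)) (P b (j + σ + 1))
      have t1 := hd.tri (P a j) (h * P b (j + σ)) (P a (j + 1))
      have t2 := hd.tri (h * P b (j + σ)) (h * P b (j + σ + 1)) (P a (j + 1))
      have t3 := hd.tri (h * P b (j + σ)) (P a j) (h * P b (j + σ + 1))
      have t4 := hd.tri (P a j) (P a (j + 1)) (h * P b (j + σ + 1))
      have s1 := hd.symm (P a j) (h * P b (j + σ))
      have s2 := hd.symm (P a (j + 1)) (h * P b (j + σ + 1))
      have := hlen a b j (j + σ) (by omega) (by omega)
      rwa [add_sub_cancel_left] at this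
    obtain ⟨rfl, q, rfl⟩ := hlen' (i + 1) (by omega) (by push_cast at hik; omega)
    refine ⟨rfl, ?_⟩
    set r := P a (m a) with hr
    set κ : ℤ → H := fun j => (P a j)⁻¹ * (h * r ^ q) * P a j with hκ
    have hκC : ∀ j, i < j → j < k → d 1 (κ j) ≤ C := by
      intro j h1 h2
      have e1 := hσ j h1 h2
      rw [seq_period_zpow (s := fun t => v a ^ n a t * g a t) (hP0 a) (hP a)
        (fun t => by rw [hn, hg]) j q, hd.d_eq] at e1
      simpa only [hκ, mul_assoc] using e1
    have hκs : ∀ j, κ (j + 1) = (g a j)⁻¹ * (v a ^ (-n a j) * κ j * v a ^ n a j) * g a j := by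
      intro j
      simp only [hκ]
      rw [hP, zpow_neg]
      group
    have hκc : ∀ j, i < j → j + 1 < k → Commute (κ j) (v a ^ n a j) := by
      intro j h1 h2
      refine hcomm a j _ (hκC j h1 (by omega)) ?_
      have e1 : v a ^ (-n a j) * κ j * v a ^ n a j = g a j * κ (j + 1) * (g a j)⁻¹ := by
        rw [hκs]; group
      have e2 := hd.len_mul (g a j * κ (j + 1)) (g a j)⁻¹
      have e3 := hd.len_mul (g a j) (κ (j + 1))
      have e4 := hκC (j + 1) (by omega) h2
      have e5 := hG a j
      rw [hd.d_one_inv] at e2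
      rw [e1]
      omega
    push_cast at hik
    obtain ⟨j, hj⟩ := hkill a κ (i + 1) (fun j h1 h2 => by
        have := hκc j (by omega) (by omega)
        exact ⟨_, _, hn0 a j, hn0 a j, this.eq⟩)
      (fun j h1 h2 => by
        have := hκc j (by omega) (by omega)
        rw [hκs, mul_assoc (v a ^ (-n a j)), this.eq, zpow_neg, inv_mul_cancel_left])
    have e1 : h * r ^ q = 1 := by
      have : h * r ^ q = P a j * κ j * (P a j)⁻¹ := by simp only [hκ]; group
      rw [this, hj]; group
    exact ⟨-q, by beta_reduce; rw [zpow_neg]; exact (eq_inv_of_mul_eq_one_left e1).symm⟩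
  · obtain ⟨σ, hσ⟩ := Track.matching_rev hd hs (hT a) hZ hE hC hL hsu hwin
    have hlen' : ∀ j, i < j → j + 1 < k → a = b ∧ m a ∣ σ - (j + 1) - j := by
      intro j h1 h2
      have e1 := hσ j h1 (by omega)
      have e2 := hσ (j + 1) (by omega) h2
      rw [show σ - j = σ - (j + 1) + 1 by ring] at e1
      have e3 := hd.inv h (P b (σ - (j + 1))) (P b (σ - (j + 1) + 1))
      have t1 := hd.tri (P a j) (h * P b (σ - (j + 1) + 1)) (P a (j + 1))
      have t2 := hd.tri (h * P b (σ - (j + 1) + 1)) (h * P b (σ - (j + 1))) (P a (j + 1))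
      have t3 := hd.tri (h * P b (σ - (j + 1))) (P a (j + 1)) (h * P b (σ - (j + 1) + 1))
      have t4 := hd.tri (P a (j + 1)) (P a j) (h * P b (σ - (j + 1) + 1))
      have s1 := hd.symm (P a j) (P a (j + 1))
      have s2 := hd.symm (P a (j + 1)) (h * P b (σ - (j + 1)))
      have s3 := hd.symm (h * P b (σ - (j + 1) + 1)) (h * P b (σ - (j + 1)))
      exact hlen a b j (σ - (j + 1)) (by omega) (by omega)
    push_cast at hik
    have h1 := (hlen' (i + 1) (by omega) (by omega)).2
    have h2 := (hlen' (i + 2) (by omega) (by omega)).2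
    have h3 := dvd_sub h1 h2
    rw [show σ - (i + 1 + 1) - (i + 1) - (σ - (i + 2 + 1) - (i + 2)) = 2 by ring] at h3
    have := Int.le_of_dvd (by norm_num) h3
    have := hm a
    omega

end Rigidity

/-! ### The rotating family of a small cancellation presentation -/

/-- A family of periodic lines `P a`, translated along themselves by `P a (m a)`, with
segments of length about `u`, whose translates project to each other with diameter at most `θ₀` unless
they differ by a period. -/
structure Periodic {H A : Type*} [Group H] (d : H → H → ℕ) (P : A → ℤ → H) (m : A → ℕ) (e u θ₀ : ℕ) :
    Prop where
  line : ∀ a, HypM.Line d (P a) e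
  per : ∀ (a : A) (t k : ℤ), P a (t + m a * k) = P a (m a) ^ k * P a t
  lo : ∀ a t, 9 * u + e ≤ d (P a t) (P a (t + 1))
  hi : ∀ a t, d (P a t) (P a (t + 1)) ≤ 12 * u
  pos : ∀ a, 2 ≤ m a
  rigid : ∀ a b h x y, x ∈ hull d (fun t => h * P b t) → y ∈ hull d (fun t => h * P b t) →
    θ₀ < HypM.dproj d (hull d (P a)) x y → a = b ∧ h ∈ Subgroup.zpowers (P a (m a))

/-- The translates of the lines: cosets of the cyclic groups generated by the relators `s a`. -/
abbrev Cone {H A : Type*} [Group H] (s : A → H) : Type _ := Σ a, H ⧸ Subgroup.zpowers (s a)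

namespace Cone

variable {H A : Type*} [Group H] {s : A → H}

/-- A representative of the coset `c`. -/
noncomputable def rep (c : Cone s) : H := c.2.out

theorem rep_smul (g : H) (c : Cone s) : ∃ k : ℤ, rep (g • c) = g * rep c * s c.1 ^ k := by
  have h1 : (QuotientGroup.mk (g * rep c) : H ⧸ Subgroup.zpowers (s c.1)) =
      QuotientGroup.mk (rep (g • c)) := by
    have e1 : (QuotientGroup.mk (rep (g • c)) : H ⧸ Subgroup.zpowers (s c.1)) = g • c.2 :=
      QuotientGroup.out_eq' _
    have e2 : (QuotientGroup.mk (rep c) : H ⧸ Subgroup.zpowers (s c.1)) = c.2 :=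
      QuotientGroup.out_eq' _
    rw [e1, ← e2]
    rfl
  obtain ⟨k, hk⟩ := QuotientGroup.eq.mp h1
  beta_reduce at hk
  exact ⟨k, by rw [hk, mul_inv_cancel_left]⟩

theorem eq_of_rep {b c : Cone s} (h : c.1 = b.1) (k : ℤ) (hk : rep b = rep c * s c.1 ^ k) : b = c := by
  obtain ⟨a, x⟩ := b
  obtain ⟨a', y⟩ := c
  obtain rfl : a' = a := h
  congr 1
  have e1 : (QuotientGroup.mk (rep (⟨a', x⟩ : Cone s)) : H ⧸ Subgroup.zpowers (s a')) = x :=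
    QuotientGroup.out_eq' _
  have e2 : (QuotientGroup.mk (rep (⟨a', y⟩ : Cone s)) : H ⧸ Subgroup.zpowers (s a')) = y :=
    QuotientGroup.out_eq' _
  rw [← e1, ← e2, hk]
  exact (QuotientGroup.eq.mpr (Subgroup.mem_zpowers_iff.mpr ⟨k, by rw [inv_mul_cancel_left]⟩)).symm

/-- The rotation at the coset `c`: the conjugate of the relator by a representative. -/
noncomputable def rot (c : Cone s) : H := rep c * s c.1 * (rep c)⁻¹

theorem rot_zpow (c : Cone s) (k : ℤ) : rot c ^ k = rep c * s c.1 ^ k * (rep c)⁻¹ :=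
  conj_zpow

theorem rot_smul (g : H) (c : Cone s) : rot (g • c) = g * rot c * g⁻¹ := by
  obtain ⟨k, hk⟩ := rep_smul g c
  have : (g • c).1 = c.1 := rfl
  rw [rot, rot, hk, this]
  group

theorem rot_fix (c : Cone s) : rot c • c = c := by
  obtain ⟨k, hk⟩ := rep_smul (rot c) c
  refine eq_of_rep rfl (k + 1) ?_
  rw [hk, rot, zpow_add, zpow_one]
  group

theorem exists_of_smul_eq {g : H} {c : Cone s} (h : g • c = c) : ∃ k : ℤ, g = rot c ^ k := by
  obtain ⟨k, hk⟩ := rep_smul g c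
  rw [h] at hk
  refine ⟨-k, ?_⟩
  rw [rot_zpow, zpow_neg]
  have : g = rep c * (s c.1 ^ k)⁻¹ * (rep c)⁻¹ := by
    rw [eq_mul_inv_iff_mul_eq, eq_mul_inv_iff_mul_eq, ← hk]
  exact this

/-- The subgroup generated by the rotations is the normal closure of the relators. -/
theorem rotG_rot : Spin.rotG (rot : Cone s → H) = Subgroup.normalClosure (Set.range s) := by
  apply le_antisymm
  · refine (Subgroup.closure_le _).mpr ?_
    rintro _ ⟨c, rfl⟩
    exact Subgroup.normalClosure_normal.conj_mem _ (Subgroup.subset_normalClosure (Set.mem_range_self c.1)) _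
  · have hN : (Spin.rotG (rot : Cone s → H)).Normal := by
      have hmem : ∀ n ∈ Spin.rotG (rot : Cone s → H), ∀ g : H, g * n * g⁻¹ ∈
          Spin.rotG (rot : Cone s → H) := by
        intro n hn g
        refine Subgroup.closure_induction (p := fun n _ => g * n * g⁻¹ ∈ Spin.rotG rot) ?_ ?_ ?_ ?_ hn
        · rintro _ ⟨c, rfl⟩
          rw [← rot_smul]
          exact Subgroup.subset_closure (Set.mem_range_self _)
        · simp
        · intro x y _ _ hx hy
          have := mul_mem hx hy
          rwa [show g * x * g⁻¹ * (g * y * g⁻¹) = g * (x * y) * g⁻¹ by group] at this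
        · intro x _ hx
          have := inv_mem hx
          rwa [show (g * x * g⁻¹)⁻¹ = g * x⁻¹ * g⁻¹ by group] at this
      exact ⟨hmem⟩
    refine Subgroup.normalClosure_le_normal ?_
    rintro _ ⟨a, rfl⟩
    set c : Cone s := ⟨a, QuotientGroup.mk 1⟩ with hc
    have h1 : rot c ∈ Spin.rotG (rot : Cone s → H) := Subgroup.subset_closure ⟨c, rfl⟩
    have h2 := hN.conj_mem _ h1 (rep c)⁻¹
    have h3 : (rep c)⁻¹ * rot c * (rep c)⁻¹⁻¹ = s c.1 := by rw [rot]; group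
    rw [h3] at h2
    exact h2

end Cone

namespace Periodic

variable {H A : Type*} [Group H] {d : H → H → ℕ} {δ : ℕ} {P : A → ℤ → H} {m : A → ℕ} {e u θ₀ : ℕ}

/-- The translate of a line belonging to a coset. -/
def coneY (d : H → H → ℕ) (P : A → ℤ → H) (m : A → ℕ) (c : Cone fun a => P a (m a)) : Set H :=
  (fun z => c.rep * z) '' hull d (P c.1)

theorem smul_hull (hd : HypM d δ) (T : Periodic d P m e u θ₀) (a : A) (k : ℤ) :
    (fun z => P a (m a) ^ k * z) '' hull d (P a) = hull d (P a) := by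
  rw [← hd.hull_smul]
  simp only [← T.per]
  exact HypM.hull_shift d (P a) (m a * k)

theorem coneY_smul (hd : HypM d δ) (T : Periodic d P m e u θ₀) (g : H)
    (c : Cone fun a => P a (m a)) : coneY d P m (g • c) = (fun z => g * z) '' coneY d P m c := by
  obtain ⟨k, hk⟩ := Cone.rep_smul g c
  have h1 : (g • c).1 = c.1 := rfl
  rw [coneY, coneY, hk, Set.image_image, h1]
  conv_rhs => rw [← T.smul_hull hd c.1 k]
  rw [Set.image_image]
  simp only [mul_assoc]

theorem coneY_qc (hd : HypM d δ) (T : Periodic d P m e u θ₀) (c : Cone fun a => P a (m a)) :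
    HypM.QC d (5 * e + 6 * δ) (coneY d P m c) := by
  rw [coneY, ← hd.hull_smul]
  exact hd.hull_qc ((T.line c.1).smul hd _)

theorem coneY_nonempty (hd : HypM d δ) (c : Cone fun a => P a (m a)) : (coneY d P m c).Nonempty :=
  ⟨_, _, hd.mem_hull _ 0, rfl⟩

theorem dproj_coneY (hd : HypM d δ) (c : Cone fun a => P a (m a)) (x y : H) :
    HypM.dproj d (coneY d P m c) x y = HypM.dproj d (hull d (P c.1)) (c.rep⁻¹ * x) (c.rep⁻¹ * y) := by
  have := hd.dproj_inv (hull d (P c.1)) c.rep (c.rep⁻¹ * x) (c.rep⁻¹ * y)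
  rwa [mul_inv_cancel_left, mul_inv_cancel_left] at this

theorem small (hd : HypM d δ) (T : Periodic d P m e u θ₀) {b c : Cone fun a => P a (m a)} (hbc : b ≠ c)
    {x y : H} (hx : x ∈ coneY d P m b) (hy : y ∈ coneY d P m b) :
    HypM.dproj d (coneY d P m c) x y ≤ θ₀ := by
  by_contra hcon
  rw [dproj_coneY hd] at hcon
  have hmem : ∀ x ∈ coneY d P m b, c.rep⁻¹ * x ∈ hull d (fun t => c.rep⁻¹ * b.rep * P b.1 t) := by
    rintro _ ⟨z, hz, rfl⟩
    rw [hd.hull_smul]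
    exact ⟨z, hz, by simp only [mul_assoc]⟩
  obtain ⟨h1, k, hk⟩ := T.rigid c.1 b.1 _ _ _ (hmem x hx) (hmem y hy) (not_le.mp hcon)
  beta_reduce at hk
  exact hbc (Cone.eq_of_rep h1 k (by rw [hk, mul_inv_cancel_left]))

theorem near_zpow (hd : HypM d δ) (T : Periodic d P m e u θ₀) {a : A} {x p : H}
    (hp : HypM.Near d (hull d (P a)) x p) (k : ℤ) :
    HypM.Near d (hull d (P a)) (P a (m a) ^ k * x) (P a (m a) ^ k * p) := by
  refine ⟨?_, fun z hz => ?_⟩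
  · rw [← T.smul_hull hd a k]; exact ⟨p, hp.1, rfl⟩
  · rw [← T.smul_hull hd a k] at hz
    obtain ⟨z, hz, rfl⟩ := hz
    beta_reduce
    rw [hd.inv, hd.inv]
    exact hp.2 z hz

theorem seg_zpow (hd : HypM d δ) (T : Periodic d P m e u θ₀) {a : A} {p : H} {t : ℤ} (k : ℤ)
    (hp : d (P a t) p + d p (P a (t + 1)) = d (P a t) (P a (t + 1))) :
    d (P a (t + m a * k)) (P a (m a) ^ k * p) +
      d (P a (m a) ^ k * p) (P a (t + m a * k + 1)) =
      d (P a (t + m a * k)) (P a (t + m a * k + 1)) := by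
  rw [add_right_comm, T.per, T.per, hd.inv, hd.inv, hd.inv, hp]

/-- Translation by a power of the period moves every point a long way, as seen from the line. -/
theorem spin (hd : HypM d δ) (T : Periodic d P m e u θ₀)
    (hu : 2 * e + (2 * (5 * e + 6 * δ + δ) + 1) ≤ 9 * u) (a : A) (x : H) {k : ℤ} (hk : k ≠ 0) :
    (m a - 2) * (9 * u) ≤ HypM.dproj d (hull d (P a)) x (P a (m a) ^ k * x) := by
  have hpos : ∀ (x : H) (k : ℤ), 0 < k →
      (m a - 2) * (9 * u) ≤ HypM.dproj d (hull d (P a)) x (P a (m a) ^ k * x) := by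
    intro x k hk
    obtain ⟨p, hp⟩ := HypM.exists_near d ⟨_, hd.mem_hull (P a) 0⟩ x
    have h1 := hd.near_le_dproj (hd.hull_qc (T.line a)) hp (T.near_zpow hd hp k)
    obtain ⟨t, ht⟩ := hp.1
    have hm := T.pos a
    have hmk : (m a : ℤ) ≤ m a * k := le_mul_of_one_le_right (by omega) (by omega)
    have h2 := (hd.hull_chain_lt (T.line a) ht (T.seg_zpow hd k ht) (by omega)).1
    obtain ⟨l, hl⟩ := Int.le.dest (show t + 1 ≤ t + m a * k by omega)
    rw [← hl] at h2
    have h3 := HypM.line_lower (T.line a) (T.lo a) (t + 1) l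
    have h4 := Nat.mul_le_mul_right (9 * u) (show m a - 2 + 1 ≤ l by omega)
    rw [add_mul, one_mul] at h4
    omega
  rcases lt_or_gt_of_ne hk with h | h
  · have h1 := hpos (P a (m a) ^ k * x) (-k) (by omega)
    rwa [zpow_neg, inv_mul_cancel_left, HypM.dproj_symm] at h1
  · exact hpos x k h

/-- If two points are far apart as seen from the line, then one of them can be brought closer to the
other by translating along the line. -/
theorem closer (hd : HypM d δ) (T : Periodic d P m e u θ₀)
    (hu : 3 * (2 * (5 * e + 6 * δ + δ) + 1) + 2 * δ + 1 ≤ 12 * u) (a : A) {x y : H}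
    (h : (m a / 2 + 4) * (12 * u) < HypM.dproj d (hull d (P a)) x y) :
    ∃ k : ℤ, d x (P a (m a) ^ k * y) < d x y := by
  obtain ⟨p, hp⟩ := HypM.exists_near d ⟨_, hd.mem_hull (P a) 0⟩ x
  obtain ⟨q, hq⟩ := HypM.exists_near d ⟨_, hd.mem_hull (P a) 0⟩ y
  have hQ := hd.hull_qc (T.line a)
  have h1 := hd.dproj_le_near hQ hp hq
  have h2 := hd.proj_between hQ hp hq
  obtain ⟨t, ht⟩ := hp.1
  obtain ⟨t', ht'⟩ := hq.1
  have hm := T.pos a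
  obtain ⟨k, hk1, hk2⟩ : ∃ k : ℤ, t ≤ t' + m a * k + (m a / 2 + 1 : ℕ) ∧
      t' + m a * k ≤ t + (m a / 2 + 1 : ℕ) := by
    refine ⟨(t - t' + m a / 2) / m a, ?_⟩
    have e1 := Int.emod_nonneg (t - t' + m a / 2) (show (m a : ℤ) ≠ 0 by omega)
    have e2 := Int.emod_lt_of_pos (t - t' + m a / 2) (show (0 : ℤ) < m a by omega)
    have e3 := Int.mul_ediv_add_emod (t - t' + m a / 2) (m a)
    push_cast
    constructor <;> omega
  have h3 := hd.hull_upper (T.hi a) ht (T.seg_zpow hd k ht') hk1 hk2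
  refine ⟨k, ?_⟩
  have h4 := hd.tri x p (P a (m a) ^ k * y)
  have h5 := hd.tri p (P a (m a) ^ k * q) (P a (m a) ^ k * y)
  rw [hd.inv] at h5
  have h6 := hd.symm q y
  have e1 : (m a / 2 + 4) * (12 * u) = (m a / 2 + 1 + 2) * (12 * u) + 12 * u := by ring
  omega

end Periodic

namespace Periodic

variable {H A : Type*} [Group H] {d : H → H → ℕ} {δ : ℕ} {P : A → ℤ → H} {m : A → ℕ} {e u θ₀ : ℕ}

theorem toSpin (hd : HypM d δ) (T : Periodic d P m e u θ₀) {θ : ℕ}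
    (hu : 2 * e + (2 * (5 * e + 6 * δ + δ) + 1) ≤ 9 * u)
    (hθ : θ₀ + (3 * (2 * (5 * e + 6 * δ + δ) + 1) + δ) ≤ θ) (h4 : 4 ≤ θ)
    (hbig : ∀ a, 100 * θ ≤ (m a - 2) * (9 * u)) :
    Spin d (fun c => HypM.dproj d (coneY d P m c)) (coneY d P m) Cone.rot
      (fun c => (m c.1 - 2) * (9 * u)) θ where
  self c x := HypM.dproj_self (coneY_nonempty hd c) x
  symm c x y := HypM.dproj_symm _ x y
  tri c x y z := hd.dproj_tri (coneY_nonempty hd c) x y z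
  equiv g c x y := by
    rw [T.coneY_smul hd]
    exact hd.dproj_inv _ _ _ _
  lip c x y := hd.dproj_lip (coneY_nonempty hd c) x y
  nonempty := coneY_nonempty hd
  mem_smul g c x hx := by
    rw [T.coneY_smul hd]
    exact ⟨x, hx, rfl⟩
  conj := Cone.rot_smul
  fix := Cone.rot_fix
  small b c hbc x hx y hy := (T.small hd hbc hx hy).trans (by omega)
  behr b c hbc yb hyb yc hyc x := by
    have := hd.behrstock (T.coneY_qc hd b) (T.coneY_qc hd c)
      (fun x hx y hy => T.small hd (Ne.symm hbc) hx hy) (fun x hx y hy => T.small hd hbc hx hy)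
      (x := x) hyb hyc
    rcases this with h | h
    · exact Or.inl (h.trans hθ)
    · exact Or.inr (h.trans hθ)
  spin c x k hk := by
    rw [dproj_coneY hd, Cone.rot_zpow]
    have := T.spin hd hu c.1 (c.rep⁻¹ * x) hk
    rwa [show c.rep⁻¹ * (c.rep * P c.1 (m c.1) ^ k * c.rep⁻¹ * x) =
      P c.1 (m c.1) ^ k * (c.rep⁻¹ * x) by group]
  len_smul g c := rfl
  four_le := h4
  big c := hbig c.1

theorem toFine (hd : HypM d δ) (T : Periodic d P m e u θ₀) {θ : ℕ}
    (hu : 3 * (2 * (5 * e + 6 * δ + δ) + 1) + 2 * δ + 1 ≤ 12 * u)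
    (hθ : θ₀ + (3 * (2 * (5 * e + 6 * δ + δ) + 1) + δ) ≤ θ)
    (hbig : ∀ a, 200 * θ ≤ (m a - 2) * (9 * u))
    (hρ : ∀ a, (m a / 2 + 4) * (12 * u) + 60 * θ ≤ (m a - 2) * (9 * u)) :
    Spin.Fine d (fun c => HypM.dproj d (coneY d P m c)) (coneY d P m) Cone.rot
      (fun c => (m c.1 - 2) * (9 * u)) θ (fun c => (m c.1 / 2 + 4) * (12 * u)) where
  closer b y y' h := by
    rw [dproj_coneY hd] at h
    obtain ⟨k, hk⟩ := T.closer hd hu b.1 h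
    refine ⟨k, ?_⟩
    rw [Cone.rot_zpow]
    rw [← hd.inv b.rep, ← hd.inv b.rep (b.rep⁻¹ * y) (b.rep⁻¹ * y')] at hk
    simpa only [mul_assoc, mul_inv_cancel_left] using hk
  rho_smul g c := rfl
  rho_le c := hρ c.1
  big c := hbig c.1
  proj c x := by
    obtain ⟨p, hp⟩ := HypM.exists_near d (coneY_nonempty (P := P) (m := m) hd c) x
    refine ⟨p, hp.1, ?_⟩
    have := hd.dproj_le_near (T.coneY_qc hd c) hp (hd.near_self hp.1)
    rw [hd.self] at this
    omega
  stab g c h := by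
    obtain ⟨k, rfl⟩ := Cone.exists_of_smul_eq h
    exact zpow_mem (Spin.rot_mem c) k

/-- The generators of the coned-off graph have finite image in the quotient, since each line is
covered by finitely many segments up to translation by its period. -/
theorem adj_finite [Finite A] (hd : HypM d δ) (T : Periodic d P m e u θ₀) {Hb : Type*} [Group Hb]
    (pr : H →* Hb) (hpr : ∀ a, pr (P a (m a)) = 1) :
    (pr '' {t | adj d (coneY d P m) 1 t}).Finite := by
  set F : A → Set H := fun a => ⋃ t ∈ Finset.Ico (0 : ℤ) (m a), {z | d (P a t) z ≤ 12 * u} with hF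
  have hball : ∀ (x : H) (n : ℕ), {z | d x z ≤ n}.Finite := by
    intro x n
    refine ((hd.fin n).image (fun z => x * z)).subset ?_
    intro z hz
    refine ⟨x⁻¹ * z, ?_, mul_inv_cancel_left x z⟩
    change d 1 _ ≤ n
    rw [← hd.d_eq]
    exact hz
  have hFfin : ∀ a, (F a).Finite := fun a =>
    Set.Finite.biUnion (Finset.finite_toSet _) fun t _ => hball _ _
  have hfund : ∀ a, ∀ z ∈ hull d (P a), ∃ z' ∈ F a, ∃ q : ℤ, z = P a (m a) ^ q * z' := by
    intro a z ⟨t, ht⟩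
    have hm := T.pos a
    have h1 := Int.emod_nonneg t (show (m a : ℤ) ≠ 0 by omega)
    have h2 := Int.emod_lt_of_pos t (show (0 : ℤ) < m a by omega)
    have h3 := Int.emod_add_mul_ediv t (m a)
    have h4 := T.per a (t % m a) (t / m a)
    rw [h3] at h4
    refine ⟨(P a (m a) ^ (t / (m a : ℤ)))⁻¹ * z, ?_, t / m a, by rw [mul_inv_cancel_left]⟩
    refine Set.mem_biUnion (Finset.mem_coe.mpr (Finset.mem_Ico.mpr ⟨h1, h2⟩)) ?_
    change d _ _ ≤ _
    have h5 := hd.inv (P a (m a) ^ (t / (m a : ℤ))) (P a (t % m a))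
      ((P a (m a) ^ (t / (m a : ℤ)))⁻¹ * z)
    rw [mul_inv_cancel_left, ← h4] at h5
    have h6 := T.hi a t
    omega
  have hfin : (pr '' {t | d 1 t ≤ 1} ∪ ⋃ a, Set.image2 (fun x y => pr (x⁻¹ * y)) (F a) (F a)).Finite :=
    ((hball 1 1).image pr).union (Set.finite_iUnion fun a => (hFfin a).image2 _ (hFfin a))
  refine hfin.subset ?_
  rintro _ ⟨t, ht | ⟨c, ⟨z0, hz0, h1⟩, ⟨z, hz, h2⟩⟩, rfl⟩
  · exact Or.inl ⟨t, ht, rfl⟩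
  · right
    obtain ⟨x, hx, q, rfl⟩ := hfund c.1 z0 hz0
    obtain ⟨y, hy, q', rfl⟩ := hfund c.1 z hz
    refine Set.mem_iUnion.mpr ⟨c.1, x, hx, y, hy, ?_⟩
    have h3 : pr t = pr (c.rep * (P c.1 (m c.1) ^ q * x))⁻¹ * pr t := by
      beta_reduce at h1
      rw [h1, inv_one, map_one, one_mul]
    beta_reduce at h2 ⊢
    rw [h3, ← h2]
    simp only [map_mul, map_inv, map_zpow, hpr, one_zpow, one_mul]
    group

end Periodic

/-- The quotient by sufficiently long periodic lines that are sufficiently transverse to each other. -/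
theorem periodic_quotient {H : Type} [Group H] {d : H → H → ℕ} {δ : ℕ} (hd : HypM d δ) (e : ℕ) :
    ∃ K : ℕ, ∀ {A : Type} [Finite A] [Nonempty A] {P : A → ℤ → H} {m : A → ℕ} {u θ₀ θ R : ℕ}
      (_ : Periodic d P m e u θ₀)
      (_ : 3 * (2 * (5 * e + 6 * δ + δ) + 1) + 2 * δ + 1 ≤ u) (_ : 2 * e ≤ u)
      (_ : θ₀ + (3 * (2 * (5 * e + 6 * δ + δ) + 1) + δ) ≤ θ) (_ : 4 ≤ θ)
      (_ : ∀ a, (200 + K) * θ ≤ (m a - 2) * (9 * u))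
      (_ : ∀ a, (m a / 2 + 4) * (12 * u) + 60 * θ ≤ (m a - 2) * (9 * u))
      (_ : ∀ a, 2 * R + 8 * θ + 4 < (m a - 2) * (9 * u))
      {Hb : Type} [Group Hb] (pr : H →* Hb) (_ : Surjective pr)
      (_ : pr.ker = Subgroup.normalClosure (Set.range fun a => P a (m a))),
      HyperbolicGroup Hb ∧ (∀ S : Set H, (∀ x ∈ S, ∀ y ∈ S, d x y ≤ R) → Set.InjOn pr S) ∧
        ∀ Fb : Subgroup Hb, Finite Fb → ∃ Fs : Subgroup H, Set.BijOn pr Fs Fb := by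
  obtain ⟨K, hK⟩ := hyperbolic_quotient hd (5 * e + 6 * δ)
  refine ⟨K, ?_⟩
  intro A _ _ P m u θ₀ θ R T hu he hθ h4 hbig hρ hR Hb _ pr hpr hker
  have hb1 : ∀ a, 200 * θ ≤ (m a - 2) * (9 * u) := fun a => by
    have := hbig a; rw [add_mul] at this; omega
  have hb2 : ∀ a, K * θ ≤ (m a - 2) * (9 * u) := fun a => by
    have := hbig a; rw [add_mul] at this; omega
  have S := T.toSpin hd (by omega) hθ h4 (fun a => by have := hb1 a; omega)
  have F := T.toFine hd (by omega) hθ hb1 hρ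
  have hker' : pr.ker = Spin.rotG (Cone.rot : Cone (fun a => P a (m a)) → H) := by
    rw [hker, Cone.rotG_rot]
  have hone : ∀ a, pr (P a (m a)) = 1 := fun a => by
    have : P a (m a) ∈ pr.ker := by
      rw [hker]; exact Subgroup.subset_normalClosure (Set.mem_range_self a)
    exact this
  refine ⟨hK S (T.coneY_qc hd) (fun c => hb2 c.1) pr hpr hker' (T.adj_finite hd pr hone), ?_, ?_⟩
  · intro s hs
    exact Spin.injOn_of_small hd S pr hker' hs (fun c => hR c.1)
  · intro Fb hFb
    exact Spin.finite_lift hd S F ⟨Classical.arbitrary A, QuotientGroup.mk 1⟩ pr hpr hker' Fb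

/-! ### Construction of the relators -/

theorem exists_unif {I : Type*} [Finite I] {p : I → ℕ → Prop} (hp : ∀ i m n, m ≤ n → p i m → p i n)
    (h : ∀ i, ∃ n, p i n) : ∃ n, ∀ i, p i n := by
  choose f hf using h
  obtain ⟨B, hB⟩ := (Set.finite_range f).bddAbove
  exact ⟨B, fun i => hp i _ _ (hB (Set.mem_range_self i)) (hf i)⟩

namespace HypM

variable {H : Type*} [Group H] {d : H → H → ℕ} {δ : ℕ}

/-- Given finite sets `Λ a` of letters outside `elem (v a)`, any periodic words in these letters that
contain enough killing patterns can be interleaved with large powers of the `v a`, all of comparable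
but clearly distinct lengths, to give periodic lines satisfying small cancellation. -/
theorem exists_periodic (hd : HypM d δ) {A : Type*} [Finite A] {v : A → H} {κ : ℕ}
    (hv : ∀ a, Lox d (v a) κ) {Λ : A → Finset H} (hΛ : ∀ a, ∀ γ ∈ Λ a, γ ∉ elem (v a)) :
    ∃ e : ℕ, ∀ (W u₀ : ℕ) (m : A → ℕ) (_ : ∀ a, 3 ≤ m a) (g : A → ℤ → H) (_ : ∀ a t, g a t ∈ Λ a)
      (_ : ∀ a t, g a (t + m a) = g a t)
      (_ : ∀ (a : A) (κ : ℤ → H) (i : ℤ), (∀ j, i ≤ j → j ≤ i + W → κ j ∈ elem (v a)) →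
        (∀ j, i ≤ j → j < i + W → κ (j + 1) = (g a j)⁻¹ * κ j * g a j) → ∃ j, κ j = 1),
      ∃ u, u₀ ≤ u ∧ ∃ (n : A → ℤ → ℤ) (P : A → ℤ → H), (∀ a, P a 0 = 1) ∧
        (∀ a t, P a (t + 1) = P a t * (v a ^ n a t * g a t)) ∧
        Periodic d P m e u ((W + 6) * (12 * u) + (2 * (2 * ((5 * e + 6 * δ) + δ) + 1) + δ)) := by
  classical
  obtain ⟨c, hc⟩ := exists_unif (I := Σ a, {x // x ∈ Λ a})
    (p := fun i c => ∀ m n : ℤ, d 1 (v i.1 ^ m) + d 1 (v i.1 ^ n) ≤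
      d 1 (v i.1 ^ m * i.2.1 * v i.1 ^ n) + c)
    (fun i m n hmn h p q => (h p q).trans (by omega))
    (fun i => (hv i.1).junction hd (hΛ i.1 _ i.2.2))
  obtain ⟨G₀, hG₀⟩ := exists_unif (I := Σ a, {x // x ∈ Λ a}) (p := fun i c => d 1 i.2.1 ≤ c)
    (fun i m n hmn h => h.trans hmn) (fun i => ⟨_, le_rfl⟩)
  obtain ⟨V, hV⟩ := exists_unif (I := A) (p := fun i c => d 1 (v i) ≤ c)
    (fun i m n hmn h => h.trans hmn) (fun i => ⟨_, le_rfl⟩)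
  set e := c + 5 * G₀ + 2 * δ + κ with he
  obtain ⟨Q, hQ⟩ : ∃ Q, Q = 5 * e + 6 * δ := ⟨_, rfl⟩
  obtain ⟨w, hw⟩ : ∃ w, w = 4 * e + 2 * δ + 2 * (2 * (Q + δ) + 1) := ⟨_, rfl⟩
  obtain ⟨E, hE⟩ : ∃ E, E = 3 * e + w + 2 * δ := ⟨_, rfl⟩
  obtain ⟨J, hJ⟩ := exists_unif (I := (Σ a, {x // x ∈ Λ a}) × A)
    (p := fun i J => ∀ (X : H) (n : ℤ), ∃ j : ℤ, 0 ≤ j ∧ j ≤ J ∧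
      (d X (X * v i.2 ^ n) + (E + 4 * G₀) < d X (v i.1.1 ^ j) + d (v i.1.1 ^ j) (X * v i.2 ^ n) ∨
        d X (X * v i.2 ^ n) + (E + 4 * G₀) < d X (i.1.2.1⁻¹ * v i.1.1 ^ (-j)) +
          d (i.1.2.1⁻¹ * v i.1.1 ^ (-j)) (X * v i.2 ^ n)))
    (fun i m n hmn h X p => by
      obtain ⟨j, h0, h1, h2⟩ := h X p
      exact ⟨j, h0, by omega, h2⟩)
    (fun i => hd.corner (hv i.1.1) (hv i.2) (hΛ _ _ i.1.2.2) _)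
  set R := J * V + G₀ with hR
  obtain ⟨C, hC⟩ : ∃ C, C = R + 9 * e + 3 * w + 6 * δ := ⟨_, rfl⟩
  obtain ⟨L, hL⟩ : ∃ L, L = R + 4 * C + 6 * e + 6 * δ + w + 1 := ⟨_, rfl⟩
  have hM1 : ∀ a, ∃ M, 0 < M ∧ ∃ N : ℕ, ∀ k ∈ {x | d 1 x ≤ C}, ∀ n : ℕ, N ≤ n →
      v a ^ (-(n : ℤ)) * k * v a ^ (n : ℤ) ∈ {x | d 1 x ≤ C + 2 * G₀} → Commute k (v a ^ M) :=
    fun a => by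
      obtain ⟨M, N, h0, h⟩ := exists_comm (v := v a) (hd.fin C) (hd.fin (C + 2 * G₀))
      exact ⟨M, h0, N, h⟩
  choose M hM0 hM using hM1
  obtain ⟨N, hN⟩ := exists_unif (fun i m n hmn h k hk p hp => h k hk p (hmn.trans hp)) hM
  refine ⟨e, fun W u₀ m hm g hg hgm hkill => ?_⟩
  obtain ⟨u, hu, ν, hν, hgap⟩ := hd.exists_exponents (I := Σ a, Fin (m a)) (v := fun i => v i.1)
    (fun i => hv i.1) (M := fun i => M i.1) (fun i => hM0 i.1) (max (N + 1) J) (2 * C + 2 * G₀)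
    (u₀ + e + G₀ + L + c + 4 * G₀ + 2 * δ + 1)
  have hmod : ∀ a (t : ℤ), ∃ s : Fin (m a), (s : ℤ) = t % m a := fun a t => by
    have h1 := Int.emod_nonneg t (show (m a : ℤ) ≠ 0 by have := hm a; omega)
    have h2 := Int.emod_lt_of_pos t (show (0 : ℤ) < m a by have := hm a; omega)
    exact ⟨⟨(t % m a).toNat, by omega⟩, by simp [h1]⟩
  choose ix hix using hmod
  have hixm : ∀ a t, ix a (t + m a) = ix a t := fun a t => by
    apply Fin.ext
    have h1 := hix a (t + m a)
    rw [Int.add_emod_right, ← hix a t] at h1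
    exact_mod_cast h1
  set n : A → ℤ → ℤ := fun a t => (ν ⟨a, ix a t⟩ : ℤ) with hn
  have hνn := fun a t => hν ⟨a, ix a t⟩
  choose P hP0 hP using fun a => exists_seq (fun t => v a ^ n a t * g a t)
  have hgG : ∀ a t, d 1 (g a t) ≤ G₀ := fun a t => hG₀ ⟨a, g a t, hg a t⟩
  have hlo : ∀ a t, d 1 (v a ^ n a t) ≤ d (P a t) (P a (t + 1)) + G₀ := fun a t => by
    have h1 := hd.len_mul (v a ^ n a t * g a t) (g a t)⁻¹
    rw [mul_inv_cancel_right, hd.d_one_inv, ← hd.d_one_mul (P a t) (_ * _), ← hP] at h1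
    have := hgG a t
    omega
  have hhi : ∀ a t, d (P a t) (P a (t + 1)) ≤ d 1 (v a ^ n a t) + G₀ := fun a t => by
    have h1 := hd.len_mul (v a ^ n a t) (g a t)
    rw [← hd.d_one_mul (P a t), ← hP] at h1
    have := hgG a t
    omega
  have hnm : ∀ a t, n a (t + m a) = n a t := fun a t => by simp only [hn, hixm]
  let Sg : H → H → Prop := fun x y => ∃ b X n, d x X ≤ G₀ ∧ d y (X * v b ^ (n : ℤ)) ≤ G₀
  have hs : ∀ x y, Sg x y → Sg y x := by
    rintro x y ⟨b, X, k, h1, h2⟩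
    refine ⟨b, X * v b ^ k, -k, h2, ?_⟩
    rwa [mul_assoc, ← zpow_add, add_neg_cancel, zpow_zero, mul_one]
  have hs' : ∀ h x y, Sg x y → Sg (h * x) (h * y) := by
    rintro h x y ⟨b, X, k, h1, h2⟩
    refine ⟨b, h * X, k, by rwa [hd.inv], by rwa [mul_assoc, hd.inv]⟩
  have hT : ∀ a, Track d Sg (P a) e R E L := by
    intro a
    have T := hd.track_of_seq (hv a) (n := n a) (g := g a) (P := P a) (c := c) (G₀ := G₀) (E := E)
      (J := J) (L := L) hs' (hP a) (fun t => hc ⟨a, g a t, hg a t⟩) (hgG a)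
      (fun t => by have := (hνn a t).2.2.1; change _ ≤ d 1 (v a ^ n a t) at this; omega)
      (fun t => by
        have := (hνn a t).1
        simp only [hn]
        omega)
      (fun t => ⟨a, P a t, n a t, by rw [hd.self]; omega, by
        rw [hP, hd.symm, ← mul_assoc, hd.d_one_mul]; exact hgG a t⟩)
      (by
        rintro t x y ⟨b, X, k, h1, h2⟩
        obtain ⟨j, h3, h4, h5⟩ := hJ (⟨a, g a (t - 1), hg a (t - 1)⟩, b) X k
        refine ⟨j, h3, h4, ?_⟩
        have key : ∀ z, d X (X * v b ^ k) + (E + 4 * G₀) < d X z + d z (X * v b ^ k) →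
            d x y + E < d x z + d z y := by
          intro z hz
          have := hd.tri x X y
          have := hd.tri X (X * v b ^ k) y
          have := hd.symm y (X * v b ^ k)
          have := hd.symm x X
          have := hd.tri X x z
          have := hd.tri z y (X * v b ^ k)
          omega
        exact h5.imp (key _) (key _))
    refine ⟨T.line, T.long, T.seg, fun j x y hxy => ?_⟩
    obtain ⟨z, h1, h2⟩ := T.corner j x y hxy
    refine ⟨z, h1.trans ?_, h2⟩
    rw [hR]
    have := Nat.mul_le_mul_left J (hV a)
    omega
  refine ⟨u, by omega, n, P, hP0, hP, ⟨fun a => (hT a).line, fun a t k =>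
    seq_period_zpow (hP0 a) (hP a) (fun t => by rw [hnm, hgm]) t k, fun a t => ?_, fun a t => ?_,
    fun a => by have := hm a; omega, ?_⟩⟩
  · have h1 := (hνn a t).2.2.1
    have := hlo a t
    change _ ≤ d 1 (v a ^ n a t) at h1
    omega
  · have h1 := (hνn a t).2.2.2
    have := hhi a t
    change d 1 (v a ^ n a t) ≤ _ at h1
    omega
  intro a b h x y hx hy hxy
  refine rigid hd (m := fun a => (m a : ℤ)) hs hs' hT hP0 hP hnm hgm
    (fun a => by have := hm a; omega) (fun a t => ?_) hgG hw hQ.symm hE.ge hC.ge (by omega)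
    (fun a b t t' h1 h2 => ?_) (fun a t k h1 h2 => ?_) hkill (U := 12 * u) (fun a t => ?_) hx hy
    (by rw [hQ]; exact hxy)
  · have := (hνn a t).1
    simp only [hn]
    omega
  · have e1 := hlo a t
    have e2 := hhi a t
    have e3 := hlo b t'
    have e4 := hhi b t'
    have hab : (⟨a, ix a t⟩ : Σ a, Fin (m a)) = ⟨b, ix b t'⟩ := by
      by_contra hne
      have := hgap _ _ hne
      change d 1 (v a ^ n a t) + _ < d 1 (v b ^ n b t') ∨
        d 1 (v b ^ n b t') + _ < d 1 (v a ^ n a t) at this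
      omega
    obtain ⟨rfl, h3⟩ := Sigma.mk.inj_iff.mp hab
    refine ⟨rfl, ?_⟩
    have h4 := congrArg (fun s : Fin (m a) => ((s : ℕ) : ℤ)) (eq_of_heq h3)
    beta_reduce at h4
    rw [hix, hix] at h4
    exact Int.ModEq.dvd h4
  · have h3 := hN a k h1 (ν ⟨a, ix a t⟩) (by have := (hνn a t).1; omega) h2
    obtain ⟨q, hq⟩ := (hνn a t).2.1
    have : v a ^ n a t = (v a ^ M a) ^ q := by
      simp only [hn]
      rw [hq, zpow_natCast, pow_mul]
    rw [this]
    exact h3.pow_right q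
  · have h1 := (hνn a t).2.2.2
    have := hhi a t
    change d 1 (v a ^ n a t) ≤ _ at h1
    omega

end HypM

section Word

variable {H : Type*} [Group H]

/-- The periodic word with period `m` that repeats the list `l` followed by `g₀`, except that the last
letter of the period is `s`. -/
noncomputable def letter (l : List H) (g₀ s : H) (m : ℕ) (t : ℤ) : H :=
  if t % m = m - 1 then s else l.getD (t % ((l.length + 1 : ℕ) : ℤ)).toNat g₀

theorem letter_period {l : List H} {g₀ s : H} {m : ℕ} (hm : l.length + 1 ∣ m) (t : ℤ) :
    letter l g₀ s m (t + m) = letter l g₀ s m t := by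
  obtain ⟨p, hp⟩ := hm
  unfold letter
  rw [Int.add_emod_right]
  congr 3
  rw [hp, Nat.cast_mul, Int.add_mul_emod_self_left]

theorem letter_mem (l : List H) (g₀ s : H) (m : ℕ) (t : ℤ) :
    letter l g₀ s m t = s ∨ letter l g₀ s m t = g₀ ∨ letter l g₀ s m t ∈ l := by
  unfold letter
  split_ifs
  · exact Or.inl rfl
  · right
    rcases lt_or_ge (t % ((l.length + 1 : ℕ) : ℤ)).toNat l.length with h | h
    · right
      rw [List.getD_eq_getElem _ _ h]
      exact List.getElem_mem h
    · left
      exact List.getD_eq_default _ _ h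

theorem letter_mem' {l : List H} {g₀ s : H} {m : ℕ} {t : ℤ} (h0 : 0 ≤ t) (h1 : t < m - 1) :
    letter l g₀ s m t = g₀ ∨ letter l g₀ s m t ∈ l := by
  unfold letter
  rw [Int.emod_eq_of_lt h0 (by omega), if_neg (by omega)]
  rcases lt_or_ge (t % ((l.length + 1 : ℕ) : ℤ)).toNat l.length with h | h
  · right
    rw [List.getD_eq_getElem _ _ h]
    exact List.getElem_mem h
  · left
    exact List.getD_eq_default _ _ h

theorem letter_last (l : List H) (g₀ s : H) {m : ℕ} (hm : 0 < m) : letter l g₀ s m (m - 1) = s := by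
  unfold letter
  rw [Int.emod_eq_of_lt (by omega) (by omega), if_pos rfl]

theorem letter_block {l : List H} {g₀ s : H} {m : ℕ} (hm : l.length + 1 ∣ m) (hm0 : 0 < m) (q : ℤ)
    {n : ℕ} (hn : n < l.length) :
    letter l g₀ s m (((l.length + 1 : ℕ) : ℤ) * q + n) = l[n] := by
  obtain ⟨p, rfl⟩ := hm
  have h1 : (((l.length + 1 : ℕ) : ℤ) * q + n) % ((l.length + 1 : ℕ) : ℤ) = n := by
    rw [Int.mul_add_emod_self_left]
    exact Int.emod_eq_of_lt (by omega) (by omega)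
  unfold letter
  rw [if_neg, h1, Int.toNat_natCast, List.getD_eq_getElem _ _ hn]
  intro h2
  have h3 := congrArg (fun x => x % ((l.length + 1 : ℕ) : ℤ)) h2
  beta_reduce at h3
  rw [Int.emod_emod_of_dvd _ (by push_cast; exact dvd_mul_right _ _), h1] at h3
  have h4 : (((l.length + 1) * p : ℕ) : ℤ) - 1 = l.length + ((l.length + 1 : ℕ) : ℤ) * (p - 1) := by
    push_cast; ring
  rw [h4, Int.add_mul_emod_self_left, Int.emod_eq_of_lt (by omega) (by omega)] at h3
  omega

/-- Any window of the periodic word of length two blocks contains the whole killing pattern. -/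
theorem letter_kill {l : List H} {g₀ s : H} {m : ℕ} (hm : l.length + 1 ∣ m) (hm0 : 0 < m)
    {B : Set H} (hl : ∀ k : H, (∀ n, (l.take n).prod⁻¹ * k * (l.take n).prod ∈ B) → k = 1)
    {W : ℕ} (hW : 2 * (l.length + 1) ≤ W) {κ : ℤ → H} {i : ℤ}
    (hB : ∀ j, i ≤ j → j ≤ i + W → κ j ∈ B)
    (hκ : ∀ j, i ≤ j → j < i + W → κ (j + 1) = (letter l g₀ s m j)⁻¹ * κ j * letter l g₀ s m j) :
    ∃ j, κ j = 1 := by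
  obtain ⟨q, hq1, hq2⟩ : ∃ q : ℤ, i ≤ ((l.length + 1 : ℕ) : ℤ) * q ∧
      ((l.length + 1 : ℕ) : ℤ) * q ≤ i + l.length := by
    refine ⟨(i + l.length) / ((l.length + 1 : ℕ) : ℤ), ?_, ?_⟩
    · have h1 := Int.mul_ediv_add_emod (i + l.length) ((l.length + 1 : ℕ) : ℤ)
      have h2 := Int.emod_lt_of_pos (i + l.length) (show (0 : ℤ) < ((l.length + 1 : ℕ) : ℤ) by omega)
      omega
    · exact Int.mul_ediv_self_le (by omega)
  set t := ((l.length + 1 : ℕ) : ℤ) * q with ht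
  refine ⟨t, hl _ ?_⟩
  have key : ∀ n : ℕ, n ≤ l.length → κ (t + n) = (l.take n).prod⁻¹ * κ t * (l.take n).prod := by
    intro n
    induction n with
    | zero => intro _; simp
    | succ n ih =>
      intro hn
      have e1 := hκ (t + n) (by omega) (by omega)
      rw [ht, letter_block hm hm0 q (by omega), ← ht, ih (by omega)] at e1
      rw [Nat.cast_add, Nat.cast_one, ← add_assoc, e1, List.prod_take_succ _ _ (by omega)]
      group
  intro n
  rcases le_total n l.length with h | h
  · rw [← key n h]
    exact hB _ (by omega) (by omega)
  · rw [List.take_of_length_le h, ← List.take_length (l := l), ← key _ le_rfl]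
    exact hB _ (by omega) (by omega)

end Word

/-- Relators of the form `w * sp a`, with `w` a long word in prescribed elements, whose normal closure
has all the required properties at the scale `R`. -/
theorem exists_relators {H : Type} [Group H] {d : H → H → ℕ} {δ : ℕ} (hd : HypM d δ) {A : Type}
    [Finite A] [Nonempty A] {v g₀ sp : A → H} {l : A → List H} (hv : ∀ a, ∃ κ, HypM.Lox d (v a) κ)
    (hl : ∀ a, ∀ γ ∈ l a, γ ∉ elem (v a)) (hg₀ : ∀ a, g₀ a ∉ elem (v a))
    (hsp : ∀ a, sp a ∉ elem (v a))
    (hkill : ∀ a k, (∀ n, ((l a).take n).prod⁻¹ * k * ((l a).take n).prod ∈ elem (v a)) → k = 1)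
    (R : ℕ) :
    ∃ r : A → H, (∀ a (G : Subgroup H), v a ∈ G → g₀ a ∈ G → (∀ γ ∈ l a, γ ∈ G) →
        ∃ w ∈ G, r a = w * sp a) ∧
      ∀ {Hb : Type} [Group Hb] (pr : H →* Hb) (_ : Surjective pr)
        (_ : pr.ker = Subgroup.normalClosure (Set.range r)),
        HyperbolicGroup Hb ∧ (∀ S : Set H, (∀ x ∈ S, ∀ y ∈ S, d x y ≤ R) → Set.InjOn pr S) ∧
          ∀ Fb : Subgroup Hb, Finite Fb → ∃ Fs : Subgroup H, Set.BijOn pr Fs Fb := by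
  classical
  obtain ⟨κ, hκ⟩ := exists_unif (p := fun a κ => HypM.Lox d (v a) κ)
    (fun i m n hmn h => ⟨h.line.mono hmn, fun k => (h.lin k).trans (by omega)⟩) hv
  obtain ⟨e, he⟩ := hd.exists_periodic hκ (Λ := fun a => insert (sp a) (insert (g₀ a) (l a).toFinset))
    (fun a γ hγ => by
      rw [Finset.mem_insert, Finset.mem_insert, List.mem_toFinset] at hγ
      rcases hγ with rfl | rfl | hγ
      · exact hsp a
      · exact hg₀ a
      · exact hl a γ hγ)
  obtain ⟨K, hK⟩ := periodic_quotient hd e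
  obtain ⟨W, hW⟩ := exists_unif (p := fun a W => 2 * ((l a).length + 1) ≤ W)
    (fun i m n hmn h => h.trans hmn) (fun a => ⟨_, le_rfl⟩)
  obtain ⟨m, hdvd, hmlo⟩ : ∃ m : A → ℕ, (∀ a, (l a).length + 1 ∣ m a) ∧
      ∀ a, 1000 * (K * (W + 20)) + 1000 * (W + 20) ≤ m a := by
    refine ⟨fun a => ((l a).length + 1) * (1000 * (K * (W + 20)) + 1000 * (W + 20)),
      fun a => dvd_mul_right _ _, fun a => Nat.le_mul_of_pos_left _ (Nat.succ_pos _)⟩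
  obtain ⟨u, hu, n, P, hP0, hP, T⟩ := he W
    (3 * (2 * (5 * e + 6 * δ + δ) + 1) + 2 * δ + 1 + 2 * e + R + 4) m
    (fun a => by have := hmlo a; omega) (fun a => letter (l a) (g₀ a) (sp a) (m a))
    (fun a t => by
      rw [Finset.mem_insert, Finset.mem_insert, List.mem_toFinset]
      exact letter_mem _ _ _ _ _)
    (fun a t => letter_period (hdvd a) t)
    (fun a κ i h1 h2 => letter_kill (hdvd a) (by have := hmlo a; omega) (B := elem (v a)) (hkill a)
      (hW a) h1 h2)
  refine ⟨fun a => P a (m a), fun a G hvG hgG hlG => ?_, fun {Hb} _ pr hpr hker => ?_⟩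
  · have h1 : ∀ k : ℕ, (k : ℤ) ≤ m a - 1 → P a k ∈ G := by
      intro k
      induction k with
      | zero => intro _; rw [Nat.cast_zero, hP0]; exact G.one_mem
      | succ k ih =>
        intro hk
        rw [Nat.cast_add, Nat.cast_one, hP]
        refine G.mul_mem (ih (by omega)) (G.mul_mem (G.zpow_mem hvG _) ?_)
        rcases letter_mem' (l := l a) (g₀ := g₀ a) (s := sp a) (m := m a) (t := k) (by omega)
          (by omega) with h | h
        · rw [h]; exact hgG
        · exact hlG _ h
    have h2 := hmlo a
    have h3 := hP a (m a - 1)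
    rw [sub_add_cancel, letter_last _ _ _ (by omega), ← mul_assoc] at h3
    refine ⟨_, G.mul_mem ?_ (G.zpow_mem hvG _), h3⟩
    have := h1 (m a - 1) (by omega)
    rwa [Nat.cast_sub (by omega), Nat.cast_one] at this
  · have hmul : ∀ a (p q : ℕ), p ≤ q * (m a - 2) → p * u ≤ q * ((m a - 2) * u) := fun a p q h => by
      rw [← mul_assoc]; exact Nat.mul_le_mul_right u h
    refine hK T (θ := (W + 20) * (12 * u)) (R := R) (by omega) (by omega) ?_ (by nlinarith)
      (fun a => ?_) (fun a => ?_) (fun a => ?_) pr hpr hker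
    · rw [add_mul W, add_mul W]; omega
    · have h1 := hmlo a
      have h2 := hmul a (12 * ((200 + K) * (W + 20))) 9 (by rw [add_mul 200]; omega)
      linarith
    · have h1 : 1000 * (W + 20) ≤ m a := (Nat.le_add_left _ _).trans (hmlo a)
      have h2 := hmul a (12 * (m a / 2 + 4) + 720 * (W + 20)) 9 (by
        have h3 := Nat.div_mul_le_self (m a) 2
        generalize m a / 2 = q at h3 ⊢
        generalize m a = p at h1 h3 ⊢
        rw [Nat.mul_sub]
        exact Nat.le_sub_of_add_le (by linarith))
      linarith
    · have h1 : 1000 * (W + 20) ≤ m a := (Nat.le_add_left _ _).trans (hmlo a)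
      have h2 := hmul a (96 * (W + 20) + 3) 9 (by omega)
      have h3 : (96 * (W + 20) + 3) * u = 8 * ((W + 20) * (12 * u)) + 3 * u := by ring
      have h4 : 9 * ((m a - 2) * u) = (m a - 2) * (9 * u) := by ring
      omega

/-! ### The quotient -/

/-- If all finite subgroups lift along `pr` and `H` has no finite subgroup of order larger than `M`, the
image of `G` is not virtually cyclic, provided that it still contains a commutator of squares whose
`M!`-th power is nontrivial. -/
theorem not_virtuallyCyclic_map {H Hb : Type*} [Group H] [Group Hb] {M : ℕ}
    (hM : ∀ F : Subgroup H, Finite F → Nat.card F ≤ M) (pr : H →* Hb)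
    (hlift : ∀ Fb : Subgroup Hb, Finite Fb → ∃ Fs : Subgroup H, Set.BijOn pr Fs Fb)
    {G : Subgroup H} {x y : H} (hx : x ∈ G) (hy : y ∈ G)
    (hxy : pr ((x ^ 2 * y ^ 2 * (x ^ 2)⁻¹ * (y ^ 2)⁻¹) ^ M.factorial) ≠ 1) :
    ¬ VirtuallyCyclic (G.map pr) := by
  intro hvc
  have h1 : ∀ F : Subgroup (G.map pr), Finite F → Nat.card F ≤ M := by
    intro F hF
    set Fb := F.map (G.map pr).subtype with hFb
    have e1 : F ≃* Fb := F.equivMapOfInjective _ (Subgroup.subtype_injective _)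
    have : Finite Fb := Finite.of_equiv _ e1.toEquiv
    obtain ⟨Fs, hFs⟩ := hlift Fb this
    have e2 : Fs ≃ Fb := hFs.equiv
    have : Finite Fs := Finite.of_equiv _ e2.symm
    rw [Nat.card_congr e1.toEquiv, ← Nat.card_congr e2]
    exact hM Fs this
  have h2 := congrArg Subtype.val
    (hvc.comm_pow h1 ⟨pr x, Subgroup.mem_map_of_mem pr hx⟩ ⟨pr y, Subgroup.mem_map_of_mem pr hy⟩)
  apply hxy
  simpa using h2

end Preparation

/-- Theorem 5.3, after Ol'shanskii: small cancellation quotients of a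
hyperbolic group identifying finitely many non-elementary subgroups with trivial
`E_H(G_i)`, with control on the kernel, injectivity on a finite set, and lifting of
finite subgroups. -/
theorem small_cancellation_quotient (H : Type) [Group H] (hH : HyperbolicGroup H)
    (k : ℕ) (Gs : Fin k → Subgroup H)
    (hfg : ∀ i, (Gs i).FG)
    (hne : ∀ i, ¬ VirtuallyCyclic (Gs i))
    (hE : ∀ i, EHset (Gs i) = {1})
    (N : Subgroup H) (hN : N.Normal) (hGN : ∀ i, Gs i ≤ N)
    (P : Set H) (hP : P.Finite) :
    ∃ (Hb : Type) (_ : Group Hb) (pr : H →* Hb),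
      Function.Surjective pr ∧
      pr.ker ≤ N ∧
      HyperbolicGroup Hb ∧
      Set.InjOn pr P ∧
      (∀ i j, (Gs i).map pr = (Gs j).map pr) ∧
      (∀ i, ¬ VirtuallyCyclic ((Gs i).map pr)) ∧
      (∀ Fb : Subgroup Hb, Finite Fb →
        ∃ Fs : Subgroup H, Set.BijOn pr Fs Fb) := by
  classical
  rcases isEmpty_or_nonempty (Fin k) with hk | hk
  · exact ⟨H, inferInstance, MonoidHom.id H, surjective_id, by
      rw [MonoidHom.ker_id]; exact bot_le, hH, injective_id.injOn, fun i => isEmptyElim i,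
      fun i => isEmptyElim i, fun Fb _ => ⟨Fb, Set.bijOn_id _⟩⟩
  obtain ⟨d, δ, hd⟩ := exists_hypM hH
  obtain ⟨M, hM⟩ := hd.card_le
  have hinf : ∀ i, ((Gs i : Subgroup H) : Set H).Infinite := by
    intro i hfin
    have : Finite (Gs i) := hfin
    exact hne i ⟨⊥, inferInstance, inferInstance⟩
  choose v hvG hv using fun i => hd.exists_lox (Gs i) (hinf i)
  choose g hgG hg using fun i => (hv i).choose_spec.exists_not_mem_elem hd (hvG i) (hne i)
  choose l hl hkill using fun i =>
    hd.exists_pattern (hv i).choose_spec (hvG i) (hgG i) (hg i) (hE i)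
  choose x hx y hy hxy using fun i =>
    hd.exists_commutator (hv i).choose_spec (hvG i) (hgG i) (hg i)
  choose S hS using hfg
  have hf : ∀ j s, ∃ f ∈ Gs j, f * s ∉ elem (v j) := by
    intro j s
    by_cases hs : s ∈ elem (v j)
    · exact ⟨g j, hgG j, fun h => hg j (((elem (v j)).mul_mem_cancel_right hs).mp h)⟩
    · exact ⟨1, (Gs j).one_mem, by rwa [one_mul]⟩
  choose f hfG hf using hf
  -- everything on which the quotient map has to be injective
  set P' := P ∪ ({1} ∪ Set.range fun i =>
    (x i ^ 2 * y i ^ 2 * (x i ^ 2)⁻¹ * (y i ^ 2)⁻¹) ^ M.factorial) with hP'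
  have hP'f : P'.Finite := hP.union ((Set.finite_singleton 1).union (Set.finite_range _))
  obtain ⟨R, hR⟩ := ((hP'f.prod hP'f).image fun p => d p.1 p.2).bddAbove
  -- one relator for each pair `(i, j)` and each generator `s` of `G_i`, expressing `s` in `G_j`
  let A : Type := Σ p : Fin k × Fin k, {s // s ∈ insert 1 (S p.1)}
  have : Nonempty A := ⟨⟨(hk.some, hk.some), 1, Finset.mem_insert_self _ _⟩⟩
  obtain ⟨r, hr, hquot⟩ := exists_relators hd (A := A) (v := fun a => v a.1.2)
    (g₀ := fun a => g a.1.2) (sp := fun a => f a.1.2 a.2.1 * a.2.1) (l := fun a => l a.1.2)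
    (fun a => hv a.1.2) (fun a γ hγ => (hl a.1.2 γ hγ).2) (fun a => hg a.1.2)
    (fun a => hf a.1.2 a.2.1) (fun a => hkill a.1.2) R
  have hr' : ∀ a : A, ∃ w ∈ Gs a.1.2, r a = w * a.2.1 := fun a => by
    obtain ⟨w, hw, h⟩ := hr a (Gs a.1.2) (hvG _) (hgG _) (fun γ hγ => (hl a.1.2 γ hγ).1)
    exact ⟨w * f a.1.2 a.2.1, (Gs a.1.2).mul_mem hw (hfG _ _), by rw [h, mul_assoc]⟩
  have hSG : ∀ i s, s ∈ insert 1 (S i) → s ∈ Gs i := fun i s hs => by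
    rcases Finset.mem_insert.mp hs with rfl | hs
    · exact (Gs i).one_mem
    · rw [← hS i]; exact Subgroup.subset_closure hs
  set K := Subgroup.normalClosure (Set.range r) with hK
  obtain ⟨h1, h2, h3⟩ := hquot (QuotientGroup.mk' K) (QuotientGroup.mk'_surjective K)
    (QuotientGroup.ker_mk' K)
  have hinj : Set.InjOn (QuotientGroup.mk' K) P' :=
    h2 P' fun a ha b hb => hR (Set.mem_image_of_mem (fun p : H × H => d p.1 p.2) (Set.mk_mem_prod ha hb))
  have hle : ∀ i j, (Gs i).map (QuotientGroup.mk' K) ≤ (Gs j).map (QuotientGroup.mk' K) := by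
    intro i j
    rw [← hS i, MonoidHom.map_closure, Subgroup.closure_le]
    rintro _ ⟨s, hs, rfl⟩
    obtain ⟨w, hw, h⟩ := hr' ⟨(i, j), s, Finset.mem_insert_of_mem hs⟩
    have h5 : QuotientGroup.mk' K (w * s) = 1 := by
      rw [← h, ← MonoidHom.mem_ker, QuotientGroup.ker_mk']
      exact Subgroup.subset_normalClosure (Set.mem_range_self _)
    refine ⟨w⁻¹, (Gs j).inv_mem hw, ?_⟩
    rw [map_inv]
    rw [map_mul] at h5
    exact inv_eq_of_mul_eq_one_right h5
  refine ⟨H ⧸ K, inferInstance, QuotientGroup.mk' K, QuotientGroup.mk'_surjective K, ?_, h1,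
    hinj.mono Set.subset_union_left, fun i j => le_antisymm (hle i j) (hle j i), fun i => ?_, h3⟩
  · rw [QuotientGroup.ker_mk']
    refine Subgroup.normalClosure_le_normal ?_
    rintro _ ⟨a, rfl⟩
    obtain ⟨w, hw, h⟩ := hr' a
    rw [h]
    exact N.mul_mem (hGN _ hw) (hGN _ (hSG _ _ a.2.2))
  · refine not_virtuallyCyclic_map hM _ h3 (hx i) (hy i) fun h => hxy i _ (Nat.factorial_ne_zero M) ?_
    exact hinj (Or.inr (Or.inr (Set.mem_range_self i))) (Or.inr (Or.inl rfl)) (by rw [h, map_one])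

end LacHyp
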